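/- Let G be a group and π a set of primes. If A is a ℤG-module belonging to the class 𝔠(G,π), then for every n ≥ 0 the integral homology group H_n(A) of the underlying abelian group of A, endowed with the ℤG-module structure induced by functoriality of group homology from the G-action on A, belongs to 𝔠(G,π). -/

import Mathlib

/-!
Statement 16: Lemma 3.6 of the paper.  The integral homology `H_n(A)` of the
underlying abelian group of a `ℤG`-module `A` is defined functorially as the
homology of the simplicial classifying space: the alternating face map complex
of the levelwise-free `ℤ`-module on the nerve of the one-object groupoid, so
that the `G`-action on `A` induces a `ℤG`-module structure on `H_n(A)`.
-/

open CategoryTheory AlgebraicTopology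

noncomputable section




/-- The rational circle `ℚ/ℤ`. -/
abbrev RatCircle : Type := ℚ ⧸ AddSubgroup.zmultiples (1 : ℚ)

/-- The quasicyclic (Prüfer) `p`-group, realized as the `p`-primary part of `ℚ/ℤ`. -/
def pruferSubgroup (p : ℕ) : AddSubgroup RatCircle where
  carrier := {x | ∃ n : ℕ, (p ^ n : ℕ) • x = 0}
  zero_mem' := ⟨0, smul_zero _⟩
  add_mem' := by
    rintro a b ⟨m, hm⟩ ⟨n, hn⟩
    refine ⟨m + n, ?_⟩
    have ha : (p ^ m * p ^ n) • a = 0 := by rw [mul_comm, mul_smul, hm, smul_zero]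
    have hb : (p ^ m * p ^ n) • b = 0 := by rw [mul_smul, hn, smul_zero]
    rw [smul_add, pow_add, ha, hb, add_zero]
  neg_mem' := by
    rintro a ⟨m, hm⟩
    exact ⟨m, by rw [smul_neg, hm, neg_zero]⟩

/-- A group has a quasicyclic `p`-section if some quotient of a subgroup is
isomorphic to the Prüfer `p`-group. -/
def HasQuasicyclicSection (G : Type*) [Group G] (p : ℕ) : Prop :=
  ∃ (H : Subgroup G) (K : Subgroup H) (_ : K.Normal),
    Nonempty ((H ⧸ K) ≃* Multiplicative (pruferSubgroup p))

/-- The spectrum of a group: the set of primes `p` such that the group has a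
section isomorphic to the quasicyclic `p`-group. -/
def groupSpectrum (G : Type*) [Group G] : Set ℕ :=
  {p | p.Prime ∧ HasQuasicyclicSection G p}

/-- The spectrum of an (additive) abelian group, via `Multiplicative`. -/
abbrev addSpectrum (A : Type*) [AddGroup A] : Set ℕ :=
  groupSpectrum (Multiplicative A)

/-- An abelian group has finite rank if its torsion-free rank and all of its
`p`-ranks are finite. -/
def FiniteRankAbelian (A : Type*) [AddCommGroup A] : Prop :=
  (∃ n : ℕ, ∀ k : ℕ, (∃ f : (Fin k →₀ ℤ) →+ A, Function.Injective f) → k ≤ n) ∧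
  ∀ p : ℕ, p.Prime → {a : A | (p : ℕ) • a = 0}.Finite

/-- A group has finite rank (in the sense appropriate for abelian groups:
finite torsion-free rank and finite `p`-ranks). -/
def FiniteRankGroup (G : Type*) [Group G] : Prop :=
  (∃ n : ℕ, ∀ k : ℕ,
    (∃ f : Multiplicative (Fin k →₀ ℤ) →* G, Function.Injective f) → k ≤ n) ∧
  ∀ p : ℕ, p.Prime → {g : G | g ^ p = 1}.Finite

/-- A solvable group of finite rank: a solvable group all of whose abelian
sections have finite rank. -/
def SolvableOfFiniteRank (G : Type*) [Group G] : Prop :=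
  IsSolvable G ∧
    ∀ (H : Subgroup G) (K : Subgroup H) (_ : K.Normal),
      (∀ x y : H ⧸ K, x * y = y * x) → FiniteRankGroup (H ⧸ K)

/-- A group is virtually abelian. -/
def VirtuallyAbelian (G : Type*) [Group G] : Prop :=
  ∃ H : Subgroup G, H.index ≠ 0 ∧ ∀ x y : H, x * y = y * x

/-- A `ℤG`-module (given as an object of `Rep ℤ G`) whose underlying abelian group
is torsion-free, of finite rank, and `π`-spectral. -/
def NiceRep {G : Type} [Group G] (π : Set ℕ) (M : Rep.{0} ℤ G) : Prop :=
  (∀ m : M, m ≠ 0 → ¬IsOfFinAddOrder m) ∧ FiniteRankAbelian M ∧ addSpectrum M ⊆ π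

/-- The class `𝒰` of solvable groups of finite rank. -/
def MemClassU (G : Type) [Group G] : Prop :=
  SolvableOfFiniteRank G ∧
  ∃ (N : Subgroup G) (_ : N.Normal),
    Group.IsNilpotent N ∧
    Group.FG (G ⧸ N) ∧ VirtuallyAbelian (G ⧸ N) ∧
    ∃ (r : ℕ) (T : Fin (r + 1) → Subgroup G),
      Monotone T ∧ T 0 = ⊥ ∧
      ((T (Fin.last r) : Set G) = {g : G | g ∈ N ∧ IsOfFinOrder g}) ∧
      (∀ (i : Fin (r + 1)) (g t : G), t ∈ T i → g * t * g⁻¹ ∈ T i) ∧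
      (∀ (i : Fin r) (n t : G), n ∈ N → t ∈ T i.succ →
        n * t * n⁻¹ * t⁻¹ ∈ T i.castSucc) ∧
      (∀ i : Fin r, (T i.castSucc).relIndex (T i.succ) = 0 →
        ∃ M : Rep ℤ (G ⧸ N), NiceRep (groupSpectrum G) M ∧
          ∃ φ : M → G,
            (∀ m : M, φ m ∈ T i.succ) ∧
            (∀ m m' : M, (φ (m + m'))⁻¹ * (φ m * φ m') ∈ T i.castSucc) ∧
            (∀ t : G, t ∈ T i.succ → ∃ m : M, (φ m)⁻¹ * t ∈ T i.castSucc) ∧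
            (∀ (g : G) (m : M),
              (φ (M.ρ (QuotientGroup.mk g) m))⁻¹ * (g * φ m * g⁻¹) ∈ T i.castSucc))

/-- The class `𝔠(G, π)`: the smallest class of `ℤG`-modules containing every
finite `ℤG`-module and every `ℤG`-module whose underlying abelian group is
torsion-free of finite rank and `π`-spectral, and closed under forming
`ℤG`-module quotients and extensions. -/
inductive MemC (G : Type) [Group G] (π : Set ℕ) : Rep.{0} ℤ G → Prop
  | of_finite (A : Rep ℤ G) (h : Finite (A : Type)) : MemC G π A
  | of_nice (A : Rep ℤ G) (h : NiceRep π A) : MemC G π A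
  | quot (A B : Rep ℤ G) (f : A ⟶ B) (hf : Function.Surjective f.hom)
      (hA : MemC G π A) : MemC G π B
  | ext (A B C : Rep ℤ G) (f : A ⟶ B) (g : B ⟶ C)
      (hinj : Function.Injective f.hom) (hsurj : Function.Surjective g.hom)
      (hexact : ∀ b : (B : Type), g.hom b = 0 ↔ ∃ a : (A : Type), f.hom a = b)
      (hA : MemC G π A) (hC : MemC G π C) : MemC G π B


def groupHomologyFunctor (n : ℕ) : MonCat ⥤ ModuleCat ℤ :=
  MonCat.toCat ⋙ nerveFunctor ⋙
    (SimplicialObject.whiskering _ _).obj (ModuleCat.free ℤ) ⋙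
    alternatingFaceMapComplex (ModuleCat ℤ) ⋙
    HomologicalComplex.homologyFunctor (ModuleCat ℤ) (ComplexShape.down ℕ) n

/-- A `ModuleCat ℤ`-endomorphism as a `ℤ`-linear endomorphism of the carrier. -/
def endOfHom {M : ModuleCat ℤ} (f : M ⟶ M) : Module.End ℤ (M : Type) :=
  { AddMonoidHom.mk' (fun x => f x) (fun a b => by exact map_add f.hom a b) with
    map_smul' := fun c x => f.hom.map_smul c x }

variable {G : Type} [Group G]

/-- The action of `g` on the underlying abelian group of a representation, as an
endomorphism of the corresponding multiplicative group. -/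
def multHom (A : Rep ℤ G) (g : G) :
    Multiplicative (A : Type) →* Multiplicative (A : Type) :=
  AddMonoidHom.toMultiplicative
    (AddMonoidHom.mk' (fun a => A.ρ g a) (fun a b => map_add (A.ρ g) a b))

/-- The `ℤG`-module structure on `H_n` of the underlying abelian group of a
representation, induced by functoriality of group homology. -/
def homologyDiagRep (A : Rep ℤ G) (n : ℕ) :
    Representation ℤ G
      ((groupHomologyFunctor n).obj (MonCat.of (Multiplicative (A : Type)))) where
  toFun g := endOfHom ((groupHomologyFunctor n).map (MonCat.ofHom (multHom A g)))
  map_one' := by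
    have h1 : MonCat.ofHom (multHom A 1) = 𝟙 (MonCat.of (Multiplicative (A : Type))) := by
      apply MonCat.hom_ext
      apply MonoidHom.ext
      intro a
      show Multiplicative.ofAdd (A.ρ 1 (Multiplicative.toAdd a)) = a
      simp
    rw [h1, CategoryTheory.Functor.map_id]
    apply LinearMap.ext
    intro x
    rfl
  map_mul' g h := by
    have h2 : MonCat.ofHom (multHom A (g * h)) =
        MonCat.ofHom (multHom A h) ≫ MonCat.ofHom (multHom A g) := by
      apply MonCat.hom_ext
      apply MonoidHom.ext
      intro a
      show Multiplicative.ofAdd (A.ρ (g * h) (Multiplicative.toAdd a)) = _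
      simp [map_mul]
      rfl
    rw [h2, CategoryTheory.Functor.map_comp]
    apply LinearMap.ext
    intro x
    rfl


namespace HB
section

/-- no torsion, elementary form -/
def TF (M : Type*) [AddCommGroup M] : Prop := ∀ (k : ℕ) (m : M), k ≠ 0 → k • m = 0 → m = 0

def FullFG (M : Type*) [AddCommGroup M] : Prop :=
  ∃ F : AddSubgroup M, F.FG ∧ ∀ m : M, ∃ k : ℕ, k ≠ 0 ∧ k • m ∈ F

def QLoc (p : ℕ) (M : Type*) [AddCommGroup M] : Prop :=
  ∃ F : AddSubgroup M, F.FG ∧ ∀ m : M, ∃ k : ℕ, ¬ p ∣ k ∧ k • m ∈ F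

def NiceA (π : Set ℕ) (M : Type*) [AddCommGroup M] : Prop :=
  TF M ∧ FullFG M ∧ ∀ p : ℕ, p.Prime → p ∉ π → QLoc p M

lemma TF_iff (M : Type*) [AddCommGroup M] :
    TF M ↔ ∀ m : M, m ≠ 0 → ¬IsOfFinAddOrder m := by
  constructor
  · intro h m hm hf
    obtain ⟨k, hk, hkm⟩ := isOfFinAddOrder_iff_nsmul_eq_zero.1 hf
    exact hm (h k m hk.ne' hkm)
  · intro h k m hk hkm
    by_contra hm
    exact h m hm (isOfFinAddOrder_iff_nsmul_eq_zero.2 ⟨k, Nat.pos_of_ne_zero hk, hkm⟩)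

lemma fg_of_le {M : Type*} [AddCommGroup M] {F H : AddSubgroup M} (hF : F.FG) (h : H ≤ F) :
    H.FG := by
  rw [← AddSubgroup.toIntSubmodule_toAddSubgroup H, ← Submodule.fg_iff_addSubgroup_fg]
  have hF' : (AddSubgroup.toIntSubmodule F).FG := by
    rw [Submodule.fg_iff_addSubgroup_fg]; simpa using hF
  have : Module.Finite ℤ (AddSubgroup.toIntSubmodule F) := Module.Finite.iff_fg.2 hF'
  have := isNoetherian_of_isNoetherianRing_of_finite ℤ (AddSubgroup.toIntSubmodule F)
  exact Submodule.FG.of_le hF' (by exact h)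

lemma comap_fg {M N : Type*} [AddCommGroup M] [AddCommGroup N] (i : N →+ M)
    (hi : Function.Injective i) {F : AddSubgroup M} (hF : F.FG) : (F.comap i).FG := by
  have h1 : ((F.comap i).map i).FG := fg_of_le hF (AddSubgroup.map_comap_le _ _)
  rw [← AddSubgroup.toIntSubmodule_toAddSubgroup (F.comap i), ← Submodule.fg_iff_addSubgroup_fg]
  rw [← AddSubgroup.toIntSubmodule_toAddSubgroup ((F.comap i).map i),
    ← Submodule.fg_iff_addSubgroup_fg] at h1
  have h2 : AddSubgroup.toIntSubmodule ((F.comap i).map i) =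
    (AddSubgroup.toIntSubmodule (F.comap i)).map i.toIntLinearMap := by
    ext x; simp
  rw [h2] at h1
  exact Submodule.fg_of_fg_map_injective i.toIntLinearMap hi h1

lemma QLoc.of_inj {p : ℕ} {M N : Type*} [AddCommGroup M] [AddCommGroup N] (i : N →+ M)
    (hi : Function.Injective i) (h : QLoc p M) : QLoc p N := by
  obtain ⟨F, hF, h⟩ := h
  refine ⟨F.comap i, comap_fg i hi hF, fun m => ?_⟩
  obtain ⟨k, hk, hkm⟩ := h (i m)
  exact ⟨k, hk, by simpa using hkm⟩

lemma fg_map {M N : Type*} [AddCommGroup M] [AddCommGroup N] (i : M →+ N)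
    {F : AddSubgroup M} (hF : F.FG) : (F.map i).FG := by
  classical
  obtain ⟨S, rfl⟩ := hF
  exact ⟨S.image i, by rw [AddMonoidHom.map_closure]; simp⟩

lemma QLoc.of_surj {p : ℕ} {M N : Type*} [AddCommGroup M] [AddCommGroup N] (i : M →+ N)
    (hi : Function.Surjective i) (h : QLoc p M) : QLoc p N := by
  obtain ⟨F, hF, h⟩ := h
  refine ⟨F.map i, fg_map i hF, fun m => ?_⟩
  obtain ⟨m, rfl⟩ := hi m
  obtain ⟨k, hk, hkm⟩ := h m
  exact ⟨k, hk, ⟨_, hkm, by simp⟩⟩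

lemma NiceA.of_inj {π : Set ℕ} {M N : Type*} [AddCommGroup M] [AddCommGroup N] (i : N →+ M)
    (hi : Function.Injective i) (h : NiceA π M) : NiceA π N := by
  obtain ⟨h1, ⟨F, hF, h2⟩, h3⟩ := h
  refine ⟨fun k m hk hkm => ?_, ⟨F.comap i, comap_fg i hi hF, fun m => ?_⟩,
    fun p hp hpi => (h3 p hp hpi).of_inj i hi⟩
  · apply hi
    rw [map_zero]
    exact h1 k _ hk (by rw [← map_nsmul, hkm, map_zero])
  · obtain ⟨k, hk, hkm⟩ := h2 (i m)
    exact ⟨k, hk, by simpa using hkm⟩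

lemma NiceA.of_fg {π : Set ℕ} {M : Type*} [AddCommGroup M] (h : TF M)
    (hF : (⊤ : AddSubgroup M).FG) : NiceA π M :=
  ⟨h, ⟨⊤, hF, fun m => ⟨1, one_ne_zero, trivial⟩⟩,
    fun p hp _ => ⟨⊤, hF, fun m => ⟨1, by simpa using hp.one_lt.ne', trivial⟩⟩⟩

/-- rank bound from a full f.g. subgroup -/
lemma rank_of_fullFG {M : Type*} [AddCommGroup M] (h : FullFG M) :
    ∃ n : ℕ, ∀ k : ℕ, (∃ f : (Fin k →₀ ℤ) →+ M, Function.Injective f) → k ≤ n := by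
  obtain ⟨F, hF, h⟩ := h
  let S := AddSubgroup.toIntSubmodule F
  have hF' : S.FG := by
    rw [Submodule.fg_iff_addSubgroup_fg]; simpa [S] using hF
  have : Module.Finite ℤ S := Module.Finite.iff_fg.2 hF'
  refine ⟨Module.finrank ℤ S, fun k ⟨f, hf⟩ => ?_⟩
  choose c hc0 hc using h
  let N : ℕ := ∏ i : Fin k, c (f (Finsupp.single i 1))
  have hN : N ≠ 0 := Finset.prod_ne_zero_iff.2 fun i _ => hc0 _
  have hmem : ∀ x, (N : ℤ) • f x ∈ S := by
    intro x
    induction x using Finsupp.induction_linear with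
    | zero => simp
    | add x y hx hy => rw [map_add, smul_add]; exact S.add_mem hx hy
    | single i a =>
      have h1 : f (Finsupp.single i a) = a • f (Finsupp.single i 1) := by
        rw [← map_zsmul]; simp
      rw [h1, smul_comm]
      apply S.smul_mem
      obtain ⟨d, hd⟩ : c (f (Finsupp.single i 1)) ∣ N := Finset.dvd_prod_of_mem _ (Finset.mem_univ i)
      rw [hd, mul_comm]
      push_cast
      rw [mul_smul]
      apply S.smul_mem
      have h3 := hc (f (Finsupp.single i 1))
      rw [natCast_zsmul]
      exact h3
  let g : (Fin k →₀ ℤ) →ₗ[ℤ] S :=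
    LinearMap.codRestrict S ((N : ℤ) • f.toIntLinearMap) hmem
  have hg : Function.Injective g := by
    rw [injective_iff_map_eq_zero]
    intro x hx
    have h2 : (N : ℤ) • f x = 0 := congrArg Subtype.val hx
    rw [← map_zsmul, ← map_zero f] at h2
    have := hf h2
    simpa [hN] using this
  have := LinearMap.finrank_le_finrank_of_injective hg
  simpa using this

lemma fullFG_of_rank {M : Type*} [AddCommGroup M]
    (h : ∃ n : ℕ, ∀ k : ℕ, (∃ f : (Fin k →₀ ℤ) →+ M, Function.Injective f) → k ≤ n) :
    FullFG M := by
  classical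
  obtain ⟨n, hn⟩ := h
  have hn' : ∀ k (v : Fin k → M), LinearIndependent ℤ v → k ≤ n := fun k v hv =>
    hn k ⟨(Finsupp.linearCombination ℤ v).toAddMonoidHom, hv⟩
  let P : ℕ → Prop := fun k => ∃ v : Fin k → M, LinearIndependent ℤ v
  have hP0 : P 0 := ⟨Fin.elim0, linearIndependent_empty_type⟩
  obtain ⟨v, hv⟩ : P (Nat.findGreatest P n) := Nat.findGreatest_spec (Nat.zero_le n) hP0
  have hmax : ¬ P (Nat.findGreatest P n + 1) := by
    intro hk
    obtain ⟨w, hw⟩ := id hk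
    have := Nat.le_findGreatest (hn' _ w hw) hk
    omega
  refine ⟨(Submodule.span ℤ (Set.range v)).toAddSubgroup, ?_, fun m => ?_⟩
  · rw [← Submodule.fg_iff_addSubgroup_fg]
    exact Submodule.fg_span (Set.finite_range v)
  · by_contra hcon
    push Not at hcon
    apply hmax
    refine ⟨Fin.cons m v, LinearIndependent.finCons' m v hv ?_⟩
    intro c y hyS hy
    by_contra hc
    have h1 : c • m ∈ Submodule.span ℤ (Set.range v) := by
      rw [eq_neg_of_add_eq_zero_left hy]; exact Submodule.neg_mem _ hyS
    apply hcon c.natAbs (by simpa using hc)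
    show c.natAbs • m ∈ Submodule.span ℤ (Set.range v)
    rw [← natCast_zsmul]
    rcases Int.natAbs_eq c with h2 | h2
    · rw [← h2]; exact h1
    · rw [eq_neg_iff_add_eq_zero, add_comm, ← eq_neg_iff_add_eq_zero] at h2
      rw [h2, neg_smul]; exact Submodule.neg_mem _ h1
end
end HB

namespace HB
section

lemma circle_mk_eq_zero (r : ℚ) : ((r : ℚ) : RatCircle) = 0 ↔ ∃ a : ℤ, (a : ℚ) = r := by
  rw [QuotientAddGroup.eq_zero_iff, AddSubgroup.mem_zmultiples_iff]
  simp

lemma not_qloc_prufer {p : ℕ} (hp : p.Prime) : ¬ QLoc p (pruferSubgroup p) := by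
  rintro ⟨F, ⟨S, rfl⟩, h⟩
  have hex : ∀ x : pruferSubgroup p, ∃ n : ℕ, p ^ n • x = 0 := by
    rintro ⟨x, n, hn⟩
    exact ⟨n, Subtype.ext hn⟩
  choose e he using hex
  let n := ∑ x ∈ S, e x
  have hn : ∀ x ∈ AddSubgroup.closure (S : Set (pruferSubgroup p)), p ^ n • x = 0 := by
    intro x hx
    induction hx using AddSubgroup.closure_induction with
    | mem x hx =>
      have h1 : e x ≤ n := Finset.single_le_sum (f := e) (fun _ _ => Nat.zero_le _) hx
      obtain ⟨d, hd⟩ := Nat.exists_eq_add_of_le h1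
      rw [hd, add_comm, pow_add, mul_smul, he, smul_zero]
    | zero => simp
    | add x y _ _ hx hy => rw [smul_add, hx, hy, add_zero]
    | neg x _ hx => rw [smul_neg, hx, neg_zero]
  have hp0 : (p : ℚ) ≠ 0 := by exact_mod_cast hp.ne_zero
  have key : ∀ x : pruferSubgroup p, p ^ n • x = 0 := by
    intro x
    obtain ⟨k, hk, hkx⟩ := h x
    have h1 := hn _ hkx
    have hco : Nat.Coprime (p ^ (e x)) k := Nat.Coprime.pow_left _ ((Nat.Prime.coprime_iff_not_dvd hp).2 hk)
    have h2 : addOrderOf (p ^ n • x) ∣ k := addOrderOf_dvd_of_nsmul_eq_zero (by rw [smul_comm]; exact h1)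
    have h3 : addOrderOf (p ^ n • x) ∣ p ^ (e x) :=
      addOrderOf_dvd_of_nsmul_eq_zero (by rw [smul_comm, he, smul_zero])
    have h4 := Nat.eq_one_of_dvd_coprimes hco h3 h2
    exact AddMonoid.addOrderOf_eq_one_iff.1 h4
  have h5 : (((1 : ℚ) / p ^ (n+1) : ℚ) : RatCircle) ∈ pruferSubgroup p := by
    refine ⟨n+1, ?_⟩
    rw [← QuotientAddGroup.mk_nsmul, circle_mk_eq_zero]
    exact ⟨1, by simp; field_simp⟩
  have h6 := congrArg Subtype.val (key ⟨_, h5⟩)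
  have h7 : (p ^ n) • (((1 : ℚ) / p ^ (n+1) : ℚ) : RatCircle) = 0 := h6
  rw [← QuotientAddGroup.mk_nsmul, circle_mk_eq_zero] at h7
  obtain ⟨a, ha⟩ := h7
  have h8 : (a * p : ℤ) = 1 := by
    have : (a * p : ℚ) = 1 := by
      rw [ha]; simp [pow_succ]; field_simp
    exact_mod_cast this
  have h9 : (p : ℤ) ∣ 1 := ⟨a, by rw [mul_comm, h8]⟩
  have h10 := Int.natAbs_dvd_natAbs.2 h9
  simp at h10
  exact hp.one_lt.ne' h10

lemma not_section_of_qloc {p : ℕ} (hp : p.Prime) {M : Type*} [AddCommGroup M] (h : QLoc p M) :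
    ¬ HasQuasicyclicSection (Multiplicative M) p := by
  rintro ⟨H, K, hK, ⟨e⟩⟩
  have h1 : QLoc p (Additive H) :=
    h.of_inj (MonoidHom.toAdditiveLeft H.subtype) (fun a b hab => Subtype.ext hab)
  let q : H →* Multiplicative (pruferSubgroup p) := e.toMonoidHom.comp (QuotientGroup.mk' K)
  have hq : Function.Surjective q := e.surjective.comp (QuotientGroup.mk'_surjective K)
  exact not_qloc_prufer hp (h1.of_surj (MonoidHom.toAdditiveLeft q) hq)

lemma prufer_generate {p : ℕ} (hp : p.Prime) {N n : ℕ} (hnN : n ≤ N) (w y : RatCircle)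
    (hw : p ^ N • w ≠ 0) (hw' : p ^ (N+1) • w = 0) (hy : p ^ n • y = 0) : ∃ c : ℤ, c • w = y := by
  obtain ⟨r, rfl⟩ := QuotientAddGroup.mk_surjective w
  obtain ⟨s, rfl⟩ := QuotientAddGroup.mk_surjective y
  have hp0 : (p : ℚ) ≠ 0 := by exact_mod_cast hp.ne_zero
  rw [← QuotientAddGroup.mk_nsmul] at hw hw' hy
  obtain ⟨a, ha⟩ := (circle_mk_eq_zero _).1 hw'
  obtain ⟨b, hb⟩ := (circle_mk_eq_zero _).1 hy
  have hpa : ¬ (p : ℤ) ∣ a := by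
    rintro ⟨a', rfl⟩
    apply hw
    rw [circle_mk_eq_zero]
    refine ⟨a', ?_⟩
    simp only [nsmul_eq_mul] at ha ⊢
    push_cast [pow_succ] at ha ⊢
    apply mul_left_cancel₀ hp0
    linarith
  have hco : IsCoprime ((p : ℤ) ^ (N+1)) a :=
    IsCoprime.pow_left ((Nat.prime_iff_prime_int.1 hp).coprime_iff_not_dvd.2 hpa)
  obtain ⟨u, v, huv⟩ := hco
  obtain ⟨d, rfl⟩ := Nat.exists_eq_add_of_le hnN
  refine ⟨b * p ^ (d + 1) * v, ?_⟩
  rw [← QuotientAddGroup.mk_zsmul, ← sub_eq_zero, ← QuotientAddGroup.mk_sub, circle_mk_eq_zero]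
  refine ⟨-(b * p ^ (d+1) * u), ?_⟩
  simp only [nsmul_eq_mul, zsmul_eq_mul] at *
  push_cast at *
  have huv' : (u * p ^ (n+d+1) + v * a : ℚ) = 1 := by exact_mod_cast huv
  have hne : (p : ℚ) ^ (n + d + 1) ≠ 0 := pow_ne_zero _ hp0
  apply mul_left_cancel₀ hne
  have e1 : (p : ℚ) ^ (n + d + 1) = p ^ n * p ^ (d+1) := by rw [← pow_add]; ring_nf
  have e2 : (p : ℚ) ^ (n+d+1) * s = b * p ^ (d+1) := by rw [e1, hb]; ring
  rw [mul_sub, e2]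
  have e3 : (p : ℚ) ^ (n+d+1) * (b * p ^ (d+1) * v * r) = b * p ^ (d+1) * v * a := by
    rw [ha]; ring
  rw [e3]
  linear_combination (-(b : ℚ) * p ^ (d+1)) * huv'

lemma section_of_not_qloc {p : ℕ} (hp : p.Prime) {M : Type} [AddCommGroup M] (htf : TF M)
    (hfull : FullFG M) (hq : ¬ QLoc p M) : HasQuasicyclicSection (Multiplicative M) p := by
  classical
  obtain ⟨F, hF, hFull⟩ := hfull
  have hinj : ∀ k : ℕ, k ≠ 0 → Function.Injective (nsmulAddMonoidHom (α := M) k) := by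
    intro k hk
    rw [injective_iff_map_eq_zero]
    intro m hm
    exact htf k m hk hm
  have hunb : ∀ N : ℕ, ∃ x : M ⧸ F, p ^ N • x ≠ 0 ∧ p ^ (N+1) • x = 0 := by
    intro N
    by_contra hcon
    push Not at hcon
    have hT : ∀ n (x : M ⧸ F), p ^ n • x = 0 → p ^ N • x = 0 := by
      intro n
      induction n with
      | zero => intro x hx; simp at hx; simp [hx]
      | succ n ih =>
        intro x hx
        by_contra hx0
        by_cases hnN : n + 1 ≤ N
        · obtain ⟨d, hd⟩ := Nat.exists_eq_add_of_le hnN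
          apply hx0
          rw [hd, add_comm, pow_add, mul_smul, hx, smul_zero]
        · obtain ⟨d, rfl⟩ := Nat.exists_eq_add_of_le (show N ≤ n by omega)
          have h1 : p ^ (N+1) • (p ^ d • x) = 0 := by
            rw [← mul_smul, ← pow_add]; convert hx using 3; ring
          have h2 : p ^ N • (p ^ d • x) = 0 := by
            by_contra h3; exact hcon _ h3 h1
          apply hx0
          apply ih
          rw [← mul_smul, ← pow_add] at h2
          exact h2
    apply hq
    refine ⟨F.comap (nsmulAddMonoidHom (p ^ N)),
      comap_fg _ (hinj _ (pow_ne_zero _ hp.ne_zero)) hF, fun m => ?_⟩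
    obtain ⟨k, hk, hkm⟩ := hFull m
    obtain ⟨a, k', hk', rfl⟩ := Nat.exists_eq_pow_mul_and_not_dvd hk p hp.one_lt.ne'
    refine ⟨k', hk', ?_⟩
    have h1 := hT a (k' • (m : M ⧸ F)) (by
      rw [← mul_smul, ← QuotientAddGroup.mk_nsmul]
      exact (QuotientAddGroup.eq_zero_iff _).2 hkm)
    rw [← mul_smul, ← QuotientAddGroup.mk_nsmul, QuotientAddGroup.eq_zero_iff] at h1
    simpa [mul_smul] using h1
  -- finiteness of p-torsion
  let F1 : AddSubgroup M := F.comap (nsmulAddMonoidHom p)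
  have hF1 : F1.FG := comap_fg _ (hinj _ hp.ne_zero) hF
  let P : AddSubgroup (M ⧸ F) := F1.map (QuotientAddGroup.mk' F)
  have hP : P.FG := fg_map _ hF1
  have hPp : ∀ x : M ⧸ F, p • x = 0 → x ∈ P := by
    intro x hx
    obtain ⟨m, rfl⟩ := QuotientAddGroup.mk_surjective x
    rw [← QuotientAddGroup.mk_nsmul, QuotientAddGroup.eq_zero_iff] at hx
    exact ⟨m, hx, rfl⟩
  have hPtor : ∀ x ∈ P, p • x = 0 := by
    rintro _ ⟨m, hm, rfl⟩
    exact (QuotientAddGroup.eq_zero_iff _).2 hm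
  have hfin : Finite P := by
    have : AddGroup.FG P := (AddGroup.fg_iff_addSubgroup_fg P).2 hP
    apply AddCommGroup.finite_of_fg_isAddTorsion
    intro x
    exact isOfFinAddOrder_iff_nsmul_eq_zero.2 ⟨p, hp.pos, Subtype.ext (hPtor _ x.2)⟩
  choose z hz hz' using hunb
  let f : ℕ → P := fun N => ⟨p ^ N • z N, hPp _ (by rw [← mul_smul, ← pow_succ']; exact hz' N)⟩
  obtain ⟨y, hy⟩ := Finite.exists_infinite_fiber f
  have hlarge : ∀ n : ℕ, ∃ N, n ≤ N ∧ p ^ N • z N = y := by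
    intro n
    obtain ⟨N, hN, hnN⟩ := (Set.infinite_coe_iff.1 hy).exists_gt n
    exact ⟨N, hnN.le, congrArg Subtype.val hN⟩
  have hy0 : (y : M ⧸ F) ≠ 0 := by
    obtain ⟨N, _, hN⟩ := hlarge 0
    rw [← hN]; exact hz N
  obtain ⟨φ, hφ⟩ := CharacterModule.exists_character_apply_ne_zero_of_ne_zero hy0
  let φ' : (M ⧸ F) →+ RatCircle := φ
  let H : AddSubgroup M :=
    { carrier := {m | φ' (m : M ⧸ F) ∈ pruferSubgroup p}
      zero_mem' := by
        show φ' ((0 : M) : M ⧸ F) ∈ pruferSubgroup p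
        rw [QuotientAddGroup.mk_zero, map_zero]; exact zero_mem _
      add_mem' := by
        intro a b ha hb
        show φ' ((a + b : M) : M ⧸ F) ∈ pruferSubgroup p
        rw [QuotientAddGroup.mk_add, map_add]; exact add_mem ha hb
      neg_mem' := by
        intro a ha
        show φ' ((-a : M) : M ⧸ F) ∈ pruferSubgroup p
        rw [QuotientAddGroup.mk_neg, map_neg]; exact neg_mem ha }
  let ψ : H →+ pruferSubgroup p :=
    { toFun := fun h => ⟨φ' ((h : M) : M ⧸ F), h.2⟩
      map_zero' := Subtype.ext (by simp)
      map_add' := fun a b => Subtype.ext (by simp) }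
  have hψ : Function.Surjective ψ := by
    rintro ⟨t, n, hn⟩
    obtain ⟨N, hnN, hN⟩ := hlarge n
    obtain ⟨c, hc⟩ := prufer_generate hp hnN (φ' (z N)) t
      (by rw [← map_nsmul, hN]; exact hφ) (by rw [← map_nsmul, hz', map_zero]) hn
    obtain ⟨m, hm⟩ := QuotientAddGroup.mk_surjective (z N)
    have h1 : φ' ((c • m : M) : M ⧸ F) = t := by
      rw [QuotientAddGroup.mk_zsmul, map_zsmul, hm, hc]
    exact ⟨⟨c • m, by show φ' ((c • m : M) : M ⧸ F) ∈ pruferSubgroup p; rw [h1]; exact ⟨n, hn⟩⟩, Subtype.ext h1⟩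
  let Ψ : (AddSubgroup.toSubgroup H) →* Multiplicative (pruferSubgroup p) :=
    { toFun := fun h => Multiplicative.ofAdd (ψ ⟨Multiplicative.toAdd h.1, h.2⟩)
      map_one' := by
        show Multiplicative.ofAdd (ψ 0) = 1
        rw [map_zero]; rfl
      map_mul' := fun a b => by
        show Multiplicative.ofAdd (ψ (⟨Multiplicative.toAdd a.1, a.2⟩ + ⟨Multiplicative.toAdd b.1, b.2⟩)) = _
        rw [map_add]; rfl }
  refine ⟨AddSubgroup.toSubgroup H, Ψ.ker, inferInstance,
    ⟨QuotientGroup.quotientKerEquivOfSurjective Ψ ?_⟩⟩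
  intro t
  obtain ⟨⟨h, hh⟩, h'⟩ := hψ (Multiplicative.toAdd t)
  exact ⟨⟨Multiplicative.ofAdd h, hh⟩, congrArg Multiplicative.ofAdd h'⟩


lemma niceRep_iff (π : Set ℕ) (M : Rep.{0} ℤ G) : NiceRep π M ↔ NiceA π M := by
  constructor
  · rintro ⟨h1, h2, h3⟩
    have htf : TF M := (TF_iff _).2 h1
    have hf : FullFG M := fullFG_of_rank h2.1
    refine ⟨htf, hf, fun p hp hpi => ?_⟩
    by_contra hq
    exact hpi (h3 ⟨hp, section_of_not_qloc hp htf hf hq⟩)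
  · rintro ⟨h1, h2, h3⟩
    refine ⟨(TF_iff _).1 h1, ⟨rank_of_fullFG h2, fun p hp => ?_⟩, ?_⟩
    · refine (Set.finite_singleton (0 : M)).subset ?_
      intro m hm
      exact h1 p m hp.ne_zero hm
    · rintro p ⟨hp, hs⟩
      by_contra hpi
      exact not_section_of_qloc hp (h3 p hp hpi) hs
end
end HB

namespace HB
section

lemma flat_of_TF {M : Type*} [AddCommGroup M] [hm : Module ℤ M] (h : TF M) : Module.Flat ℤ M := by
  obtain rfl : hm = AddCommGroup.toIntModule M := Subsingleton.elim _ _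
  rw [Module.Flat.flat_iff_torsion_eq_bot_of_isBezout, eq_bot_iff]
  rintro m ⟨⟨r, hr⟩, hm⟩
  have hr0 : r ≠ 0 := nonZeroDivisors.ne_zero hr
  have hm' : r • m = 0 := hm
  show m = 0
  apply h r.natAbs m (by simpa using hr0)
  rw [← natCast_zsmul]
  rcases Int.natAbs_eq r with h2 | h2
  · rw [← h2]; exact hm'
  · rw [eq_neg_iff_add_eq_zero, add_comm, ← eq_neg_iff_add_eq_zero] at h2
    rw [h2, neg_smul, hm', neg_zero]

open TensorProduct in
lemma TF_tensor {M N : Type*} [AddCommGroup M] [AddCommGroup N] [hm : Module ℤ M] [hn : Module ℤ N]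
    (hM : TF M) (hN : TF N) : TF (M ⊗[ℤ] N) := by
  obtain rfl : hm = AddCommGroup.toIntModule M := Subsingleton.elim _ _
  obtain rfl : hn = AddCommGroup.toIntModule N := Subsingleton.elim _ _
  intro k x hk hx
  have := flat_of_TF hN
  have h1 : Function.Injective ((LinearMap.lsmul ℤ M (k : ℤ)).rTensor N) := by
    apply Module.Flat.rTensor_preserves_injective_linearMap
    rw [injective_iff_map_eq_zero]
    intro m hm
    apply hM k m hk
    rw [← natCast_zsmul]
    exact hm
  apply h1
  rw [map_zero]
  have h2 : ∀ y : M ⊗[ℤ] N, (LinearMap.lsmul ℤ M (k : ℤ)).rTensor N y = k • y := by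
    intro y
    induction y using TensorProduct.induction_on with
    | zero => rw [map_zero, smul_zero]
    | tmul m n =>
      rw [LinearMap.rTensor_tmul, LinearMap.lsmul_apply, ← smul_tmul', natCast_zsmul]
    | add x y hx hy => rw [map_add, hx, hy, smul_add]
  rw [h2, hx]

open TensorProduct in
lemma loc_tensor {M N : Type*} [AddCommGroup M] [AddCommGroup N] [hm : Module ℤ M] [hn : Module ℤ N]
    (R : ℕ → Prop) (hmul : ∀ a b, R a → R b → R (a * b))
    (hM : ∃ F : AddSubgroup M, F.FG ∧ ∀ m : M, ∃ k : ℕ, R k ∧ k • m ∈ F)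
    (hN : ∃ F : AddSubgroup N, F.FG ∧ ∀ m : N, ∃ k : ℕ, R k ∧ k • m ∈ F) :
    ∃ F : AddSubgroup (M ⊗[ℤ] N), F.FG ∧ ∀ m : M ⊗[ℤ] N, ∃ k : ℕ, R k ∧ k • m ∈ F := by
  obtain rfl : hm = AddCommGroup.toIntModule M := Subsingleton.elim _ _
  obtain rfl : hn = AddCommGroup.toIntModule N := Subsingleton.elim _ _
  classical
  obtain ⟨_, ⟨S, rfl⟩, hS⟩ := hM
  obtain ⟨_, ⟨T, rfl⟩, hT⟩ := hN
  let U : Finset (M ⊗[ℤ] N) := (S ×ˢ T).image fun x => x.1 ⊗ₜ[ℤ] x.2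
  refine ⟨AddSubgroup.closure (U : Set (M ⊗[ℤ] N)), ⟨U, rfl⟩, ?_⟩
  generalize hF : AddSubgroup.closure (U : Set (M ⊗[ℤ] N)) = F
  have key : ∀ m ∈ AddSubgroup.closure (S : Set M), ∀ n ∈ AddSubgroup.closure (T : Set N),
      m ⊗ₜ[ℤ] n ∈ F := by
    intro m hm
    induction hm using AddSubgroup.closure_induction with
    | mem m hm =>
      intro n hn
      induction hn using AddSubgroup.closure_induction with
      | mem n hn =>
        rw [← hF]
        apply AddSubgroup.subset_closure
        exact Finset.mem_coe.2 (Finset.mem_image.2 ⟨(m, n), Finset.mem_product.2 ⟨hm, hn⟩, rfl⟩)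
      | zero => rw [tmul_zero]; exact zero_mem _
      | add x y _ _ hx hy => rw [tmul_add]; exact add_mem hx hy
      | neg x _ hx => rw [tmul_neg]; exact neg_mem hx
    | zero => intro n _; rw [zero_tmul]; exact zero_mem _
    | add x y _ _ hx hy => intro n hn; rw [add_tmul]; exact add_mem (hx n hn) (hy n hn)
    | neg x _ hx => intro n hn; rw [neg_tmul]; exact neg_mem (hx n hn)
  intro x
  induction x using TensorProduct.induction_on with
  | zero =>
    obtain ⟨k, hk, _⟩ := hS 0
    exact ⟨k, hk, by rw [smul_zero]; exact zero_mem _⟩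
  | tmul m n =>
    obtain ⟨k, hk, hkm⟩ := hS m
    obtain ⟨l, hl, hln⟩ := hT n
    refine ⟨k * l, hmul _ _ hk hl, ?_⟩
    have h2 := key _ hkm _ hln
    have h3 : (k • m) ⊗ₜ[ℤ] (l • n) = (k * l) • (m ⊗ₜ[ℤ] n) := by
      rw [← natCast_zsmul, ← natCast_zsmul, ← natCast_zsmul, smul_tmul_smul]; push_cast; rfl
    rw [← h3]
    exact h2
  | add x y hx hy =>
    obtain ⟨k, hk, hkm⟩ := hx
    obtain ⟨l, hl, hln⟩ := hy
    refine ⟨k * l, hmul _ _ hk hl, ?_⟩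
    rw [smul_add]
    refine add_mem ?_ ?_
    · rw [mul_comm, mul_smul]; exact nsmul_mem hkm _
    · rw [mul_smul]; exact nsmul_mem hln _

open TensorProduct in
lemma niceA_tensor {π : Set ℕ} {M N : Type*} [AddCommGroup M] [AddCommGroup N] [Module ℤ M]
    [Module ℤ N] (hM : NiceA π M) (hN : NiceA π N) : NiceA π (M ⊗[ℤ] N) := by
  refine ⟨TF_tensor hM.1 hN.1, loc_tensor (fun k => k ≠ 0) (fun a b => mul_ne_zero) hM.2.1 hN.2.1,
    fun p hp hpi => loc_tensor (fun k => ¬ p ∣ k) (fun a b ha hb => ?_) (hM.2.2 p hp hpi)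
      (hN.2.2 p hp hpi)⟩
  rw [hp.dvd_mul]; tauto


attribute [local instance 10000] Rep.hV2

/-- morphism from an equivariant additive map -/
def mkHom {A B : Rep.{0} ℤ G} (f : A →+ B) (hf : ∀ g a, f (A.ρ g a) = B.ρ g (f a)) : A ⟶ B :=
  Rep.ofHom ({ toFun := f
               map_add' := map_add f
               map_smul' := fun c x => by
                exact map_intCast_smul f ℤ ℤ c x
               isIntertwining' := fun g => LinearMap.ext fun a => hf g a } :
    A.ρ.IntertwiningMap B.ρ)

@[simp] lemma mkHom_apply {A B : Rep.{0} ℤ G} (f : A →+ B)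
    (hf : ∀ g a, f (A.ρ g a) = B.ρ g (f a)) (a : A) : (mkHom f hf).hom a = f a := rfl

lemma hom_ext' {A B : Rep.{0} ℤ G} {f g : A ⟶ B} (h : ∀ a, f.hom a = g.hom a) : f = g :=
  Rep.hom_ext (Representation.IntertwiningMap.ext (LinearMap.ext h))

lemma exact_iff (S : ShortComplex (Rep.{0} ℤ G)) :
    S.Exact ↔ ∀ x : S.X₂, S.g.hom x = 0 → ∃ y : S.X₁, S.f.hom y = x := by
  rw [← S.exact_map_iff_of_faithful (forget₂ (Rep.{0} ℤ G) (ModuleCat.{0} ℤ)),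
    ShortComplex.moduleCat_exact_iff]
  rfl

lemma shortExact_iff (S : ShortComplex (Rep.{0} ℤ G)) :
    S.ShortExact ↔ (∀ x : S.X₂, S.g.hom x = 0 → ∃ y : S.X₁, S.f.hom y = x) ∧
      Function.Injective S.f.hom ∧ Function.Surjective S.g.hom := by
  rw [← Rep.mono_iff_injective, ← Rep.epi_iff_surjective, ← exact_iff]
  exact ⟨fun h => ⟨h.exact, h.mono_f, h.epi_g⟩, fun ⟨h1, h2, h3⟩ => ⟨h1⟩⟩
end
end HB

namespace HB
section
open Limits
attribute [local instance 10000] Rep.hV2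

variable {π : Set ℕ}

lemma memC_of_epi {A B : Rep.{0} ℤ G} (f : A ⟶ B) [hf : Epi f] (hA : MemC G π A) : MemC G π B :=
  MemC.quot A B f ((Rep.epi_iff_surjective f).1 hf) hA

lemma memC_of_shortExact {S : ShortComplex (Rep.{0} ℤ G)} (hS : S.ShortExact)
    (h1 : MemC G π S.X₁) (h3 : MemC G π S.X₃) : MemC G π S.X₂ := by
  have h := (shortExact_iff S).1 hS
  refine MemC.ext S.X₁ S.X₂ S.X₃ S.f S.g h.2.1 h.2.2 (fun b => ⟨h.1 b, ?_⟩) h1 h3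
  rintro ⟨a, rfl⟩
  have := congrArg (fun f => f.hom a) S.zero
  exact this

/-- free permutation representations -/
def frρ (G : Type) [Group G] (X : Type) [MulAction G X] : Representation ℤ G (X →₀ ℤ) where
  toFun g := Finsupp.lmapDomain ℤ ℤ (fun x : X => g • x)
  map_one' := by
    ext x y; simp
  map_mul' g h := by
    ext x y; simp [mul_smul]

/-- free permutation representations -/
abbrev fr (X : Type) [MulAction G X] : Rep.{0} ℤ G := Rep.of (frρ G X)

lemma frρ_apply {X : Type} [MulAction G X] (g : G) (x : X →₀ ℤ) :
    (frρ G X) g x = Finsupp.mapDomain (fun x : X => g • x) x := rfl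

lemma fr_ρ_single {X : Type} [MulAction G X] (g : G) (x : X) (c : ℤ) :
    (fr (G := G) X).ρ g (Finsupp.single x c) = Finsupp.single (g • x) c :=
  Finsupp.mapDomain_single

lemma niceA_fr (X : Type) [Finite X] : NiceA π (X →₀ ℤ) := by
  apply NiceA.of_fg
  · intro k m hk hm
    ext x
    have := DFunLike.congr_fun hm x
    simpa [hk] using this
  · have : Module.Finite ℤ (X →₀ ℤ) := inferInstance
    have h2 : AddGroup.FG (X →₀ ℤ) := Module.Finite.iff_addGroup_fg.1 this
    exact AddGroup.FG.out

lemma finite_quot (A : Rep.{0} ℤ G) (h : Finite (A : Type)) :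
    ∃ (B : Rep.{0} ℤ G) (_ : NiceRep π B) (f : B ⟶ A), Epi f := by
  let _ : MulAction G (A : Type) :=
    { smul := fun g a => A.ρ g a
      one_smul := fun a => by show A.ρ 1 a = a; simp
      mul_smul := fun g h a => by show A.ρ (g * h) a = A.ρ g (A.ρ h a); simp }
  let F : (A →₀ ℤ) →+ A := Finsupp.liftAddHom (fun a => (zmultiplesHom (A : Type)) a)
  have hF : ∀ a c, F (Finsupp.single a c) = c • a := fun a c => by
    simp only [F, Finsupp.liftAddHom_apply_single]; rfl
  refine ⟨fr (A : Type), (niceRep_iff _ _).2 (niceA_fr _), mkHom F ?_, ?_⟩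
  · intro g x
    induction x using Finsupp.induction_linear with
    | zero => simp
    | add x y hx hy => rw [map_add, map_add, map_add, map_add, hx, hy]
    | single a c =>
      rw [fr_ρ_single, hF, hF, map_zsmul]; rfl
  · rw [Rep.epi_iff_surjective]
    intro a
    refine ⟨Finsupp.single a 1, ?_⟩
    rw [mkHom_apply, hF, one_zsmul]

lemma memC_induct {P : Rep.{0} ℤ G → Prop}
    (nice : ∀ A, NiceRep π A → P A)
    (quot : ∀ (A B : Rep.{0} ℤ G) (f : A ⟶ B) [Epi f], MemC G π A → P A → P B)
    (ext : ∀ (S : ShortComplex (Rep.{0} ℤ G)), S.ShortExact → P S.X₁ → P S.X₃ → P S.X₂)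
    {A : Rep.{0} ℤ G} (hA : MemC G π A) : P A := by
  induction hA with
  | of_finite A h =>
    obtain ⟨B, hB, f, hf⟩ := finite_quot (π := π) A h
    exact quot B A f (.of_nice B hB) (nice B hB)
  | of_nice A h => exact nice A h
  | quot A B f hf hA ih =>
    have := (Rep.epi_iff_surjective f).2 hf
    exact quot A B f hA ih
  | ext A B C f g hinj hsurj hex hA hC ihA ihC =>
    refine ext (ShortComplex.mk f g ?_) ?_ ihA ihC
    · apply hom_ext'
      intro a
      exact (hex _).2 ⟨a, rfl⟩
    · rw [shortExact_iff]
      exact ⟨fun x hx => (hex x).1 hx, hinj, hsurj⟩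

lemma memC_of_mono {A B : Rep.{0} ℤ G} (i : B ⟶ A) [Mono i] (hA : MemC G π A) : MemC G π B := by
  suffices H : ∀ B (i : B ⟶ A), Mono i → MemC G π B from H B i inferInstance
  clear! B
  refine memC_induct (P := fun A => ∀ B (i : B ⟶ A), Mono i → MemC G π B) ?_ ?_ ?_ hA
  · intro A hA B i hi
    refine .of_nice B ((niceRep_iff _ _).2 ?_)
    exact ((niceRep_iff _ _).1 hA).of_inj i.hom.toLinearMap.toAddMonoidHom
      ((Rep.mono_iff_injective i).1 hi)
  · intro A A' f hf hA ih B i hi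
    have h1 := ih (pullback f i) (pullback.fst f i) inferInstance
    have : Epi (pullback.snd f i) := inferInstance
    exact memC_of_epi (pullback.snd f i) h1
  · intro S hS h1 h3 B i hi
    have hm := hS.mono_f
    let T : ShortComplex (Rep.{0} ℤ G) :=
      ShortComplex.mk (kernel.ι (i ≫ S.g)) (Abelian.factorThruImage (i ≫ S.g)) (by
        rw [← cancel_mono (Abelian.image.ι _)]; simp)
    have hT : T.ShortExact := by
      have e : T.Exact := by
        rw [exact_iff]
        intro x hx
        have h5 : (i ≫ S.g).hom x = 0 := by
          have h6 := congrArg (fun f => f.hom x) (Abelian.image.fac (i ≫ S.g))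
          refine h6.symm.trans ?_
          exact (congrArg (Abelian.image.ι (i ≫ S.g)).hom hx).trans (map_zero _)
        exact (exact_iff (ShortComplex.mk (kernel.ι (i ≫ S.g)) (i ≫ S.g) (by simp))).1
          (ShortComplex.exact_of_f_is_kernel _ (kernelIsKernel _)) x h5
      have : Mono T.f := by dsimp [T]; infer_instance
      have : Epi T.g := by dsimp [T]; infer_instance
      exact ⟨e⟩
    refine memC_of_shortExact hT ?_ (h3 _ (Abelian.image.ι (i ≫ S.g)) inferInstance)
    refine h1 _ (hS.exact.lift (kernel.ι (i ≫ S.g) ≫ i) (by simp [kernel.condition])) ?_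
    have : Mono (hS.exact.lift (kernel.ι (i ≫ S.g) ≫ i) (by simp [kernel.condition]) ≫ S.f) := by
      rw [ShortComplex.Exact.lift_f]; infer_instance
    exact mono_of_mono _ S.f

lemma memC_of_iso {A B : Rep.{0} ℤ G} (e : A ≅ B) (hA : MemC G π A) : MemC G π B :=
  memC_of_epi e.hom hA

lemma memC_of_isZero {A : Rep.{0} ℤ G} (h : IsZero A) : MemC G π A := by
  have := (Rep.isZero_iff (M := A)).1 h
  exact .of_finite A inferInstance

/-- the class as an object property -/
def cls (G : Type) [Group G] (π : Set ℕ) : ObjectProperty (Rep.{0} ℤ G) := MemC G π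

instance : (cls G π).IsSerreClass where
  exists_zero := ⟨_, isZero_zero _, memC_of_isZero (isZero_zero _)⟩
  prop_of_mono f _ h := memC_of_mono f h
  prop_of_epi f _ h := memC_of_epi f h
  prop_X₂_of_shortExact hS h1 h3 := memC_of_shortExact hS h1 h3

open MonoidalCategory

lemma flat_of_nice {A : Rep.{0} ℤ G} (hA : NiceRep π A) : Module.Flat ℤ A :=
  flat_of_TF ((niceRep_iff _ _).1 hA).1

lemma exact_tensor {A : Rep.{0} ℤ G} [Module.Flat ℤ A] {S : ShortComplex (Rep.{0} ℤ G)}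
    (hS : S.Exact) : (S.map (tensorRight A)).Exact := by
  rw [exact_iff] at hS ⊢
  have h1 : Function.Exact S.f.hom.toLinearMap S.g.hom.toLinearMap := by
    intro x
    refine ⟨fun hx => hS x hx, ?_⟩
    rintro ⟨a, rfl⟩
    exact congrArg (fun f => f.hom a) S.zero
  have h2 := Module.Flat.rTensor_exact (M := (A : Type)) h1
  intro x hx
  exact (h2 x).1 hx

lemma memC_tensor {A M : Rep.{0} ℤ G} (hA : NiceRep π A) (hM : MemC G π M) :
    MemC G π (M ⊗ A) := by
  have hfl := flat_of_nice hA
  refine memC_induct (P := fun M => MemC G π (M ⊗ A)) ?_ ?_ ?_ hM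
  · intro M hM
    refine .of_nice _ ((niceRep_iff _ _).2 ?_)
    exact niceA_tensor ((niceRep_iff _ _).1 hM) ((niceRep_iff _ _).1 hA)
  · intro M N f hf _ h
    have : Epi (f ▷ A) := by
      rw [Rep.epi_iff_surjective] at hf ⊢
      exact LinearMap.rTensor_surjective (Q := (A : Type)) (g := f.hom.toLinearMap) hf
    exact memC_of_epi (f ▷ A) h
  · intro S hS h1 h3
    have hT : (S.map (tensorRight A)).ShortExact := by
      have h0 := exact_tensor (A := A) hS.exact
      rw [shortExact_iff] at hS ⊢
      rw [exact_iff] at h0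
      exact ⟨h0, Module.Flat.rTensor_preserves_injective_linearMap (M := (A : Type))
        S.f.hom.toLinearMap hS.2.1,
        LinearMap.rTensor_surjective (Q := (A : Type)) (g := S.g.hom.toLinearMap) hS.2.2⟩
    exact memC_of_shortExact hT h1 h3
end
end HB

namespace HB
section
open Limits
attribute [local instance 10000] Rep.hV2
variable {π : Set ℕ}

lemma sub_exact {A B C : Rep.{0} ℤ G} (i : B ⟶ A) (g : A ⟶ C) :
    (ShortComplex.mk (kernel.ι (i ≫ g)) (Abelian.factorThruImage (i ≫ g)) (by
        rw [← cancel_mono (Abelian.image.ι _)]; simp)).ShortExact := by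
  have e : (ShortComplex.mk (kernel.ι (i ≫ g)) (Abelian.factorThruImage (i ≫ g)) (by
        rw [← cancel_mono (Abelian.image.ι _)]; simp)).Exact := by
    rw [exact_iff]
    intro x hx
    have h5 : (i ≫ g).hom x = 0 := by
      have h6 := congrArg (fun f => f.hom x) (Abelian.image.fac (i ≫ g))
      refine h6.symm.trans ?_
      exact (congrArg (Abelian.image.ι (i ≫ g)).hom hx).trans (map_zero _)
    exact (exact_iff (ShortComplex.mk (kernel.ι (i ≫ g)) (i ≫ g) (by simp))).1
      (ShortComplex.exact_of_f_is_kernel _ (kernelIsKernel _)) x h5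
  exact { exact := e, mono_f := by dsimp; infer_instance, epi_g := by dsimp; infer_instance }

lemma memC_induct2 {P : Rep.{0} ℤ G → Prop}
    (nice : ∀ A, NiceRep π A → P A)
    (quot : ∀ (S : ShortComplex (Rep.{0} ℤ G)), S.ShortExact → P S.X₁ → P S.X₂ → P S.X₃)
    (ext : ∀ (S : ShortComplex (Rep.{0} ℤ G)), S.ShortExact → P S.X₁ → P S.X₃ → P S.X₂)
    {A : Rep.{0} ℤ G} (hA : MemC G π A) : P A := by
  suffices H : ∀ B (i : B ⟶ A), Mono i → P B from H A (𝟙 A) inferInstance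
  refine memC_induct (P := fun A => ∀ B (i : B ⟶ A), Mono i → P B) ?_ ?_ ?_ hA
  · intro A hA B i hi
    refine nice B ((niceRep_iff _ _).2 ?_)
    exact ((niceRep_iff _ _).1 hA).of_inj i.hom.toLinearMap.toAddMonoidHom
      ((Rep.mono_iff_injective i).1 hi)
  · intro A A' f hf hA ih B i hi
    have h1 := ih (pullback f i) (pullback.fst f i) inferInstance
    have : Epi (pullback.snd f i) := inferInstance
    refine quot (ShortComplex.mk (kernel.ι (pullback.snd f i)) (pullback.snd f i) (by simp)) ?_
      (ih (kernel (pullback.snd f i)) (kernel.ι (pullback.snd f i) ≫ pullback.fst f i) inferInstance) h1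
    exact { exact := ShortComplex.exact_of_f_is_kernel _ (kernelIsKernel _) }
  · intro S hS h1 h3 B i hi
    have hm := hS.mono_f
    refine ext _ (sub_exact i S.g) ?_ (h3 _ (Abelian.image.ι (i ≫ S.g)) inferInstance)
    refine h1 _ (hS.exact.lift (kernel.ι (i ≫ S.g) ≫ i) (by simp [kernel.condition])) ?_
    have : Mono (hS.exact.lift (kernel.ι (i ≫ S.g) ≫ i) (by simp [kernel.condition]) ≫ S.f) := by
      rw [ShortComplex.Exact.lift_f]; infer_instance
    exact mono_of_mono _ S.f

/-- simplices of the classifying space as cocycles -/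
def X (A : Type) [AddCommGroup A] (n : ℕ) : Type :=
  {c : Fin (n + 1) → Fin (n + 1) → A // ∀ i j k, c i j + c j k = c i k}

namespace X
variable {A B C : Type} [AddCommGroup A] [AddCommGroup B] [AddCommGroup C] {n m l : ℕ}

@[ext] lemma ext {x y : X A n} (h : ∀ i j, x.1 i j = y.1 i j) : x = y :=
  Subtype.ext (funext fun i => funext fun j => h i j)

def pre (θ : Fin (m + 1) → Fin (n + 1)) (c : X A n) : X A m :=
  ⟨fun i j => c.1 (θ i) (θ j), fun _ _ _ => c.2 _ _ _⟩

def map (f : A →+ B) (c : X A n) : X B n :=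
  ⟨fun i j => f (c.1 i j), fun i j k => by rw [← map_add, c.2]⟩

@[simp] lemma pre_val (θ : Fin (m + 1) → Fin (n + 1)) (c : X A n) (i j) :
    (pre θ c).1 i j = c.1 (θ i) (θ j) := rfl
@[simp] lemma map_val (f : A →+ B) (c : X A n) (i j) : (map f c).1 i j = f (c.1 i j) := rfl

lemma self (c : X A n) (i) : c.1 i i = 0 := by
  have := c.2 i i i
  simpa using this

lemma sub (c : X A n) (i j k) : c.1 i k - c.1 i j = c.1 j k := by
  rw [← c.2 i j k]; abel

lemma neg (c : X A n) (i j) : - c.1 i j = c.1 j i := by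
  have := c.sub i j i
  rw [c.self] at this; simpa using this

/-- cocycle from a potential -/
def ofPot (u : Fin (n + 1) → A) : X A n :=
  ⟨fun i j => u j - u i, fun i j k => by
    show u j - u i + (u k - u j) = u k - u i
    abel⟩

@[simp] lemma ofPot_val (u : Fin (n + 1) → A) (i j) : (ofPot u).1 i j = u j - u i := rfl

end X

instance (A : Rep.{0} ℤ G) (n : ℕ) : MulAction G (X A n) where
  smul g c := X.map (A.ρ g).toAddMonoidHom c
  one_smul c := by
    apply X.ext; intro i j; show A.ρ 1 _ = _; simp
  mul_smul g h c := by
    apply X.ext; intro i j; show A.ρ (g * h) _ = A.ρ g (A.ρ h _); simp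

lemma X.smul_val (A : Rep.{0} ℤ G) {n : ℕ} (g : G) (c : X A n) (i j) :
    (g • c).1 i j = A.ρ g (c.1 i j) := rfl

def frMap {S T : Type} [MulAction G S] [MulAction G T] (f : S → T)
    (hf : ∀ (g : G) s, f (g • s) = g • f s) : fr (G := G) S ⟶ fr T :=
  mkHom (A := fr S) (B := fr T) (Finsupp.mapDomain.addMonoidHom f) (by
    intro g a
    show Finsupp.mapDomain f (Finsupp.mapDomain _ a) =
      Finsupp.mapDomain _ (Finsupp.mapDomain f a)
    rw [← Finsupp.mapDomain_comp, ← Finsupp.mapDomain_comp]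
    congr 1; funext s; exact hf g s)

lemma frMap_apply {S T : Type} [MulAction G S] [MulAction G T] (f : S → T)
    (hf : ∀ (g : G) s, f (g • s) = g • f s) (x : S →₀ ℤ) :
    (frMap f hf).hom x = Finsupp.mapDomain f x := rfl

lemma frMap_id {S : Type} [MulAction G S] (f : S → S)
    (hf : ∀ (g : G) s, f (g • s) = g • f s) (h : ∀ x, f x = x) : frMap f hf = 𝟙 _ := by
  apply hom_ext'
  intro x
  obtain rfl : f = id := funext h
  exact Finsupp.mapDomain_id

lemma frMap_comp {S T U : Type} [MulAction G S] [MulAction G T] [MulAction G U] (f : S → T)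
    (hf : ∀ (g : G) s, f (g • s) = g • f s) (f' : T → U)
    (hf' : ∀ (g : G) s, f' (g • s) = g • f' s) :
    frMap f hf ≫ frMap f' hf' = frMap (fun x => f' (f x)) (fun g s => by rw [hf, hf']) := by
  apply hom_ext'
  intro x
  exact (Finsupp.mapDomain_comp (f := f) (g := f')).symm

lemma frMap_congr {S T : Type} [MulAction G S] [MulAction G T] (f f' : S → T)
    (hf : ∀ (g : G) s, f (g • s) = g • f s) (hf' : ∀ (g : G) s, f' (g • s) = g • f' s)
    (h : ∀ x, f x = f' x) : frMap f hf = frMap f' hf' := by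
  obtain rfl : f = f' := funext h
  rfl

lemma X.pre_smul {A : Rep.{0} ℤ G} {m n : ℕ} (θ : Fin (m + 1) → Fin (n + 1)) (g : G) (c : X A n) :
    X.pre θ (g • c) = g • X.pre θ c := rfl

def SX (A : Rep.{0} ℤ G) : SimplicialObject (Rep.{0} ℤ G) where
  obj n := fr (X A n.unop.len)
  map θ := frMap (X.pre θ.unop.toOrderHom) (X.pre_smul _)
  map_id n := frMap_id _ _ (fun _ => rfl)
  map_comp θ θ' := by
    rw [frMap_comp]
    exact frMap_congr _ _ _ _ (fun _ => rfl)

def addHom {A B : Rep.{0} ℤ G} (f : A ⟶ B) : A →+ B := f.hom.toLinearMap.toAddMonoidHom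

@[simp] lemma addHom_apply {A B : Rep.{0} ℤ G} (f : A ⟶ B) (a : A) : addHom f a = f.hom a := rfl

lemma X.map_smul {A B : Rep.{0} ℤ G} {n : ℕ} (f : A ⟶ B) (g : G) (c : X A n) :
    X.map (addHom f) (g • c) = g • X.map (addHom f) c :=
  X.ext fun i j => Rep.hom_comm_apply f g (c.1 i j)

lemma SXF_nat {A B : Rep.{0} ℤ G} (f : A ⟶ B) {n m : ℕ} (θ : Fin (m + 1) → Fin (n + 1)) :
    frMap (G := G) (X.pre (A := A) θ) (X.pre_smul θ) ≫ frMap (X.map (addHom f)) (X.map_smul f) =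
    frMap (G := G) (X.map (addHom f)) (X.map_smul f) ≫ frMap (X.pre θ) (X.pre_smul θ) := by
  rw [frMap_comp, frMap_comp]
  exact frMap_congr _ _ _ _ (fun _ => rfl)

lemma SXF_comp {A B C : Rep.{0} ℤ G} (f : A ⟶ B) (g : B ⟶ C) (n : ℕ) :
    frMap (G := G) (S := X A n) (X.map (addHom (f ≫ g))) (X.map_smul (f ≫ g)) =
    frMap (G := G) (X.map (addHom f)) (X.map_smul f) ≫ frMap (X.map (addHom g)) (X.map_smul g) := by
  rw [frMap_comp]
  exact frMap_congr _ _ _ _ (fun _ => rfl)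

def SXF : Rep.{0} ℤ G ⥤ SimplicialObject (Rep.{0} ℤ G) where
  obj A := SX A
  map f :=
    { app := fun n => frMap (X.map (addHom f)) (X.map_smul f)
      naturality := fun n m θ => SXF_nat f _ }
  map_id A := NatTrans.ext (funext fun n =>
    frMap_id (S := X A n.unop.len) (X.map (addHom (𝟙 A))) (X.map_smul (𝟙 A)) (fun _ => rfl))
  map_comp f g := NatTrans.ext (funext fun n => SXF_comp f g _)

def K : Rep.{0} ℤ G ⥤ ChainComplex (Rep.{0} ℤ G) ℕ :=
  SXF ⋙ alternatingFaceMapComplex (Rep.{0} ℤ G)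

abbrev Hn (n : ℕ) : Rep.{0} ℤ G ⥤ Rep.{0} ℤ G :=
  K ⋙ HomologicalComplex.homologyFunctor (Rep.{0} ℤ G) (ComplexShape.down ℕ) n

/-- boundary operator on plain chains -/
def bd (A : Type) [AddCommGroup A] (n : ℕ) : (X A (n + 1) →₀ ℤ) →+ (X A n →₀ ℤ) :=
  ∑ i : Fin (n + 2), ((-1 : ℤ) ^ (i : ℕ)) • Finsupp.mapDomain.addMonoidHom (X.pre i.succAbove)

lemma bd_apply {A : Type} [AddCommGroup A] {n : ℕ} (x : X A (n + 1) →₀ ℤ) :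
    bd A n x = ∑ i : Fin (n + 2), ((-1 : ℤ) ^ (i : ℕ)) • Finsupp.mapDomain (X.pre i.succAbove) x := by
  simp [bd]

lemma sum_hom {A B : Rep.{0} ℤ G} {ι : Type} (s : Finset ι) (f : ι → (A ⟶ B)) (a : A) :
    (∑ i ∈ s, f i).hom a = ∑ i ∈ s, (f i).hom a := by
  classical
  induction s using Finset.induction_on with
  | empty => simp
  | insert i s hi ih => rw [Finset.sum_insert hi, Finset.sum_insert hi, ← ih]; rfl

lemma zsmul_hom {A B : Rep.{0} ℤ G} (c : ℤ) (f : A ⟶ B) (a : A) :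
    (c • f).hom a = c • f.hom a := map_zsmul
      ({ toFun := fun f => f.hom a, map_zero' := rfl, map_add' := fun _ _ => rfl } : (A ⟶ B) →+ B) c f

lemma K_X (A : Rep.{0} ℤ G) (n : ℕ) : (K.obj A).X n = fr (X A n) := rfl

lemma K_d (A : Rep.{0} ℤ G) (n : ℕ) (x : X A (n + 1) →₀ ℤ) :
    ((K.obj A).d (n + 1) n).hom x = bd A n x := by
  have h : (K.obj A).d (n + 1) n =
      ∑ i : Fin (n + 2), (-1 : ℤ) ^ (i : ℕ) • (SX A).δ i :=
    AlternatingFaceMapComplex.obj_d_eq (SX A) n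
  refine (congrArg (fun f => f.hom x) h).trans ?_
  refine (sum_hom (A := fr (X A (n + 1))) (B := fr (X A n)) Finset.univ _ x).trans ?_
  rw [bd_apply]
  refine Finset.sum_congr rfl fun i _ => ?_
  exact zsmul_hom (A := fr (X A (n + 1))) (B := fr (X A n)) _ _ x

lemma K_map {A B : Rep.{0} ℤ G} (f : A ⟶ B) (n : ℕ) :
    (K.map f).f n = frMap (X.map (addHom f)) (X.map_smul f) := rfl
end
end HB

namespace HB
section
section
open Limits
universe v u
variable {C : Type u} [Category.{v} C] [Abelian C] (P : ObjectProperty C) [P.IsSerreClass]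

lemma em_of_exact {S : ShortComplex C} (hS : S.Exact) (h : P S.X₃) : P.epiModSerre S.f := by
  have := hS.mono_cokernelDesc
  exact P.prop_of_mono (cokernel.desc S.f S.g S.zero) h

lemma prop_of_em {X Y : C} (f : X ⟶ Y) (hf : P.epiModSerre f) (h : P X) : P Y :=
  P.prop_X₂_of_exact (ShortComplex.exact_of_g_is_cokernel
    (ShortComplex.mk f (cokernel.π f) (by simp)) (cokernelIsCokernel f)) h hf

lemma em_of_comp {X Y Z : C} (f : X ⟶ Y) (g : Y ⟶ Z) (h : P.epiModSerre (f ≫ g)) :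
    P.epiModSerre g :=
  P.prop_of_epi (cokernel.map (f ≫ g) g f (𝟙 _) (by simp)) h

lemma em_of_comp_mono {X Y Z : C} (f : X ⟶ Y) (g : Y ⟶ Z) (h : P.epiModSerre (f ≫ g))
    (hg : P.monoModSerre g) : P.epiModSerre f :=
  P.prop_X₂_of_exact ((kernelCokernelCompSequence_exact f g).exact 2) hg h

lemma em_comp {X Y Z : C} (f : X ⟶ Y) (g : Y ⟶ Z) (hf : P.epiModSerre f)
    (hg : P.epiModSerre g) : P.epiModSerre (f ≫ g) :=
  P.epiModSerre.comp_mem _ _ hf hg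

lemma ker_of_em {W : C} {S : ShortComplex C} (hS : S.Exact) (f : W ⟶ S.X₁)
    (hf : P.epiModSerre f) (h : f ≫ S.f = 0) : P.monoModSerre S.g := by
  have e : Epi (kernel.lift S.g S.f S.zero) := hS.epi_kernelLift
  have h0 : f ≫ kernel.lift S.g S.f S.zero = 0 := by
    rw [← cancel_mono (kernel.ι S.g)]; simpa using h
  have : Epi (cokernel.desc f (kernel.lift S.g S.f S.zero) h0) := by
    have : Epi (cokernel.π f ≫ cokernel.desc f (kernel.lift S.g S.f S.zero) h0) := by
      rw [cokernel.π_desc]; exact e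
    exact epi_of_epi (cokernel.π f) _
  exact P.prop_of_epi (cokernel.desc f (kernel.lift S.g S.f S.zero) h0) hf

/-- resolution of a complex `Z` by complexes -/
structure Reso (C : Type u) [Category.{v} C] [Abelian C] where
  Z : ChainComplex C ℕ
  M : ℕ → ChainComplex C ℕ
  d : ∀ p, M (p + 1) ⟶ M p
  e : M 0 ⟶ Z
  e_epi : Epi e
  w0 : d 0 ≫ e = 0
  w : ∀ p, d (p + 1) ≫ d p = 0
  ex0 : (ShortComplex.mk _ _ w0).Exact
  ex : ∀ p, (ShortComplex.mk _ _ (w p)).Exact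

namespace Reso
variable (R : Reso C)

def shift : Reso C where
  Z := kernel R.e
  M p := R.M (p + 1)
  d p := R.d (p + 1)
  e := kernel.lift R.e (R.d 0) R.w0
  e_epi := R.ex0.epi_kernelLift
  w0 := by rw [← cancel_mono (kernel.ι R.e)]; simpa using R.w 0
  w p := R.w (p + 1)
  ex0 := by
    have h := R.ex 0
    have w : R.d (0 + 1) ≫ kernel.lift R.e (R.d 0) R.w0 = 0 := by
      rw [← cancel_mono (kernel.ι R.e)]; simpa using R.w 0
    let φ : ShortComplex.mk _ _ w ⟶ ShortComplex.mk _ _ (R.w 0) :=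
      { τ₁ := 𝟙 _, τ₂ := 𝟙 _, τ₃ := kernel.ι R.e }
    have h1 : Epi φ.τ₁ := by dsimp [φ]; infer_instance
    have h2 : IsIso φ.τ₂ := by dsimp [φ]; infer_instance
    have h3 : Mono φ.τ₃ := by dsimp [φ]; infer_instance
    exact (ShortComplex.exact_iff_of_epi_of_isIso_of_mono φ).2 h
  ex p := R.ex (p + 1)

lemma ses : (ShortComplex.mk (kernel.ι R.e) R.e (by simp)).ShortExact :=
  { exact := ShortComplex.exact_of_f_is_kernel _ (kernelIsKernel _)
    mono_f := by dsimp; infer_instance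
    epi_g := R.e_epi }

lemma epi_homology_zero {K L : ChainComplex C ℕ} (f : K ⟶ L) [Epi f] :
    Epi (HomologicalComplex.homologyMap f 0) := by
  have h : ∀ (K : ChainComplex C ℕ), IsIso (K.homologyι 0) := fun K =>
    K.isIso_homologyι 0 _ rfl (by
      have : ¬ (ComplexShape.down ℕ).Rel 0 ((ComplexShape.down ℕ).next 0) := by
        simp [ComplexShape.down]
      exact K.shape _ _ this)
  have hK := h K
  have hL := h L
  have e : Epi (K.homologyι 0 ≫ HomologicalComplex.opcyclesMap f 0) := by
    have : Epi (HomologicalComplex.opcyclesMap f 0) := by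
      have : Epi (K.pOpcycles 0 ≫ HomologicalComplex.opcyclesMap f 0) := by
        rw [HomologicalComplex.p_opcyclesMap]
        have : Epi (f.f 0) := inferInstance
        exact epi_comp _ _
      exact epi_of_epi (K.pOpcycles 0) _
    exact epi_comp _ _
  rw [← HomologicalComplex.homologyι_naturality] at e
  have : HomologicalComplex.homologyMap f 0 = (HomologicalComplex.homologyMap f 0 ≫ L.homologyι 0) ≫ inv (L.homologyι 0) := by
    rw [Category.assoc, IsIso.hom_inv_id, Category.comp_id]
  rw [this]; exact epi_comp _ _

lemma em_e (n : ℕ) : ∀ (R : Reso C), (∀ p m, m < n → P ((R.M p).homology m)) →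
    P.epiModSerre (HomologicalComplex.homologyMap R.e n) := by
  induction n with
  | zero =>
    intro R _
    have := R.e_epi
    have := epi_homology_zero R.e
    exact P.epiModSerre_of_epi _
  | succ n ih =>
    intro R h
    have h1 := ih R.shift (fun p m hm => h (p + 1) m (by omega))
    have h2 : P (R.shift.Z.homology n) := prop_of_em P _ h1 (h 1 n (by omega))
    exact em_of_exact P (R.ses.homology_exact₃ (n + 1) n rfl) h2

lemma prop_Z (n : ℕ) (h : ∀ p m, m < n → P ((R.M p).homology m)) (m : ℕ) (hm : m < n) :
    P (R.Z.homology m) :=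
  prop_of_em P _ (em_e P m R (fun p k hk => h p k (by omega))) (h 0 m hm)

lemma mono_e (n : ℕ) (h : ∀ p m, m < n → P ((R.M p).homology m))
    {W : C} (σ : W ⟶ (R.M 1).homology n) (hσ : P.epiModSerre σ)
    (h0 : σ ≫ HomologicalComplex.homologyMap (R.d 0) n = 0) :
    P.monoModSerre (HomologicalComplex.homologyMap R.e n) := by
  have h1 := em_e P n R.shift (fun p m hm => h (p + 1) m hm)
  refine ker_of_em P (R.ses.homology_exact₂ n) (σ ≫ HomologicalComplex.homologyMap R.shift.e n)
    (em_comp P _ _ hσ h1) ?_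
  have h3 : HomologicalComplex.homologyMap (kernel.lift R.e (R.d 0) R.w0) n ≫
      HomologicalComplex.homologyMap (kernel.ι R.e) n = HomologicalComplex.homologyMap (R.d 0) n := by
    rw [← HomologicalComplex.homologyMap_comp, kernel.lift_ι]
  refine (Category.assoc σ (HomologicalComplex.homologyMap (kernel.lift R.e (R.d 0) R.w0) n)
      (HomologicalComplex.homologyMap (kernel.ι R.e) n)).trans ?_
  rw [h3, h0]
end Reso
end
end
end HB

namespace HB
section
section
open Limits
attribute [local instance 10000] Rep.hV2
variable {π : Set ℕ}

/-- a representation from an additive action -/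
def repOf (V : Type) [AddCommGroup V] (act : G → V →+ V) (h1 : ∀ v, act 1 v = v)
    (hm : ∀ g h v, act (g * h) v = act g (act h v)) : Rep.{0} ℤ G :=
  Rep.of (k := ℤ) (G := G) (X := V)
    { toFun := fun g => (act g).toIntLinearMap
      map_one' := LinearMap.ext h1
      map_mul' := fun g h => LinearMap.ext (hm g h) }

def WS {B C : Rep.{0} ℤ G} (f : B ⟶ C) (p : ℕ) : AddSubgroup (Fin (p + 1) → B) where
  carrier := {b | ∀ i j, f.hom (b i) = f.hom (b j)}
  zero_mem' := fun i j => rfl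
  add_mem' := by
    intro a b ha hb i j
    show f.hom (a i + b i) = f.hom (a j + b j)
    rw [map_add, map_add, ha i j, hb i j]
  neg_mem' := by
    intro a ha i j
    show f.hom (- a i) = f.hom (- a j)
    rw [map_neg, map_neg, ha i j]

def W {B C : Rep.{0} ℤ G} (f : B ⟶ C) (p : ℕ) : Rep.{0} ℤ G :=
  repOf (WS f p)
    (fun g =>
      { toFun := fun b => ⟨fun i => B.ρ g (b.1 i), fun i j => by
          rw [Rep.hom_comm_apply, Rep.hom_comm_apply, b.2 i j]⟩
        map_zero' := Subtype.ext (funext fun i => map_zero (B.ρ g))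
        map_add' := fun a b => Subtype.ext (funext fun i => map_add (B.ρ g) _ _) })
    (fun v => Subtype.ext (funext fun i => by
      show B.ρ 1 (v.1 i) = _
      simp))
    (fun g h v => Subtype.ext (funext fun i => by
      show B.ρ (g * h) (v.1 i) = B.ρ g (B.ρ h (v.1 i))
      simp))

namespace W
variable {A B C : Rep.{0} ℤ G} (f : B ⟶ C)

def mk {f : B ⟶ C} {p : ℕ} (b : Fin (p + 1) → B) (h : ∀ i j, f.hom (b i) = f.hom (b j)) : W f p :=
  (⟨b, h⟩ : WS f p)
def v {f : B ⟶ C} {p : ℕ} (b : W f p) : Fin (p + 1) → B := (show WS f p from b).1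
lemma v_prop {f : B ⟶ C} {p : ℕ} (b : W f p) (i j) : f.hom (v b i) = f.hom (v b j) :=
  (show WS f p from b).2 i j
lemma ext {f : B ⟶ C} {p : ℕ} {a b : W f p} (h : ∀ i, v a i = v b i) : a = b :=
  Subtype.ext (funext h)
lemma v_add {f : B ⟶ C} {p : ℕ} (a b : W f p) (i) : v (a + b) i = v a i + v b i := rfl
lemma v_zero {f : B ⟶ C} {p : ℕ} (i) : v (0 : W f p) i = 0 := rfl
lemma v_ρ {f : B ⟶ C} {p : ℕ} (g : G) (a : W f p) (i) : v ((W f p).ρ g a) i = B.ρ g (v a i) := rfl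
@[simp] lemma v_mk {f : B ⟶ C} {p : ℕ} (b : Fin (p + 1) → B) (h) (i) : v (mk (f := f) b h) i = b i := rfl

def pre {p q : ℕ} (θ : Fin (q + 1) → Fin (p + 1)) : W f p ⟶ W f q :=
  mkHom (A := W f p) (B := W f q)
    { toFun := fun b => mk (fun i => v b (θ i)) (fun i j => v_prop b _ _)
      map_zero' := rfl
      map_add' := fun _ _ => rfl } (fun _ _ => rfl)

lemma pre_v {p q : ℕ} (θ : Fin (q + 1) → Fin (p + 1)) (b : W f p) (i) :
    v ((pre f θ).hom b) i = v b (θ i) := rfl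

def aug (p : ℕ) : W f p ⟶ C :=
  mkHom (A := W f p) (B := C)
    { toFun := fun b => f.hom (v b 0)
      map_zero' := map_zero f.hom
      map_add' := fun _ _ => map_add f.hom _ _ } (fun g b => Rep.hom_comm_apply f g _)

lemma aug_apply (p : ℕ) (b : W f p) : (aug f p).hom b = f.hom (v b 0) := rfl

def toW : B ⟶ W f 0 :=
  mkHom (A := B) (B := W f 0)
    { toFun := fun b => mk (fun _ => b) (fun _ _ => rfl)
      map_zero' := rfl
      map_add' := fun _ _ => rfl } (fun _ _ => rfl)

def ofW : W f 0 ⟶ B :=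
  mkHom (A := W f 0) (B := B)
    { toFun := fun b => v b 0
      map_zero' := rfl
      map_add' := fun _ _ => rfl } (fun _ _ => rfl)

def iso : B ≅ W f 0 where
  hom := toW f
  inv := ofW f
  hom_inv_id := hom_ext' fun _ => rfl
  inv_hom_id := hom_ext' fun b => ext fun i => by
    obtain rfl : i = 0 := Fin.ext (by omega)
    rfl

lemma iso_aug : (iso f).hom ≫ aug f 0 = f := rfl

def spl : SimplicialObject (Rep.{0} ℤ G) where
  obj n := W f n.unop.len
  map θ := pre f θ.unop.toOrderHom
  map_id _ := rfl
  map_comp _ _ := rfl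

/-- set-theoretic section on simplices -/
lemma exists_sec (hf : Function.Surjective f.hom) (q : ℕ) :
    ∃ sec : X C q → X B q, ∀ c, X.map (addHom f) (sec c) = c := by
  choose s hs using hf
  refine ⟨fun c => X.ofPot (fun j => s (c.1 0 j)), fun c => X.ext fun i j => ?_⟩
  show f.hom (s (c.1 0 j) - s (c.1 0 i)) = _
  rw [map_sub, hs, hs, c.sub]

variable {f}
def cons {p : ℕ} (a : B) (b : W f p) (h : f.hom a = f.hom (v b 0)) : W f (p + 1) :=
  mk (Fin.cons a (v b)) (by
    have : ∀ i, f.hom (Fin.cons (α := fun _ => B) a (v b) i) = f.hom (v b 0) := by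
      intro i
      refine Fin.cases ?_ (fun i => ?_) i
      · exact h
      · exact v_prop b i 0
    intro i j
    rw [this, this])

variable {q : ℕ} (sec : X C q → X B q) (hs : ∀ c, X.map (addHom f) (sec c) = c)

def ht {p : ℕ} (w : X (W f p) q) : X (W f (p + 1)) q :=
  ⟨fun i j => cons ((sec (X.map (addHom (aug f p)) w)).1 i j) (w.1 i j)
      (congrArg (fun x => x.1 i j) (hs (X.map (addHom (aug f p)) w))), by
    intro i j k
    apply ext
    intro l
    refine Fin.cases ?_ (fun l => ?_) l
    · exact (sec (X.map (addHom (aug f p)) w)).2 i j k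
    · exact congrArg (fun x => v x l) (w.2 i j k)⟩

def ht0 (c : X C q) : X (W f 0) q := X.map (addHom (toW f)) (sec c)

lemma aug_ht0 (sec : X C q → X B q) (hs : ∀ c, X.map (addHom f) (sec c) = c) (c : X C q) :
    X.map (addHom (aug f 0)) (ht0 sec c) = c := hs c

lemma drop0_ht {p : ℕ} (w : X (W f p) q) :
    X.map (addHom (pre f (Fin.succAbove 0))) (ht sec hs w) = w := rfl

lemma drop1_ht (w : X (W f 0) q) :
    X.map (addHom (pre f (Fin.succAbove 1))) (ht sec hs w) =
      ht0 sec (X.map (addHom (aug f 0)) w) := by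
  refine X.ext fun i j => ext fun l => ?_
  obtain rfl : l = 0 := Fin.ext (by omega)
  rfl

lemma dropS_ht {p : ℕ} (k : Fin (p + 2)) (w : X (W f (p + 1)) q) :
    X.map (addHom (pre f (Fin.succAbove k.succ))) (ht sec hs w) =
      ht sec hs (X.map (addHom (pre f (Fin.succAbove k))) w) := by
  have e : X.map (addHom (aug f p)) (X.map (addHom (pre f (Fin.succAbove k))) w) =
      X.map (addHom (aug f (p + 1))) w := by
    refine X.ext fun i j => ?_
    exact v_prop (w.1 i j) _ _
  refine X.ext fun i j => ext fun l => ?_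
  refine Fin.cases ?_ (fun l => ?_) l
  · exact congrArg (fun x => (sec x).1 i j) e.symm
  · show v ((ht sec hs w).1 i j) (k.succ.succAbove l.succ) = _
    rw [Fin.succ_succAbove_succ]
    rfl

/-- the simplicial chain complex -/
def cplx (f : B ⟶ C) : ChainComplex (ChainComplex (Rep.{0} ℤ G) ℕ) ℕ :=
  (alternatingFaceMapComplex _).obj (((SimplicialObject.whiskering _ _).obj K).obj (spl f))

lemma cplx_X (f : B ⟶ C) (p : ℕ) : (cplx f).X p = K.obj (W f p) := rfl

lemma cplx_d (f : B ⟶ C) (p : ℕ) : (cplx f).d (p + 1) p =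
    ∑ i : Fin (p + 2), (-1 : ℤ) ^ (i : ℕ) • K.map (pre f i.succAbove) :=
  AlternatingFaceMapComplex.obj_d_eq _ p

lemma sum_f {K L : ChainComplex (Rep.{0} ℤ G) ℕ} {ι : Type} (s : Finset ι) (f : ι → (K ⟶ L)) (q : ℕ) :
    (∑ i ∈ s, f i).f q = ∑ i ∈ s, (f i).f q := by
  classical
  induction s using Finset.induction_on with
  | empty => simp
  | insert i s hi ih => rw [Finset.sum_insert hi, Finset.sum_insert hi, ← ih]; rfl

lemma zsmul_f {K L : ChainComplex (Rep.{0} ℤ G) ℕ} (c : ℤ) (f : K ⟶ L) (q : ℕ) :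
    (c • f).f q = c • f.f q := map_zsmul
      ({ toFun := fun f => f.f q, map_zero' := rfl, map_add' := fun _ _ => rfl } :
        (K ⟶ L) →+ (K.X q ⟶ L.X q)) c f

def dd (f : B ⟶ C) (p q : ℕ) (x : X (W f (p + 1)) q →₀ ℤ) : X (W f p) q →₀ ℤ :=
  ∑ i : Fin (p + 2), (-1 : ℤ) ^ (i : ℕ) •
      Finsupp.mapDomain (X.map (addHom (pre f i.succAbove))) x

lemma cplx_d_apply (f : B ⟶ C) (p q : ℕ) (x : X (W f (p + 1)) q →₀ ℤ) :
    (((cplx f).d (p + 1) p).f q).hom x = dd f p q x := by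
  have h := (congrArg (fun φ => φ.f q) (cplx_d f p)).trans (sum_f _ _ q)
  refine (congrArg (fun φ => φ.hom x) h).trans ?_
  refine (sum_hom (A := fr (X (W f (p + 1)) q)) (B := fr (X (W f p) q)) Finset.univ _ x).trans ?_
  refine Finset.sum_congr rfl fun i _ => ?_
  refine (congrArg (fun φ => φ.hom x) (zsmul_f ((-1 : ℤ) ^ (i : ℕ)) (K.map (pre f i.succAbove)) q)).trans ?_
  exact zsmul_hom (A := fr (X (W f (p + 1)) q)) (B := fr (X (W f p) q)) _ _ x

lemma cplx_w0 (f : B ⟶ C) : (cplx f).d 1 0 ≫ K.map (aug f 0) = 0 := by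
  have e : pre f (Fin.succAbove 1) ≫ aug f 0 = pre f (Fin.succAbove 0) ≫ aug f 0 :=
    hom_ext' fun b => v_prop (p := 1) b _ _
  refine (congrArg (· ≫ K.map (aug f 0)) (cplx_d f 0)).trans ?_
  show (∑ i : Fin 2, (-1 : ℤ) ^ (i : ℕ) • K.map (pre f i.succAbove)) ≫ K.map (aug f 0) = 0
  rw [Fin.sum_univ_two, Preadditive.add_comp]
  simp only [Fin.val_zero, Fin.val_one, pow_zero, pow_one, one_smul, neg_smul, Preadditive.neg_comp]
  rw [← K.map_comp, ← K.map_comp, e, add_neg_cancel]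

include hs in
lemma hty0 (x : X (W f 0) q →₀ ℤ) :
    dd f 0 q (Finsupp.mapDomain (ht sec hs) x) =
      x - Finsupp.mapDomain (ht0 sec) (Finsupp.mapDomain (X.map (addHom (aug f 0))) x) := by
  rw [dd, Fin.sum_univ_two, ← Finsupp.mapDomain_comp, ← Finsupp.mapDomain_comp, ← Finsupp.mapDomain_comp]
  have e0 : X.map (addHom (pre f (Fin.succAbove 0))) ∘ (ht sec hs) = (id : X (W f 0) q → _) :=
    funext fun w => drop0_ht sec hs w
  have e1 : X.map (addHom (pre f (Fin.succAbove 1))) ∘ (ht sec hs) =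
      ht0 sec ∘ (X.map (addHom (aug f 0)) : X (W f 0) q → _) :=
    funext fun w => drop1_ht sec hs w
  rw [e0, e1, Finsupp.mapDomain_id]
  simp [sub_eq_add_neg]

include hs in
lemma htyS (p : ℕ) (x : X (W f (p + 1)) q →₀ ℤ) :
    dd f (p + 1) q (Finsupp.mapDomain (ht sec hs) x) =
      x - Finsupp.mapDomain (ht sec hs) (dd f p q x) := by
  rw [dd, dd, Fin.sum_univ_succ]
  have e0 : X.map (addHom (pre f (Fin.succAbove 0))) ∘ (ht sec hs) = (id : X (W f (p + 1)) q → _) :=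
    funext fun w => drop0_ht sec hs w
  have e1 : ∀ i : Fin (p + 2), X.map (addHom (pre f (Fin.succAbove i.succ))) ∘ (ht sec hs) =
      ht sec hs ∘ (X.map (addHom (pre f i.succAbove)) : X (W f (p + 1)) q → _) :=
    fun i => funext fun w => dropS_ht sec hs i w
  rw [← Finsupp.mapDomain_comp, e0, Finsupp.mapDomain_id, sub_eq_add_neg]
  congr 1
  · simp
  rw [Finsupp.mapDomain_finset_sum, ← Finset.sum_neg_distrib]
  refine Finset.sum_congr rfl fun i _ => ?_
  rw [Finsupp.mapDomain_smul, ← Finsupp.mapDomain_comp, ← Finsupp.mapDomain_comp, Fin.val_succ, pow_succ, e1]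
  simp

lemma cplx_ex0 (f : B ⟶ C) (hf : Function.Surjective f.hom) :
    (ShortComplex.mk _ _ (cplx_w0 f)).Exact := by
  refine HomologicalComplex.exact_of_degreewise_exact _ fun q => ?_
  obtain ⟨sec, hs⟩ := exists_sec f hf q
  rw [exact_iff]
  intro x hx
  refine ⟨(Finsupp.mapDomain (ht sec hs) (x : X (W f 0) q →₀ ℤ) : X (W f 1) q →₀ ℤ), ?_⟩
  refine (cplx_d_apply f 0 q _).trans ((hty0 sec hs x).trans ?_)
  have : Finsupp.mapDomain (X.map (addHom (aug f 0))) (x : X (W f 0) q →₀ ℤ) = 0 := hx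
  rw [this, Finsupp.mapDomain_zero]
  exact sub_zero (x : X (W f 0) q →₀ ℤ)

lemma cplx_ex (f : B ⟶ C) (hf : Function.Surjective f.hom) (p : ℕ) :
    (ShortComplex.mk _ _ ((cplx f).d_comp_d (p + 2) (p + 1) p)).Exact := by
  refine HomologicalComplex.exact_of_degreewise_exact _ fun q => ?_
  obtain ⟨sec, hs⟩ := exists_sec f hf q
  rw [exact_iff]
  intro x hx
  refine ⟨(Finsupp.mapDomain (ht sec hs) (x : X (W f (p + 1)) q →₀ ℤ) : X (W f (p + 2)) q →₀ ℤ), ?_⟩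
  refine (cplx_d_apply f (p + 1) q _).trans ((htyS sec hs p x).trans ?_)
  have : dd f p q (x : X (W f (p + 1)) q →₀ ℤ) = 0 := (cplx_d_apply f p q x).symm.trans hx
  rw [this, Finsupp.mapDomain_zero]
  exact sub_zero (x : X (W f (p + 1)) q →₀ ℤ)

lemma epi_aug (f : B ⟶ C) (hf : Function.Surjective f.hom) : Epi (K.map (aug f 0)) := by
  have : ∀ q, Epi ((K.map (aug f 0)).f q) := by
    intro q
    obtain ⟨sec, hs⟩ := exists_sec f hf q
    rw [Rep.epi_iff_surjective]
    intro x
    refine ⟨(Finsupp.mapDomain (ht0 sec) (x : X C q →₀ ℤ) : X (W f 0) q →₀ ℤ), ?_⟩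
    refine (Finsupp.mapDomain_comp (f := ht0 sec) (g := X.map (addHom (aug f 0)))).symm.trans ?_
    have e : X.map (addHom (aug f 0)) ∘ ht0 sec = (id : X C q → _) :=
      funext fun c => aug_ht0 sec hs c
    rw [e]
    exact Finsupp.mapDomain_id
  exact HomologicalComplex.epi_of_epi_f _ this

def reso (f : B ⟶ C) (hf : Function.Surjective f.hom) : Reso (Rep.{0} ℤ G) where
  Z := K.obj C
  M p := K.obj (W f p)
  d p := (cplx f).d (p + 1) p
  e := K.map (aug f 0)
  e_epi := epi_aug f hf
  w0 := cplx_w0 f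
  w p := (cplx f).d_comp_d _ _ _
  ex0 := cplx_ex0 f hf
  ex p := cplx_ex f hf p

end W

/-- the key property -/
def SS (π : Set ℕ) (A : Rep.{0} ℤ G) : Prop :=
  ∀ (E B : Rep.{0} ℤ G) (r : E ⟶ B) (s : B ⟶ E) (ι : A ⟶ E), s ≫ r = 𝟙 _ →
    Function.Injective ι.hom → (∀ e, r.hom e = 0 ↔ ∃ a, ι.hom a = e) →
    ∀ n, (∀ m, m < n → cls G π ((Hn m).obj B)) → (cls G π).epiModSerre ((Hn n).map s)

section
variable {A B C : Rep.{0} ℤ G} (f : B ⟶ C) (ι : A ⟶ B) (hι : Function.Injective ι.hom)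
  (hk : ∀ b, f.hom b = 0 ↔ ∃ a, ι.hom a = b) (hA : SS π A)

def Wι (hk : ∀ b, f.hom b = 0 ↔ ∃ a, ι.hom a = b) (p : ℕ) : A ⟶ W f (p + 1) :=
  mkHom (A := A) (B := W f (p + 1))
    { toFun := fun a => W.cons (ι.hom a) 0 (((hk _).2 ⟨a, rfl⟩).trans (map_zero f.hom).symm)
      map_zero' := W.ext fun i => by
        refine Fin.cases ?_ (fun i => ?_) i
        · exact map_zero ι.hom
        · rfl
      map_add' := fun a b => W.ext fun i => by
        refine Fin.cases ?_ (fun i => ?_) i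
        · exact map_add ι.hom _ _
        · exact (add_zero (0 : B)).symm }
    (fun g a => W.ext fun i => by
        refine Fin.cases ?_ (fun i => ?_) i
        · exact Rep.hom_comm_apply ι g a
        · exact (map_zero (B.ρ g)).symm)

include hι hk hA in
lemma em_deg (p n : ℕ) (h : ∀ m, m < n → cls G π ((Hn m).obj (W f p))) :
    (cls G π).epiModSerre ((Hn n).map (W.pre f (Fin.predAbove 0 : Fin (p + 1 + 1) → Fin (p + 1)))) := by
  refine hA _ _ (W.pre f Fin.succ) _ (Wι f ι hk p) (hom_ext' fun b => W.ext fun i => ?_) ?_ ?_ n h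
  · show W.v b (Fin.predAbove 0 i.succ) = W.v b i
    simp
  · intro a a' h
    exact hι (congrArg (fun x => W.v (f := f) (p := p + 1) x 0) h)
  · intro e
    constructor
    · intro h
      have h1 : ∀ i : Fin (p + 1), W.v e i.succ = 0 := fun i =>
        congrArg (fun x => W.v (f := f) (p := p) x i) h
      have h2 : f.hom (W.v e 0) = 0 := by
        rw [W.v_prop e 0 (Fin.succ 0), h1, map_zero]
      obtain ⟨a, ha⟩ := (hk _).1 h2
      refine ⟨a, W.ext fun i => ?_⟩
      refine Fin.cases ?_ (fun i => ?_) i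
      · exact ha
      · exact (h1 i).symm
    · rintro ⟨a, rfl⟩
      rfl

include hι hk hA in
lemma prop_W (p n : ℕ) (h : ∀ m, m < n → cls G π ((Hn m).obj B)) :
    ∀ m, m < n → cls G π ((Hn m).obj (W f p)) := by
  induction p with
  | zero => exact fun m hm => (cls G π).prop_of_iso ((Hn m).mapIso (W.iso f)) (h m hm)
  | succ p ih =>
    intro m hm
    exact prop_of_em _ _ (em_deg f ι hι hk hA p m (fun k hk => ih k (by omega))) (ih m hm)

variable (hf : Function.Surjective f.hom)
include hι hk hA hf in
lemma lemD_prop (n : ℕ) (h : ∀ m, m < n → cls G π ((Hn m).obj B)) :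
    ∀ m, m < n → cls G π ((Hn m).obj C) := by
  intro m hm
  exact Reso.prop_Z (cls G π) (W.reso f hf) n (fun p m hm => prop_W f ι hι hk hA p n h m hm) m hm

include hι hk hA hf in
lemma lemD_em (n : ℕ) (h : ∀ m, m < n → cls G π ((Hn m).obj B)) :
    (cls G π).epiModSerre ((Hn n).map f) := by
  have h1 : (cls G π).epiModSerre ((Hn n).map (W.aug f 0)) :=
    Reso.em_e (cls G π) n (W.reso f hf) (fun p m hm => prop_W f ι hι hk hA p n h m hm)
  have h2 := em_comp _ ((Hn n).map (W.iso f).hom) _ ((cls G π).epiModSerre_of_epi _) h1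
  rwa [← (Hn n).map_comp, W.iso_aug] at h2

lemma diag_d (n : ℕ) : (Hn n).map (W.pre f (Fin.predAbove 0 : Fin (0 + 1 + 1) → Fin (0 + 1))) ≫
    HomologicalComplex.homologyMap ((W.cplx f).d 1 0) n = 0 := by
  refine (HomologicalComplex.homologyMap_comp (K.map (W.pre f (Fin.predAbove 0 : Fin (0 + 1 + 1) → Fin (0 + 1)))) ((W.cplx f).d 1 0) n).symm.trans ?_
  have : K.map (W.pre f (Fin.predAbove 0 : Fin (0 + 1 + 1) → Fin (0 + 1))) ≫ ((W.cplx f).d 1 0) = 0 := by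
    refine (congrArg (K.map _ ≫ ·) (W.cplx_d f 0)).trans ?_
    show K.map _ ≫ (∑ i : Fin 2, (-1 : ℤ) ^ (i : ℕ) • K.map (W.pre f i.succAbove)) = 0
    rw [Fin.sum_univ_two, Preadditive.comp_add]
    simp only [Fin.val_zero, Fin.val_one, pow_zero, pow_one, one_smul, neg_smul, Preadditive.comp_neg]
    rw [← K.map_comp, ← K.map_comp, add_neg_eq_zero]
    congr 1
    refine hom_ext' fun b => W.ext fun i => congrArg (W.v b) (Fin.ext (by omega))
  rw [this]
  exact HomologicalComplex.homologyMap_zero _ _ _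

include hι hk hA hf in
lemma lemD_mono (n : ℕ) (h : ∀ m, m < n → cls G π ((Hn m).obj B)) :
    (cls G π).monoModSerre ((Hn n).map f) := by
  have h1 : (cls G π).monoModSerre ((Hn n).map (W.aug f 0)) :=
    Reso.mono_e (cls G π) (W.reso f hf) n (fun p m hm => prop_W f ι hι hk hA p n h m hm) _
      (em_deg f ι hι hk hA 0 n (fun m hm => prop_W f ι hι hk hA 0 n h m hm)) (diag_d f n)
  have h2 := (cls G π).monoModSerre.comp_mem ((Hn n).map (W.iso f).hom) _
    ((cls G π).monoModSerre_of_mono _) h1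
  rwa [← (Hn n).map_comp, W.iso_aug] at h2

end
end
end
end HB

namespace HB
section
section
open Limits
attribute [local instance 10000] Rep.hV2
variable {π : Set ℕ}

def prodRep (B A : Rep.{0} ℤ G) : Rep.{0} ℤ G :=
  repOf (B × A) (fun g => AddMonoidHom.prodMap (B.ρ g).toAddMonoidHom (A.ρ g).toAddMonoidHom)
    (fun v => Prod.ext (by show B.ρ 1 v.1 = _; simp) (by show A.ρ 1 v.2 = _; simp))
    (fun g h v => Prod.ext (by show B.ρ (g * h) v.1 = B.ρ g (B.ρ h v.1); simp)
      (by show A.ρ (g * h) v.2 = A.ρ g (A.ρ h v.2); simp))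

def pinl (B A : Rep.{0} ℤ G) : B ⟶ prodRep B A :=
  mkHom (A := B) (B := prodRep B A) (AddMonoidHom.inl B A)
    (fun g _ => Prod.ext rfl (map_zero (A.ρ g)).symm)
def pinr (B A : Rep.{0} ℤ G) : A ⟶ prodRep B A :=
  mkHom (A := A) (B := prodRep B A) (AddMonoidHom.inr B A)
    (fun g _ => Prod.ext (map_zero (B.ρ g)).symm rfl)
def pfst (B A : Rep.{0} ℤ G) : prodRep B A ⟶ B :=
  mkHom (A := prodRep B A) (B := B) (AddMonoidHom.fst B A) (fun _ _ => rfl)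
def plift {E B A : Rep.{0} ℤ G} (f : E ⟶ B) (g : E ⟶ A) : E ⟶ prodRep B A :=
  mkHom (A := E) (B := prodRep B A) ((addHom f).prod (addHom g))
    (fun h a => Prod.ext (Rep.hom_comm_apply f h a) (Rep.hom_comm_apply g h a))
def pdesc {E B A : Rep.{0} ℤ G} (f : B ⟶ E) (g : A ⟶ E) : prodRep B A ⟶ E :=
  mkHom (A := prodRep B A) (B := E) ((addHom f).coprod (addHom g))
    (fun h a => by
      show f.hom (B.ρ h a.1) + g.hom (A.ρ h a.2) = E.ρ h (f.hom a.1 + g.hom a.2)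
      rw [map_add, Rep.hom_comm_apply, Rep.hom_comm_apply])

lemma pinl_em {A B : Rep.{0} ℤ G} (hA : SS π A) (n : ℕ)
    (h : ∀ m, m < n → cls G π ((Hn m).obj B)) : (cls G π).epiModSerre ((Hn n).map (pinl B A)) := by
  refine hA _ _ (pfst B A) (pinl B A) (pinr B A) rfl ?_ ?_ n h
  · intro a a' h
    exact congrArg (fun x : B × A => x.2) h
  · intro e
    constructor
    · intro h
      exact ⟨(show B × A from e).2, Prod.ext (show (0 : B) = _ from Eq.symm h) rfl⟩
    · rintro ⟨a, rfl⟩; rfl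

lemma exists_retr {E B A : Rep.{0} ℤ G} (r : E ⟶ B) (s : B ⟶ E) (ι : A ⟶ E) (h : s ≫ r = 𝟙 _)
    (hι : Function.Injective ι.hom) (hk : ∀ e, r.hom e = 0 ↔ ∃ a, ι.hom a = e) :
    ∃ a : E ⟶ A, (∀ e, ι.hom (a.hom e) = e - s.hom (r.hom e)) ∧ (∀ x, a.hom (ι.hom x) = x) ∧
      ∀ b, a.hom (s.hom b) = 0 := by
  have hrs : ∀ b, r.hom (s.hom b) = b := fun b => congrArg (fun f => f.hom b) h
  have h0 : ∀ e, ∃ x, ι.hom x = e - s.hom (r.hom e) := fun e => (hk _).1 (by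
    rw [map_sub, hrs, sub_self])
  choose a ha using h0
  refine ⟨mkHom (A := E) (B := A)
    { toFun := a
      map_zero' := hι (by rw [ha]; simp)
      map_add' := fun x y => hι (by rw [map_add, ha, ha, ha]; simp only [map_add]; abel) }
    (fun g x => hι (by
      show ι.hom (a _) = ι.hom (A.ρ g (a x))
      rw [Rep.hom_comm_apply, ha, ha, Rep.hom_comm_apply, Rep.hom_comm_apply, map_sub])),
    ha, ?_, ?_⟩
  · intro x
    apply hι
    show ι.hom (a _) = _
    rw [ha, (hk _).2 ⟨x, rfl⟩, map_zero, sub_zero]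
  · intro b
    apply hι
    show ι.hom (a _) = _
    rw [ha, hrs, sub_self, map_zero]

lemma SS_ext (S : ShortComplex (Rep.{0} ℤ G)) (hS : S.ShortExact) (h1 : SS π S.X₁)
    (h3 : SS π S.X₃) : SS π S.X₂ := by
  intro E B r s ι hsr hι hk n
  obtain ⟨hex, hinj, hsurj⟩ := (shortExact_iff S).1 hS
  have hrs : ∀ b, r.hom (s.hom b) = b := fun b => congrArg (fun f => f.hom b) hsr
  have hfg : ∀ x, S.g.hom (S.f.hom x) = 0 := fun x => congrArg (fun f => f.hom x) S.zero
  obtain ⟨a, ha1, ha2, ha3⟩ := exists_retr r s ι hsr hι hk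
  have hrι : ∀ x, r.hom (ι.hom x) = 0 := fun x => (hk _).2 ⟨x, rfl⟩
  induction n using Nat.strong_induction_on with
  | _ n ih =>
  intro hB
  have hE : ∀ m, m < n → cls G π ((Hn m).obj E) := fun m hm =>
    prop_of_em _ _ (ih m hm (fun k hk => hB k (by omega))) (hB m hm)
  let q : E ⟶ prodRep B S.X₃ := plift r (a ≫ S.g)
  have hq : Function.Surjective q.hom := by
    intro e
    obtain ⟨x, hx⟩ := hsurj (show B × S.X₃ from e).2
    refine ⟨s.hom (show B × S.X₃ from e).1 + ι.hom x, Prod.ext ?_ ?_⟩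
    · show r.hom (_ + _) = _
      rw [map_add, hrs, hrι, add_zero]
    · show S.g.hom (a.hom (_ + _)) = _
      rw [map_add, ha3, ha2, zero_add]
      exact hx
  have hkq : ∀ e, q.hom e = 0 ↔ ∃ x, (S.f ≫ ι).hom x = e := by
    intro e
    constructor
    · intro h
      have e1 : r.hom e = 0 := congrArg (fun x : B × S.X₃ => x.1) h
      have e2 : S.g.hom (a.hom e) = 0 := congrArg (fun x : B × S.X₃ => x.2) h
      obtain ⟨x, hx⟩ := hex _ e2
      refine ⟨x, ?_⟩
      show ι.hom (S.f.hom x) = e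
      rw [hx, ha1, e1, map_zero, sub_zero]
    · rintro ⟨x, rfl⟩
      refine Prod.ext (hrι _) ?_
      show S.g.hom (a.hom (ι.hom (S.f.hom x))) = 0
      rw [ha2, hfg]
  have hm := lemD_mono (π := π) q (S.f ≫ ι) (fun x y h => hinj (hι h)) hkq h1 hq n hE
  have he := pinl_em (π := π) h3 n hB
  have : s ≫ q = pinl B S.X₃ := hom_ext' fun b => Prod.ext (hrs b) (by
    show S.g.hom (a.hom (s.hom b)) = 0
    rw [ha3, map_zero])
  rw [← this, (Hn n).map_comp] at he
  exact em_of_comp_mono _ _ _ he hm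

lemma SS_quot (S : ShortComplex (Rep.{0} ℤ G)) (hS : S.ShortExact) (h1 : SS π S.X₁)
    (h2 : SS π S.X₂) : SS π S.X₃ := by
  intro E B r s ι hsr hι hk n hB
  obtain ⟨hex, hinj, hsurj⟩ := (shortExact_iff S).1 hS
  have hrs : ∀ b, r.hom (s.hom b) = b := fun b => congrArg (fun f => f.hom b) hsr
  have hfg : ∀ x, S.g.hom (S.f.hom x) = 0 := fun x => congrArg (fun f => f.hom x) S.zero
  obtain ⟨a, ha1, ha2, ha3⟩ := exists_retr r s ι hsr hι hk
  have hrι : ∀ x, r.hom (ι.hom x) = 0 := fun x => (hk _).2 ⟨x, rfl⟩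
  have hE : ∀ m, m < n → cls G π ((Hn m).obj (prodRep B S.X₂)) := fun m hm =>
    prop_of_em _ _ (pinl_em h2 m (fun k hk => hB k (by omega))) (hB m hm)
  let q : prodRep B S.X₂ ⟶ E := pdesc s (S.g ≫ ι)
  have hq : Function.Surjective q.hom := by
    intro e
    obtain ⟨x, hx⟩ := hsurj (a.hom e)
    refine ⟨((r.hom e, x) : B × S.X₂), ?_⟩
    show s.hom (r.hom e) + ι.hom (S.g.hom x) = e
    rw [hx, ha1]; abel
  have hkq : ∀ e, q.hom e = 0 ↔ ∃ x, (S.f ≫ pinr B S.X₂).hom x = e := by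
    intro e
    constructor
    · intro h
      have h : s.hom (show B × S.X₂ from e).1 + ι.hom (S.g.hom (show B × S.X₂ from e).2) = 0 := h
      have e1 : (show B × S.X₂ from e).1 = 0 := by
        have := congrArg r.hom h
        rwa [map_add, hrs, hrι, map_zero, add_zero] at this
      rw [e1, map_zero, zero_add] at h
      have e2 : S.g.hom (show B × S.X₂ from e).2 = 0 := hι (by rw [h, map_zero])
      obtain ⟨x, hx⟩ := hex _ e2
      exact ⟨x, Prod.ext e1.symm hx⟩
    · rintro ⟨x, rfl⟩
      show s.hom 0 + ι.hom (S.g.hom (S.f.hom x)) = 0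
      rw [hfg, map_zero, map_zero, add_zero]
  have he := lemD_em (π := π) q (S.f ≫ pinr B S.X₂)
    (fun x y h => hinj (congrArg (fun x : B × S.X₂ => x.2) h)) hkq h1 hq n hE
  have h3 := em_comp _ _ _ (pinl_em (π := π) h2 n hB) he
  rw [← (Hn n).map_comp] at h3
  have : pinl B S.X₂ ≫ q = s := hom_ext' fun b => by
    show s.hom b + ι.hom (S.g.hom 0) = s.hom b
    rw [map_zero, map_zero, add_zero]
  rwa [this] at h3

lemma SS_of_memC (hn : ∀ A : Rep.{0} ℤ G, NiceRep π A → SS π A) {A : Rep.{0} ℤ G}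
    (hA : MemC G π A) : SS π A :=
  memC_induct2 hn SS_quot SS_ext hA

def Zr : Rep.{0} ℤ G := repOf PUnit (fun _ => AddMonoidHom.id _) (fun _ => rfl) (fun _ _ _ => rfl)

lemma cls_homology (K : ChainComplex (Rep.{0} ℤ G) ℕ) (n : ℕ) (h : cls G π (K.X n)) :
    cls G π (K.homology n) :=
  (cls G π).prop_of_epi (K.homologyπ n) ((cls G π).prop_of_mono (K.iCycles n) h)

instance (n : ℕ) : Finite (X (Zr : Rep.{0} ℤ G) n) := by
  have : Subsingleton (Zr : Rep.{0} ℤ G) := inferInstanceAs (Subsingleton PUnit)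
  have : Subsingleton (X (Zr : Rep.{0} ℤ G) n) := ⟨fun a b => X.ext fun _ _ => Subsingleton.elim _ _⟩
  infer_instance

lemma cls_Zr (n : ℕ) : cls G π ((Hn n).obj Zr) := by
  refine cls_homology (K.obj Zr) n ?_
  exact MemC.of_nice (fr (X (Zr : Rep.{0} ℤ G) n)) ((niceRep_iff _ _).2 (niceA_fr _))

lemma final_SS {A : Rep.{0} ℤ G} (hA : SS π A) (n : ℕ) : MemC G π ((Hn n).obj A) := by
  have hz : ∀ x : (Zr : Rep.{0} ℤ G), x = 0 := fun x =>
    (inferInstanceAs (Subsingleton PUnit) : Subsingleton (Zr : Rep.{0} ℤ G)).elim x 0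
  have := hA A Zr 0 0 (𝟙 A) (hom_ext' fun b => (hz _).trans (hz _).symm) (fun _ _ h => h)
    (fun e => ⟨fun _ => ⟨e, rfl⟩, fun _ => rfl⟩) n (fun m _ => cls_Zr m)
  exact prop_of_em (cls G π) _ this (cls_Zr n)

end
end
end HB

namespace HB
section
section
open Limits

lemma val_succAbove {n : ℕ} (p : Fin (n + 1)) (i : Fin n) :
    (p.succAbove i).val = if i.val < p.val then i.val else i.val + 1 := by
  unfold Fin.succAbove
  simp only [Fin.lt_def, Fin.val_castSucc]
  split_ifs <;> simp

lemma val_predAbove {n : ℕ} (p : Fin n) (i : Fin (n + 1)) :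
    (p.predAbove i).val = if p.val < i.val then i.val - 1 else i.val := by
  unfold Fin.predAbove
  simp only [Fin.lt_def, Fin.val_castSucc]
  split_ifs <;> simp

section
variable {n : ℕ}
lemma fin1 (i : Fin (n + 2)) (j : Fin (n + 1)) (k : Fin (n + 2)) (hij : i ≤ j.castSucc) :
    j.succ.predAbove (i.castSucc.succAbove k) = i.succAbove (j.predAbove k) := by
  simp only [Fin.ext_iff, Fin.lt_def, Fin.le_def, val_succAbove, val_predAbove, Fin.val_castSucc,
    Fin.val_succ] at *
  split_ifs <;> omega

lemma fin1' (i : Fin (n + 2)) (j : Fin (n + 1)) (k : Fin (n + 2)) (hij : i ≤ j.castSucc) :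
    j.succ.castSucc < i.castSucc.succAbove k ↔ j.castSucc < k := by
  simp only [Fin.ext_iff, Fin.lt_def, Fin.le_def, val_succAbove, val_predAbove, Fin.val_castSucc,
    Fin.val_succ] at *
  split_ifs <;> omega

lemma fin2 (j : Fin (n + 1)) (k : Fin (n + 2)) :
    j.succ.predAbove (j.castSucc.succ.succAbove k) = j.castSucc.predAbove (j.castSucc.succ.succAbove k) := by
  simp only [Fin.ext_iff, Fin.lt_def, Fin.le_def, val_succAbove, val_predAbove, Fin.val_castSucc,
    Fin.val_succ] at *
  split_ifs <;> omega

lemma fin2' (j : Fin (n + 1)) (k : Fin (n + 2)) :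
    j.succ.castSucc < j.castSucc.succ.succAbove k ↔ j.castSucc.castSucc < j.castSucc.succ.succAbove k := by
  simp only [Fin.ext_iff, Fin.lt_def, Fin.le_def, val_succAbove, val_predAbove, Fin.val_castSucc,
    Fin.val_succ] at *
  split_ifs <;> omega

lemma fin3 (i : Fin (n + 2)) (j : Fin (n + 1)) (k : Fin (n + 2)) (hij : j.castSucc < i) :
    j.castSucc.predAbove (i.succ.succAbove k) = i.succAbove (j.predAbove k) := by
  simp only [Fin.ext_iff, Fin.lt_def, Fin.le_def, val_succAbove, val_predAbove, Fin.val_castSucc,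
    Fin.val_succ] at *
  split_ifs <;> omega

lemma fin3' (i : Fin (n + 2)) (j : Fin (n + 1)) (k : Fin (n + 2)) (hij : j.castSucc < i) :
    j.castSucc.castSucc < i.succ.succAbove k ↔ j.castSucc < k := by
  simp only [Fin.ext_iff, Fin.lt_def, Fin.le_def, val_succAbove, val_predAbove, Fin.val_castSucc,
    Fin.val_succ] at *
  split_ifs <;> omega

lemma fin4 (i j : Fin (n + 1)) (k : Fin (n + 3)) (hij : i ≤ j) :
    j.predAbove (i.castSucc.predAbove k) = i.predAbove (j.succ.predAbove k) := by
  simp only [Fin.ext_iff, Fin.lt_def, Fin.le_def, val_succAbove, val_predAbove, Fin.val_castSucc,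
    Fin.val_succ] at *
  split_ifs <;> omega

lemma fin4' (i j : Fin (n + 1)) (k : Fin (n + 3)) (hij : i ≤ j) :
    j.castSucc < i.castSucc.predAbove k ↔ j.succ.castSucc < k := by
  simp only [Fin.ext_iff, Fin.lt_def, Fin.le_def, val_succAbove, val_predAbove, Fin.val_castSucc,
    Fin.val_succ] at *
  split_ifs <;> omega

lemma fin5 (i j : Fin (n + 1)) (k : Fin (n + 3)) (hij : j ≤ i) :
    j.predAbove (i.succ.predAbove k) = i.predAbove (j.castSucc.predAbove k) := by
  simp only [Fin.ext_iff, Fin.lt_def, Fin.le_def, val_succAbove, val_predAbove, Fin.val_castSucc,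
    Fin.val_succ] at *
  split_ifs <;> omega

lemma fin5' (i j : Fin (n + 1)) (k : Fin (n + 3)) (hij : j ≤ i) :
    j.castSucc < i.succ.predAbove k ↔ j.castSucc.castSucc < k := by
  simp only [Fin.ext_iff, Fin.lt_def, Fin.le_def, val_succAbove, val_predAbove, Fin.val_castSucc,
    Fin.val_succ] at *
  split_ifs <;> omega

end

/-- functional simplicial sets -/
structure FS where
  S : ℕ → Type
  pre : ∀ {m n : ℕ}, (Fin (m + 1) → Fin (n + 1)) → S n → S m
  pre_id : ∀ {n : ℕ} (x : S n), pre (fun i => i) x = x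
  pre_pre : ∀ {l m n : ℕ} (θ : Fin (l + 1) → Fin (m + 1)) (η : Fin (m + 1) → Fin (n + 1)) (x : S n),
    pre θ (pre η x) = pre (fun i => η (θ i)) x

section
variable (M : Type) [AddCommGroup M]

def lm {S T : Type} (f : S → T) : ModuleCat.of ℤ (S →₀ M) ⟶ ModuleCat.of ℤ (T →₀ M) :=
  ModuleCat.ofHom (Finsupp.lmapDomain M ℤ f)

variable {M}
lemma lm_apply {S T : Type} (f : S → T) (x : S →₀ M) : (lm M f).hom x = Finsupp.mapDomain f x := rfl

lemma lm_comp {S T U : Type} (f : S → T) (g : T → U) : lm M f ≫ lm M g = lm M (fun x => g (f x)) := by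
  apply ModuleCat.hom_ext
  apply LinearMap.ext
  intro x
  exact (Finsupp.mapDomain_comp (f := f) (g := g)).symm

lemma lm_id {S : Type} (f : S → S) (h : ∀ x, f x = x) : lm M f = 𝟙 _ := by
  obtain rfl : f = id := funext h
  apply ModuleCat.hom_ext
  apply LinearMap.ext
  intro x
  exact Finsupp.mapDomain_id

lemma lm_congr {S T : Type} {f g : S → T} (h : ∀ x, f x = g x) : lm M f = lm M g := by
  rw [funext h]

variable (M)
def FS.sob (Y : FS) : SimplicialObject (ModuleCat.{0} ℤ) where
  obj n := ModuleCat.of ℤ (Y.S n.unop.len →₀ M)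
  map θ := lm M (Y.pre θ.unop.toOrderHom)
  map_id n := lm_id _ (fun x => Y.pre_id x)
  map_comp θ θ' := by
    refine Eq.trans ?_ (lm_comp _ _).symm
    exact lm_congr fun x => (Y.pre_pre θ'.unop.toOrderHom θ.unop.toOrderHom x).symm

/-- boundary -/
def FS.bd (Y : FS) (n : ℕ) : (Y.S (n + 1) →₀ M) →+ (Y.S n →₀ M) :=
  ∑ i : Fin (n + 2), ((-1 : ℤ) ^ (i : ℕ)) • Finsupp.mapDomain.addMonoidHom (Y.pre i.succAbove)

variable {M}
lemma FS.bd_apply (Y : FS) (n : ℕ) (x : Y.S (n + 1) →₀ M) : Y.bd M n x =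
    ∑ i : Fin (n + 2), ((-1 : ℤ) ^ (i : ℕ)) • Finsupp.mapDomain (Y.pre i.succAbove) x := by
  simp [FS.bd]

lemma mc_sum {A B : ModuleCat.{0} ℤ} {ι : Type} (s : Finset ι) (f : ι → (A ⟶ B)) (a : A) :
    (∑ i ∈ s, f i).hom a = ∑ i ∈ s, (f i).hom a :=
  map_sum ({ toFun := fun f => f.hom a, map_zero' := rfl, map_add' := fun _ _ => rfl } :
    (A ⟶ B) →+ B) f s

lemma FS.d_eq (Y : FS) (n : ℕ) (x : Y.S (n + 1) →₀ M) :
    (((alternatingFaceMapComplex (ModuleCat.{0} ℤ)).obj (Y.sob M)).d (n + 1) n).hom x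
      = Y.bd M n x := by
  have h := AlternatingFaceMapComplex.obj_d_eq (Y.sob M) n
  refine (congrArg (fun f => f.hom x) h).trans ?_
  rw [FS.bd_apply]
  refine (mc_sum (A := ModuleCat.of ℤ (Y.S (n + 1) →₀ M)) (B := ModuleCat.of ℤ (Y.S n →₀ M))
    Finset.univ _ x).trans ?_
  rfl

lemma FS.bd_bd (Y : FS) (n : ℕ) (x : Y.S (n + 1 + 1) →₀ M) : Y.bd M n (Y.bd M (n + 1) x) = 0 := by
  rw [← FS.d_eq, ← FS.d_eq]
  exact congrArg (fun f => f.hom x)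
    (((alternatingFaceMapComplex (ModuleCat.{0} ℤ)).obj (Y.sob M)).d_comp_d (n + 1 + 1) (n + 1) n)

lemma FS.bd_nat {Y Z : FS} (f : ∀ n, Y.S n → Z.S n)
    (hf : ∀ {m n} (θ : Fin (m + 1) → Fin (n + 1)) x, Z.pre θ (f n x) = f m (Y.pre θ x)) (n : ℕ)
    (x : Y.S (n + 1) →₀ M) :
    Z.bd M n (Finsupp.mapDomain (f (n + 1)) x) = Finsupp.mapDomain (f n) (Y.bd M n x) := by
  rw [FS.bd_apply, FS.bd_apply, ← Finsupp.mapDomain.addMonoidHom_apply (f n), map_sum]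
  refine Finset.sum_congr rfl fun i _ => ?_
  rw [map_zsmul]
  congr 1
  show _ = Finsupp.mapDomain _ _
  rw [← Finsupp.mapDomain_comp, ← Finsupp.mapDomain_comp]
  congr 1
  funext x
  exact hf _ x

def cyc (Y : FS) : ∀ n, (Y.S n →₀ M) → Prop
  | 0, _ => True
  | n + 1, x => Y.bd M n x = 0

variable {Y Z : FS} (H : ∀ {n}, Y.S n → (Fin (n + 1) → Prop) → Z.S n)
    (hH : ∀ {m n} (θ : Fin (m + 1) → Fin (n + 1)) x κ, Z.pre θ (H x κ) = H (Y.pre θ x) (fun i => κ (θ i)))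

def sMap (f : ∀ n, Y.S n → Z.S n)
    (hf : ∀ {m n} (θ : Fin (m + 1) → Fin (n + 1)) x, Z.pre θ (f n x) = f m (Y.pre θ x)) :
    Y.sob M ⟶ Z.sob M where
  app n := lm M (f n.unop.len)
  naturality n m θ := by
    refine (lm_comp _ _).trans ?_
    refine Eq.trans ?_ (lm_comp _ _).symm
    exact lm_congr fun x => (hf _ x).symm

lemma H_congr {m n : ℕ} {α β : Fin (m + 1) → Fin (n + 1)} (x : Y.S n) {κ κ' : Fin (m + 1) → Prop}
    (h : ∀ k, α k = β k) (h' : ∀ k, κ k ↔ κ' k) : H (Y.pre α x) κ = H (Y.pre β x) κ' := by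
  rw [funext h, funext fun k => propext (h' k)]

set_option maxHeartbeats 1000000 in
def prism : SimplicialObject.Homotopy
    (sMap (M := M) (fun n x => H x (fun _ => False)) (fun θ x => hH θ x _))
    (sMap (M := M) (fun n x => H x (fun _ => True)) (fun θ x => hH θ x _)) where
  h {n} i := lm M (fun x => H (Y.pre (m := n + 1) (n := n) i.predAbove x) (fun k => i.castSucc < k))
  h_zero_comp_δ_zero n := by
    refine (lm_comp _ _).trans ?_
    refine lm_congr fun x => ?_
    refine (hH _ _ _).trans ?_
    rw [Y.pre_pre]
    refine Eq.trans (H_congr H (β := fun k => k) _ (fun k => ?_) (κ' := fun _ => True) (fun k => ?_)) ?_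
    · show Fin.predAbove 0 (Fin.succAbove 0 k) = k
      simp [Fin.succAbove, Fin.predAbove]
    · show _ < Fin.succAbove 0 k ↔ True
      simp [Fin.succAbove]
    · rw [Y.pre_id]
  h_last_comp_δ_last n := by
    refine (lm_comp _ _).trans ?_
    refine lm_congr fun x => ?_
    refine (hH _ _ _).trans ?_
    rw [Y.pre_pre]
    refine Eq.trans (H_congr H (β := fun k => k) _ (fun k => ?_) (κ' := fun _ => False) (fun k => ?_)) ?_
    · show Fin.predAbove (Fin.last n) (Fin.succAbove (Fin.last (n + 1)) k) = k
      rw [Fin.ext_iff, val_predAbove, val_succAbove]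
      have := k.2
      simp only [SimplexCategory.len_mk, Opposite.unop_op] at this
      simp only [Fin.val_last]
      split_ifs <;> omega
    · show _ < Fin.succAbove (Fin.last (n + 1)) k ↔ False
      simp [Fin.le_last]
    · rw [Y.pre_id]
  h_succ_comp_δ_castSucc_of_lt i j hij := by
    refine (lm_comp _ _).trans ?_
    refine Eq.trans ?_ (lm_comp _ _).symm
    refine lm_congr fun x => ?_
    refine (hH _ _ _).trans ?_
    rw [Y.pre_pre]
    refine Eq.trans ?_ (congrArg (fun u => H u _) (Y.pre_pre _ _ _).symm)
    refine H_congr H _ (fun k => ?_) (fun k => ?_)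
    · exact fin1 i j k hij
    · exact fin1' i j k hij
  h_succ_comp_δ_castSucc_succ j := by
    refine (lm_comp _ _).trans ?_
    refine Eq.trans ?_ (lm_comp _ _).symm
    refine lm_congr fun x => ?_
    refine (hH _ _ _).trans ?_
    refine Eq.trans ?_ (hH _ _ _).symm
    rw [Y.pre_pre, Y.pre_pre]
    refine H_congr H _ (fun k => ?_) (fun k => ?_)
    · exact fin2 j k
    · exact fin2' j k
  h_castSucc_comp_δ_succ_of_lt i j hij := by
    refine (lm_comp _ _).trans ?_
    refine Eq.trans ?_ (lm_comp _ _).symm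
    refine lm_congr fun x => ?_
    refine (hH _ _ _).trans ?_
    rw [Y.pre_pre]
    refine Eq.trans ?_ (congrArg (fun u => H u _) (Y.pre_pre _ _ _).symm)
    refine H_congr H _ (fun k => ?_) (fun k => ?_)
    · exact fin3 i j k hij
    · exact fin3' i j k hij
  h_comp_σ_castSucc_of_le i j hij := by
    refine (lm_comp _ _).trans ?_
    refine Eq.trans ?_ (lm_comp _ _).symm
    refine lm_congr fun x => ?_
    refine (hH _ _ _).trans ?_
    rw [Y.pre_pre]
    refine Eq.trans ?_ (congrArg (fun u => H u _) (Y.pre_pre _ _ _).symm)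
    refine H_congr H _ (fun k => ?_) (fun k => ?_)
    · exact fin4 i j k hij
    · exact fin4' i j k hij
  h_comp_σ_succ_of_lt i j hij := by
    refine (lm_comp _ _).trans ?_
    refine Eq.trans ?_ (lm_comp _ _).symm
    refine lm_congr fun x => ?_
    refine (hH _ _ _).trans ?_
    rw [Y.pre_pre]
    refine Eq.trans ?_ (congrArg (fun u => H u _) (Y.pre_pre _ _ _).symm)
    refine H_congr H _ (fun k => ?_) (fun k => ?_)
    · exact fin5 i j k hij
    · exact fin5' i j k hij

end
end
end
end HB

namespace HB
section
section
variable {M : Type} [AddCommGroup M]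
variable {Y Z : FS} (H : ∀ {n}, Y.S n → (Fin (n + 1) → Prop) → Z.S n)
    (hH : ∀ {m n} (θ : Fin (m + 1) → Fin (n + 1)) x κ, Z.pre θ (H x κ) = H (Y.pre θ x) (fun i => κ (θ i)))

include hH in
lemma prism_cyc (n : ℕ) (u : Y.S n →₀ M) (hu : cyc Y n u) : ∃ w : Z.S (n + 1) →₀ M,
    Finsupp.mapDomain (fun x => H x (fun _ => False)) u =
    Finsupp.mapDomain (fun x => H x (fun _ => True)) u + Z.bd M n w := by
  have hp := (prism (M := M) H hH).toChainHomotopy.comm n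
  cases n with
  | zero =>
    rw [prevD_eq (j' := 1) (w := by simp), dNext_eq_zero _ _ (by simp), zero_add] at hp
    have h2 := congrArg (fun f => f.hom u) hp
    refine ⟨((prism (M := M) H hH).toChainHomotopy.hom 0 1).hom u, ?_⟩
    refine h2.trans ?_
    refine Eq.trans ?_ (congrArg (fun v => _ + v) (FS.d_eq _ _ _))
    exact add_comm (G := Z.S 0 →₀ M) _ _
  | succ n =>
    rw [dNext_eq (i' := n) (w := by simp), prevD_eq (j' := n + 2) (w := by simp)] at hp
    have h2 := congrArg (fun f => f.hom u) hp
    refine ⟨((prism (M := M) H hH).toChainHomotopy.hom (n + 1) (n + 2)).hom u, ?_⟩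
    refine h2.trans ?_
    refine Eq.trans ?_ (congrArg (fun v => _ + v) (FS.d_eq _ _ _))
    have h3 : (((alternatingFaceMapComplex (ModuleCat.{0} ℤ)).obj (Y.sob M)).d (n + 1) n).hom u = 0 := 
      (FS.d_eq _ _ _).trans hu
    have h4 : ((((alternatingFaceMapComplex (ModuleCat.{0} ℤ)).obj (Y.sob M)).d (n + 1) n) ≫
      ((prism (M := M) H hH).toChainHomotopy.hom n (n + 1))).hom u = 0 :=
      (congrArg ((prism (M := M) H hH).toChainHomotopy.hom n (n + 1)).hom h3).trans (map_zero _)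
    refine (congrArg (fun v : Z.S (n + 1) →₀ M => v + _ + _) h4).trans ?_
    refine (congrArg (fun v : Z.S (n + 1) →₀ M => v + _) (zero_add (M := Z.S (n + 1) →₀ M) _)).trans ?_
    exact add_comm (G := Z.S (n + 1) →₀ M) _ _
end

section
variable {E E' : Type} [AddCommGroup E] [AddCommGroup E'] {n : ℕ}

def XF (A : Type) [AddCommGroup A] : FS where
  S := X A
  pre := X.pre
  pre_id _ := rfl
  pre_pre _ _ _ := rfl

lemma XF_bd (A : Type) [AddCommGroup A] (n : ℕ) : (XF A).bd ℤ n = bd A n := rfl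

def YF (A : Type) [AddCommGroup A] : FS where
  S n := X A n × (Fin (n + 1) → ℤ)
  pre θ y := (X.pre θ y.1, fun k => y.2 (θ k))
  pre_id _ := rfl
  pre_pre _ _ _ := rfl

def tY (m : ℤ) (n : ℕ) (y : (YF E').S n) : (YF E').S n := (y.1, fun k => y.2 k + m)

lemma tY_add (m m' : ℤ) (n : ℕ) (y : (YF E').S n) : tY m n (tY m' n y) = tY (m' + m) n y :=
  Prod.ext rfl (funext fun k => add_assoc (y.2 k) m' m)

lemma tY_zero (n : ℕ) (y : (YF E').S n) : tY 0 n y = y :=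
  Prod.ext rfl (funext fun k => add_zero (y.2 k))

open Classical in
def HY {n : ℕ} (y : (YF E').S n) (κ : Fin (n + 1) → Prop) : (YF E').S n :=
  (y.1, fun k => if κ k then 0 else y.2 k)

lemma HY_nat {m n : ℕ} (θ : Fin (m + 1) → Fin (n + 1)) (x : (YF E').S n) (κ) :
    (YF E').pre θ (HY x κ) = HY ((YF E').pre θ x) (fun i => κ (θ i)) := rfl

lemma HY_false (y : (YF E').S n) : HY y (fun _ => False) = y :=
  Prod.ext rfl (funext fun k => if_neg id)

def iY (n : ℕ) (c : X E' n) : (YF E').S n := (c, fun _ => 0)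

lemma HY_true (y : (YF E').S n) : HY y (fun _ => True) = iY n y.1 :=
  Prod.ext rfl (funext fun k => if_pos trivial)

def pY (j : E' →+ E) (e : E) (n : ℕ) (y : (YF E').S n) : X E n :=
  ⟨fun i k => j (y.1.1 i k) + (y.2 k - y.2 i) • e, fun i k l => by
    obtain ⟨c, z⟩ := y
    show j (c.1 i k) + (z k - z i) • e + (j (c.1 k l) + (z l - z k) • e) =
      j (c.1 i l) + (z l - z i) • e
    rw [← c.2 i k l, map_add]
    have : z l - z i = (z k - z i) + (z l - z k) := by ring
    rw [this, add_smul]; abel⟩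

def sY (r : E →+ E') (a : E →+ ℤ) (n : ℕ) (c : X E n) : (YF E').S n :=
  (X.map r c, fun k => a (c.1 (Fin.last n) k))

lemma pY_tY (j : E' →+ E) (e : E) (m : ℤ) (y : (YF E').S n) : pY j e n (tY m n y) = pY j e n y := by
  apply X.ext
  intro i k
  show j _ + ((y.2 k + m) - (y.2 i + m)) • e = j _ + (y.2 k - y.2 i) • e
  congr 2; ring

lemma pY_sY (j : E' →+ E) (r : E →+ E') (a : E →+ ℤ) (e : E) (h2 : ∀ x, j (r x) + a x • e = x)
    (c : X E n) : pY j e n (sY r a n c) = c := by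
  apply X.ext
  intro i k
  show j (r (c.1 i k)) + (a _ - a _) • e = c.1 i k
  rw [← map_sub, X.sub, h2]

/-- cap product with the class `a` -/
def Psi {A : Type} [AddCommGroup A] (a : E →+ A) (n : ℕ) : (X E (n + 1) →₀ ℤ) →+ (X E n →₀ A) :=
  Finsupp.liftAddHom fun σ => (Finsupp.singleAddHom (X.pre (Fin.last (n + 1)).succAbove σ)).comp
    (zmultiplesHom A (a (σ.1 (Fin.last n).castSucc (Fin.last (n + 1)))))

lemma Psi_single {A : Type} [AddCommGroup A] (a : E →+ A) (n : ℕ) (σ : X E (n + 1)) (k : ℤ) :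
    Psi a n (Finsupp.single σ k) = Finsupp.single (X.pre (Fin.last (n + 1)).succAbove σ)
      (k • a (σ.1 (Fin.last n).castSucc (Fin.last (n + 1)))) := by
  simp [Psi]

lemma exD (j : E' →+ E) (e : E) (y : (YF E').S n) (m : ℤ) : ∃ D : (YF E').S n →₀ ℤ,
    Finsupp.mapDomain (tY 1 n) D - D = Finsupp.single (tY m n y) 1 - Finsupp.single y 1 ∧
    Finsupp.mapDomain (pY j e n) D = Finsupp.single (pY j e n y) m := by
  induction m using Int.induction_on with
  | zero => exact ⟨0, by simp [tY_zero], by simp⟩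
  | succ i ih =>
    obtain ⟨D, h1, h2⟩ := ih
    refine ⟨D + Finsupp.single (tY i n y) 1, ?_, ?_⟩
    · rw [Finsupp.mapDomain_add, Finsupp.mapDomain_single, tY_add, add_sub_add_comm, h1]; abel
    · rw [Finsupp.mapDomain_add, Finsupp.mapDomain_single, pY_tY, h2, ← Finsupp.single_add]
  | pred i ih =>
    obtain ⟨D, h1, h2⟩ := ih
    refine ⟨D - Finsupp.single (tY (-i - 1) n y) 1, ?_, ?_⟩
    · rw [Finsupp.mapDomain_sub, Finsupp.mapDomain_single, tY_add, sub_sub_sub_comm, h1,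
        sub_add_cancel]; abel
    · rw [Finsupp.mapDomain_sub, Finsupp.mapDomain_single, pY_tY, h2, ← Finsupp.single_sub]

lemma tY_inj (D : (YF E').S n →₀ ℤ) (h : Finsupp.mapDomain (tY 1 n) D = D) : D = 0 := by
  by_contra hD
  have hne : D.support.Nonempty := Finsupp.support_nonempty_iff.2 hD
  obtain ⟨y, hy, hmax⟩ := Finset.exists_max_image D.support (fun y => y.2 0) hne
  have hinj : Function.Injective (tY (E' := E') 1 n) := by
    intro u v huv
    have h3 := congrArg (tY (-1) n) huv
    rwa [tY_add, tY_add, add_neg_cancel, tY_zero, tY_zero] at h3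
  have h4 := Finsupp.mapDomain_apply hinj D y
  rw [h] at h4
  have h5 : tY 1 n y ∈ D.support := by
    rw [Finsupp.mem_support_iff, h4]; exact Finsupp.mem_support_iff.1 hy
  have h6 : y.2 0 + 1 ≤ y.2 0 := hmax _ h5
  omega

lemma bd_sY (r : E →+ E') (a : E →+ ℤ) (σ : X E (n + 1)) (k : ℤ) :
    (YF E').bd ℤ n (Finsupp.single (sY r a (n + 1) σ) k) =
    Finsupp.mapDomain (sY r a n) (bd E n (Finsupp.single σ k)) +
    (-1 : ℤ) ^ (n + 1) • (
      Finsupp.single (tY (- a (σ.1 (Fin.last n).castSucc (Fin.last (n + 1)))) n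
        (sY r a n (X.pre (Fin.last (n + 1)).succAbove σ))) k
      - Finsupp.single (sY r a n (X.pre (Fin.last (n + 1)).succAbove σ)) k) := by
  rw [FS.bd_apply, bd_apply, ← Finsupp.mapDomain.addMonoidHom_apply (sY r a n), map_sum,
    Fin.sum_univ_castSucc, Fin.sum_univ_castSucc (n := n + 1)]
  simp only [map_zsmul, Finsupp.mapDomain_single, Finsupp.mapDomain.addMonoidHom_apply, Fin.val_last]
  rw [smul_sub, add_assoc]
  congr 1
  · refine Finset.sum_congr rfl fun i _ => ?_
    congr 2
    refine Prod.ext rfl (funext fun l => ?_)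
    show a (σ.1 _ _) = a (σ.1 _ _)
    have hl : i.castSucc.succAbove (Fin.last n) = Fin.last (n + 1) := by
      rw [Fin.ext_iff, val_succAbove]
      have := i.2
      simp
      omega
    rw [hl]
  · rw [add_sub_cancel]
    congr 2
    refine Prod.ext rfl (funext fun l => ?_)
    have hl : (Fin.last (n + 1)).succAbove (Fin.last n) = (Fin.last n).castSucc := by
      rw [Fin.succAbove_last]
    show a (σ.1 _ _) = a (σ.1 ((Fin.last (n + 1)).succAbove (Fin.last n)) _) + - a (σ.1 _ _)
    rw [hl, ← map_neg, X.neg, ← map_add]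
    exact congrArg a ((σ.2 _ _ _).symm.trans (add_comm _ _))

theorem wang (j : E' →+ E) (r : E →+ E') (a : E →+ ℤ) (e : E)
    (h1 : ∀ x, r (j x) = x) (h2 : ∀ x, j (r x) + a x • e = x) (h5 : r e = 0)
    (x : X E (n + 1) →₀ ℤ) (hx : bd E n x = 0)
    (y : X E (n + 1) →₀ ℤ) (hy : Psi a n x = bd E n y) :
    ∃ w, x = Finsupp.mapDomain (X.map (j.comp r)) x + bd E (n + 1) w := by
  choose D hD hD' using fun (y : (YF E').S n) (m : ℤ) => exD (E := E) j e y m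
  let DD : (X E (n + 1) →₀ ℤ) →+ ((YF E').S n →₀ ℤ) := Finsupp.liftAddHom fun σ =>
    zmultiplesHom _ (D (sY r a n (X.pre (Fin.last (n + 1)).succAbove σ))
      (- a (σ.1 (Fin.last n).castSucc (Fin.last (n + 1)))))
  have e1 : ∀ x, (YF E').bd ℤ n (Finsupp.mapDomain (sY r a (n + 1)) x) =
      Finsupp.mapDomain (sY r a n) (bd E n x) +
      (-1 : ℤ) ^ (n + 1) • (Finsupp.mapDomain (tY 1 n) (DD x) - DD x) := by
    intro x
    induction x using Finsupp.induction_linear with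
    | zero => simp
    | add f g hf hg => simp only [map_add, Finsupp.mapDomain_add, hf, hg, smul_add, smul_sub]; abel
    | single σ k =>
      rw [Finsupp.mapDomain_single, bd_sY]
      congr 2
      have : DD (Finsupp.single σ k) = k • (D (sY r a n (X.pre (Fin.last (n + 1)).succAbove σ))
        (- a (σ.1 (Fin.last n).castSucc (Fin.last (n + 1))))) := by simp [DD]
      rw [this, ← Finsupp.mapDomain.addMonoidHom_apply (tY 1 n), map_zsmul, ← smul_sub]
      show _ = k • (Finsupp.mapDomain _ _ - _)
      rw [hD, smul_sub]
      simp
  have e2 : ∀ x, Finsupp.mapDomain (pY j e n) (DD x) = - Psi a n x := by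
    intro x
    induction x using Finsupp.induction_linear with
    | zero => simp
    | add f g hf hg => simp only [map_add, Finsupp.mapDomain_add, hf, hg]; abel
    | single σ k =>
      have : DD (Finsupp.single σ k) = k • (D (sY r a n (X.pre (Fin.last (n + 1)).succAbove σ))
        (- a (σ.1 (Fin.last n).castSucc (Fin.last (n + 1))))) := by simp [DD]
      rw [this, ← Finsupp.mapDomain.addMonoidHom_apply (pY j e n), map_zsmul]
      show k • (Finsupp.mapDomain _ _) = _
      rw [hD', pY_sY j r a e h2, Psi_single]
      simp
  have et : ∀ n (u : (YF E').S (n + 1) →₀ ℤ), (YF E').bd ℤ n (Finsupp.mapDomain (tY 1 (n + 1)) u) =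
      Finsupp.mapDomain (tY 1 n) ((YF E').bd ℤ n u) := fun n u =>
    FS.bd_nat (Y := YF E') (Z := YF E') (fun n => tY 1 n) (fun _ _ => rfl) n u
  have ep : ∀ n (u : (YF E').S (n + 1) →₀ ℤ), bd E n (Finsupp.mapDomain (pY j e (n + 1)) u) =
      Finsupp.mapDomain (pY j e n) ((YF E').bd ℤ n u) := fun n u =>
    FS.bd_nat (Y := YF E') (Z := XF E) (fun n => pY j e n) (fun _ _ => rfl) n u
  have ei : ∀ n (u : X E' (n + 1) →₀ ℤ), (YF E').bd ℤ n (Finsupp.mapDomain (iY (n + 1)) u) =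
      Finsupp.mapDomain (iY n) (bd E' n u) := fun n u =>
    FS.bd_nat (Y := XF E') (Z := YF E') (fun n => iY n) (fun _ _ => rfl) n u
  have er : ∀ n (u : X E (n + 1) →₀ ℤ), bd E' n (Finsupp.mapDomain (X.map r) u) =
      Finsupp.mapDomain (X.map r) (bd E n u) := fun n u =>
    FS.bd_nat (Y := XF E) (Z := XF E') (fun n => X.map r) (fun _ _ => rfl) n u
  have hom : ∀ n (u : (YF E').S n →₀ ℤ), cyc (YF E') n u → ∃ w, u =
      Finsupp.mapDomain (iY n) (Finsupp.mapDomain (X.map r) (Finsupp.mapDomain (pY j e n) u)) +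
        (YF E').bd ℤ n w := by
    intro n u hu
    obtain ⟨w, hw⟩ := prism_cyc (Y := YF E') (Z := YF E') HY HY_nat n u hu
    refine ⟨w, ?_⟩
    rw [show (fun x : (YF E').S n => HY x (fun _ => False)) = id from funext HY_false,
      Finsupp.mapDomain_id] at hw
    refine hw.trans ?_
    congr 1
    rw [← Finsupp.mapDomain_comp, ← Finsupp.mapDomain_comp]
    congr 1
    funext y
    refine (HY_true y).trans ?_
    show iY n _ = iY n _
    congr 1
    apply X.ext
    intro i k
    show _ = r (j _ + _ • e)
    rw [map_add, h1, map_zsmul, h5, smul_zero, add_zero]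
  have e3 := e1 x
  rw [hx, Finsupp.mapDomain_zero, zero_add] at e3
  have e4 : Finsupp.mapDomain (tY 1 n) (DD x) - DD x =
      (-1 : ℤ) ^ (n + 1) • (YF E').bd ℤ n (Finsupp.mapDomain (sY r a (n + 1)) x) := by
    rw [e3, smul_smul, ← mul_pow]; simp
  have hcyc : cyc (YF E') n (DD x) := by
    cases n with
    | zero => trivial
    | succ n =>
      refine tY_inj _ (sub_eq_zero.1 ?_)
      rw [← et, ← map_sub, e4, map_zsmul, FS.bd_bd, smul_zero]
  obtain ⟨w0, hw0⟩ := hom n _ hcyc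
  rw [e2, hy] at hw0
  obtain ⟨w, hw⟩ : ∃ w, DD x = (YF E').bd ℤ n w := by
    refine ⟨Finsupp.mapDomain (iY (n + 1)) (Finsupp.mapDomain (X.map r) (-y)) + w0, ?_⟩
    rw [map_add, ei, er, map_neg]
    exact hw0
  let u := Finsupp.mapDomain (sY r a (n + 1)) x -
    (-1 : ℤ) ^ (n + 1) • (Finsupp.mapDomain (tY 1 (n + 1)) w - w)
  have hu : cyc (YF E') (n + 1) u := by
    show (YF E').bd ℤ n u = 0
    simp only [u]
    rw [map_sub, e3, map_zsmul, map_sub, et, ← hw, sub_self]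
  have hpu : Finsupp.mapDomain (pY j e (n + 1)) u = x := by
    simp only [u]
    rw [Finsupp.mapDomain_sub, ← Finsupp.mapDomain.addMonoidHom_apply (pY j e (n + 1)) (_ • _),
      map_zsmul, map_sub]
    simp only [Finsupp.mapDomain.addMonoidHom_apply]
    rw [← Finsupp.mapDomain_comp, ← Finsupp.mapDomain_comp,
      show pY j e (n + 1) ∘ tY 1 (n + 1) = pY j e (n + 1) from funext fun y => pY_tY j e 1 y,
      show pY j e (n + 1) ∘ sY r a (n + 1) = id from funext fun y => pY_sY j r a e h2 y]
    simp [Finsupp.mapDomain_id]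
  obtain ⟨v, hv⟩ := hom (n + 1) u hu
  rw [hpu] at hv
  refine ⟨Finsupp.mapDomain (pY j e (n + 2)) v, ?_⟩
  have h7 := congrArg (Finsupp.mapDomain (pY j e (n + 1))) hv
  rw [hpu, Finsupp.mapDomain_add, ← ep] at h7
  refine h7.trans ?_
  congr 1
  rw [← Finsupp.mapDomain_comp, ← Finsupp.mapDomain_comp]
  congr 1
  funext c
  apply X.ext
  intro i k
  show j (r _) + ((0 : ℤ) - 0) • e = j (r _)
  simp
end
end
end HB

namespace HB
section
section
variable {E E' A B : Type} [AddCommGroup E] [AddCommGroup E'] [AddCommGroup A] [AddCommGroup B] {n : ℕ}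

/-- boundary with coefficients -/
def bdM (M : Type) [AddCommGroup M] (A : Type) [AddCommGroup A] (n : ℕ) :
    (X A (n + 1) →₀ M) →+ (X A n →₀ M) := (XF A).bd M n

lemma bdM_apply (x : X E (n + 1) →₀ A) : bdM A E n x =
    ∑ i : Fin (n + 2), ((-1 : ℤ) ^ (i : ℕ)) • Finsupp.mapDomain (X.pre i.succAbove) x :=
  FS.bd_apply (XF E) n x

lemma bdM_map (f : E →+ E') (x : X E (n + 1) →₀ A) : bdM A E' n (Finsupp.mapDomain (X.map f) x) =
    Finsupp.mapDomain (X.map f) (bdM A E n x) :=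
  FS.bd_nat (Y := XF E) (Z := XF E') (fun n => X.map f) (fun _ _ => rfl) n x

lemma bd_map (f : E →+ E') (x : X E (n + 1) →₀ ℤ) : bd E' n (Finsupp.mapDomain (X.map f) x) =
    Finsupp.mapDomain (X.map f) (bd E n x) := bdM_map f x

lemma bdM_range (f : A →+ B) (x : X E (n + 1) →₀ A) :
    bdM B E n (Finsupp.mapRange.addMonoidHom f x) =
    Finsupp.mapRange.addMonoidHom f (bdM A E n x) := by
  rw [bdM_apply, bdM_apply, map_sum]
  refine Finset.sum_congr rfl fun i _ => ?_
  rw [map_zsmul]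
  congr 1
  exact Finsupp.mapDomain_mapRange _ _ _ (map_zero f) (map_add f)

lemma Psi_range (f : A →+ B) (a : E →+ A) (x : X E (n + 1) →₀ ℤ) :
    Psi (f.comp a) n x = Finsupp.mapRange.addMonoidHom f (Psi a n x) := by
  induction x using Finsupp.induction_linear with
  | zero => simp
  | add f g hf hg => simp only [map_add, hf, hg]
  | single σ k =>
    rw [Psi_single, Psi_single]
    simp

lemma Psi_map (f : E →+ E') (a : E' →+ A) (x : X E (n + 1) →₀ ℤ) :
    Psi a n (Finsupp.mapDomain (X.map f) x) = Finsupp.mapDomain (X.map f) (Psi (a.comp f) n x) := by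
  induction x using Finsupp.induction_linear with
  | zero => simp
  | add f g hf hg => simp only [map_add, hf, hg, Finsupp.mapDomain_add]
  | single σ k =>
    rw [Psi_single, Finsupp.mapDomain_single, Psi_single, Finsupp.mapDomain_single]
    rfl

lemma wang' (a : E →+ ℤ) (e : E) (he : a e = 1) (x : X E (n + 1) →₀ ℤ) (hx : bd E n x = 0)
    (y : X E (n + 1) →₀ ℤ) (hy : Psi a n x = bd E n y) (P : E →+ E) (hP : ∀ v, P v = v - a v • e) :
    ∃ w, x = Finsupp.mapDomain (X.map P) x + bd E (n + 1) w := by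
  have h0 : ∀ v, a (P v) = 0 := fun v => by rw [hP, map_sub, map_zsmul, he]; simp
  let r : E →+ a.ker := P.codRestrict a.ker h0
  obtain ⟨w, hw⟩ := wang a.ker.subtype r a e
    (fun v => Subtype.ext (by
      show P v = v
      rw [hP, show a v = 0 from v.2]; simp))
    (fun v => by show P v + _ = _; rw [hP]; abel)
    (Subtype.ext (by show P e = 0; rw [hP, he]; simp)) x hx y hy
  exact ⟨w, hw⟩

lemma wang_free [Module.Free ℤ A] [Module.Finite ℤ A] (a : E →+ A) (ι : A →+ E) (ha : ∀ t, a (ι t) = t)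
    (x : X E (n + 1) →₀ ℤ) (hx : bd E n x = 0)
    (y : X E (n + 1) →₀ A) (hy : Psi a n x = bdM A E n y) :
    ∃ w, x = Finsupp.mapDomain (X.map (AddMonoidHom.id E - ι.comp a)) x + bd E (n + 1) w := by
  classical
  let b := Module.Free.chooseBasis ℤ A
  let I := Module.Free.ChooseBasisIndex ℤ A
  let c : I → E →+ ℤ := fun i => (b.coord i).toAddMonoidHom.comp a
  let e : I → E := fun i => ι (b i)
  have hce : ∀ i k, c i (e k) = if k = i then 1 else 0 := by
    intro i k
    show b.coord i (a (ι (b k))) = _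
    rw [ha]
    simp [Finsupp.single_apply]
  let P : Finset I → (E →+ E) := fun S =>
    AddMonoidHom.id E - ∑ i ∈ S, ((zmultiplesHom E (e i)).comp (c i))
  have hP : ∀ S v, P S v = v - ∑ i ∈ S, c i v • e i := by
    intro S v
    simp [P]
  have hcP : ∀ S k, k ∉ S → ∀ v, c k (P S v) = c k v := by
    intro S k hk v
    rw [hP, map_sub, map_sum, Finset.sum_eq_zero, sub_zero]
    intro i hi
    rw [map_zsmul, hce, if_neg, smul_zero]
    rintro rfl
    exact hk hi
  have key : ∀ S, ∃ w, x = Finsupp.mapDomain (X.map (P S)) x + bd E (n + 1) w := by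
    intro S
    induction S using Finset.induction_on with
    | empty =>
      refine ⟨0, ?_⟩
      have : X.map (n := n + 1) (P ∅) = id := by
        funext c; apply X.ext; intro i k
        show P ∅ _ = _
        rw [hP]; simp
      rw [this, Finsupp.mapDomain_id, map_zero, add_zero]
    | insert k S hk ih =>
      obtain ⟨w, hw⟩ := ih
      have h1 : bd E n (Finsupp.mapDomain (X.map (P S)) x) = 0 := by
        rw [bd_map, hx, Finsupp.mapDomain_zero]
      have h2 : Psi (c k) n (Finsupp.mapDomain (X.map (P S)) x) =
          bd E n (Finsupp.mapDomain (X.map (P S))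
            (Finsupp.mapRange.addMonoidHom (b.coord k).toAddMonoidHom y)) := by
        rw [Psi_map, show (c k).comp (P S) = c k from AddMonoidHom.ext (hcP S k hk), bd_map]
        congr 1
        refine Eq.trans ?_ (bdM_range (b.coord k).toAddMonoidHom y).symm
        rw [← hy, ← Psi_range]
      obtain ⟨w', hw'⟩ := wang' (c k) (e k) (by rw [hce, if_pos rfl]) _ h1 _ h2 (P {k})
        (fun v => by rw [hP]; simp)
      refine ⟨w' + w, ?_⟩
      refine hw.trans ?_
      rw [map_add, ← add_assoc]
      congr 1
      refine hw'.trans ?_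
      congr 1
      rw [← Finsupp.mapDomain_comp]
      congr 1
      funext σ
      apply X.ext
      intro i l
      show P {k} (P S _) = P (insert k S) _
      rw [hP {k}, Finset.sum_singleton, hcP S k hk, hP, hP, Finset.sum_insert hk]
      abel
  obtain ⟨w, hw⟩ := key Finset.univ
  refine ⟨w, ?_⟩
  rwa [show P Finset.univ = AddMonoidHom.id E - ι.comp a from ?_] at hw
  apply AddMonoidHom.ext
  intro v
  rw [hP]
  show _ = v - ι (a v)
  congr 1
  conv_rhs => rw [← b.sum_repr (a v)]
  rw [map_sum]
  refine Finset.sum_congr rfl fun i _ => ?_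
  rw [map_zsmul]
  rfl

lemma wang_tf (hA : TF A) (a : E →+ A) (ι : A →+ E) (ha : ∀ t, a (ι t) = t)
    (x : X E (n + 1) →₀ ℤ) (hx : bd E n x = 0)
    (y : X E (n + 1) →₀ A) (hy : Psi a n x = bdM A E n y) :
    ∃ w, x = Finsupp.mapDomain (X.map (AddMonoidHom.id E - ι.comp a)) x + bd E (n + 1) w := by
  classical
  let F : Set A := (⋃ σ ∈ x.support ∪ y.support,
    Set.range fun q : Fin (n + 2) × Fin (n + 2) => a (σ.1 q.1 q.2)) ∪ y '' y.support
  have hF : F.Finite := by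
    refine Set.Finite.union ?_ (y.support.finite_toSet.image _)
    exact Set.Finite.biUnion (Finset.finite_toSet _) fun σ _ => Set.finite_range _
  let A0 : AddSubgroup A := (Submodule.span ℤ F).toAddSubgroup
  have : Module.Finite ℤ A0 := Module.Finite.span_of_finite ℤ hF
  have : Module.IsTorsionFree ℤ A0 := by
    refine ⟨fun k hk => ?_⟩
    refine (injective_iff_map_eq_zero (zsmulAddGroupHom k : A0 →+ A0)).2 fun t ht => ?_
    have hk0 : k ≠ 0 := IsRegular.ne_zero hk
    have h9 : k • (t : A) = 0 := congrArg Subtype.val ht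
    refine Subtype.ext (hA k.natAbs t (Int.natAbs_ne_zero.2 hk0) ?_)
    rcases Int.natAbs_eq k with h | h
    · rw [h] at h9; simpa using h9
    · rw [h] at h9; simpa using h9
  have : Module.Free ℤ A0 := inferInstance
  let E0 : AddSubgroup E := A0.comap a
  let a0 : E0 →+ A0 := (a.comp E0.subtype).codRestrict A0 (fun v => v.2)
  let ι0 : A0 →+ E0 := (ι.comp A0.subtype).codRestrict E0 (fun v => by
    show a (ι v) ∈ A0
    rw [ha]; exact v.2)
  have hXinj : ∀ m, Function.Injective (X.map (n := m) E0.subtype) := by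
    intro m c d h
    apply X.ext
    intro i k
    exact Subtype.ext (congrArg (fun f => f.1 i k) h)
  have hXr : ∀ σ ∈ x.support ∪ y.support, σ ∈ Set.range (X.map (n := n + 1) E0.subtype) := by
    intro σ hσ
    refine ⟨⟨fun i k => ⟨σ.1 i k, Submodule.subset_span (Or.inl ?_)⟩, fun i j k => Subtype.ext (σ.2 i j k)⟩, rfl⟩
    exact Set.mem_biUnion (t := fun σ : X E (n + 1) => Set.range fun q : Fin (n + 2) × Fin (n + 2) => a (σ.1 q.1 q.2)) hσ ⟨(i, k), rfl⟩
  obtain ⟨x0, hx0x⟩ : ∃ x0, Finsupp.mapDomain (X.map E0.subtype) x0 = x :=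
    ⟨_, Finsupp.mapDomain_comapDomain _ (hXinj _) x
      (fun σ hσ => hXr σ (Finset.mem_union_left _ hσ))⟩
  obtain ⟨y1, hy1⟩ : ∃ y1, Finsupp.mapDomain (X.map E0.subtype) y1 = y :=
    ⟨_, Finsupp.mapDomain_comapDomain _ (hXinj _) y
      (fun σ hσ => hXr σ (Finset.mem_union_right _ hσ))⟩
  have hy1v : ∀ σ, y1 σ ∈ A0 := by
    intro σ
    rw [← Finsupp.mapDomain_apply (hXinj _) y1 σ, hy1]
    by_cases h : X.map E0.subtype σ ∈ y.support
    · exact Submodule.subset_span (Or.inr ⟨_, h, rfl⟩)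
    · rw [Finsupp.notMem_support_iff.1 h]; exact A0.zero_mem
  obtain ⟨y0, hy0⟩ : ∃ y0, Finsupp.mapRange.addMonoidHom A0.subtype y0 = y1 := by
    refine ⟨Finsupp.mapRange (fun t => if h : t ∈ A0 then ⟨t, h⟩ else 0) (by simp) y1, ?_⟩
    ext σ
    show A0.subtype (dite _ _ _) = _
    rw [dif_pos (hy1v σ)]; rfl
  have hx0 : bd E0 n x0 = 0 := by
    apply Finsupp.mapDomain_injective (hXinj n)
    rw [Finsupp.mapDomain_zero]
    exact (bd_map E0.subtype x0).symm.trans ((congrArg _ hx0x).trans hx)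
  have hxy : Psi a0 n x0 = bdM A0 E0 n y0 := by
    have hinj : Function.Injective (Finsupp.mapRange.addMonoidHom (ι := X E0 n) A0.subtype) :=
      Finsupp.mapRange_injective _ (map_zero _) A0.subtype_injective
    apply hinj
    apply Finsupp.mapDomain_injective (hXinj n)
    rw [← Psi_range, ← bdM_range, hy0]
    refine Eq.trans ?_ ((bdM_map (A := A) E0.subtype y1))
    rw [hy1, ← hy, ← hx0x, Psi_map]
    rfl
  obtain ⟨w, hw⟩ := wang_free a0 ι0 (fun t => Subtype.ext (ha t)) x0 hx0 y0 hxy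
  refine ⟨Finsupp.mapDomain (X.map E0.subtype) w, ?_⟩
  have h7 := congrArg (Finsupp.mapDomain (X.map E0.subtype)) hw
  rw [hx0x] at h7
  refine h7.trans ?_
  rw [Finsupp.mapDomain_add, ← hx0x, ← Finsupp.mapDomain_comp, ← Finsupp.mapDomain_comp]
  congr 1
  exact (bd_map E0.subtype w).symm
end
end
end HB

namespace HB
section
section
open Limits
attribute [local instance 10000] Rep.hV2
variable {π : Set ℕ}

lemma exact_homology {S0 S1 S2 : ShortComplex (Rep.{0} ℤ G)} (f : S0 ⟶ S1) (g : S1 ⟶ S2)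
    (hz : f ≫ g = 0)
    (h : ∀ x : S1.X₂, S1.g.hom x = 0 → (∃ y : S2.X₁, S2.f.hom y = g.τ₂.hom x) →
      ∃ x' : S0.X₂, S0.g.hom x' = 0 ∧ ∃ w : S1.X₁, x = f.τ₂.hom x' + S1.f.hom w) :
    (ShortComplex.mk (ShortComplex.homologyMap f) (ShortComplex.homologyMap g) (by
      rw [← ShortComplex.homologyMap_comp, hz, ShortComplex.homologyMap_zero])).Exact := by
  rw [exact_iff]
  intro x hx
  have kc : ∀ (S : ShortComplex (Rep.{0} ℤ G)) (x : S.X₂), S.g.hom x = 0 →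
      ∃ z : S.cycles, S.iCycles.hom z = x := fun S x hx =>
    (exact_iff (ShortComplex.mk S.iCycles S.g (by simp))).1
      (ShortComplex.exact_of_f_is_kernel _ S.cyclesIsKernel) x hx
  have kh : ∀ (S : ShortComplex (Rep.{0} ℤ G)) (x : S.cycles), S.homologyπ.hom x = 0 →
      ∃ z : S.X₁, S.toCycles.hom z = x := fun S x hx =>
    (exact_iff (ShortComplex.mk S.toCycles S.homologyπ (by simp))).1
      (ShortComplex.exact_of_g_is_cokernel _ S.homologyIsCokernel) x hx
  obtain ⟨z, rfl⟩ := (Rep.epi_iff_surjective S1.homologyπ).1 inferInstance x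
  have h1 : S2.homologyπ.hom ((ShortComplex.cyclesMap g).hom z) = 0 :=
    (congrArg (fun f => f.hom z) (ShortComplex.homologyπ_naturality g)).symm.trans hx
  obtain ⟨y, hy⟩ := kh _ _ h1
  obtain ⟨x', hx', w, hw⟩ := h (S1.iCycles.hom z)
    (congrArg (fun f => f.hom z) S1.iCycles_g) ⟨y, by
      refine (congrArg (fun f => f.hom y) S2.toCycles_i).symm.trans ?_
      refine (congrArg S2.iCycles.hom hy).trans ?_
      exact congrArg (fun f => f.hom z) (ShortComplex.cyclesMap_i g)⟩
  obtain ⟨z', hz'⟩ := kc _ _ hx'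
  refine ⟨S0.homologyπ.hom z', ?_⟩
  have h2 : z = (ShortComplex.cyclesMap f).hom z' + S1.toCycles.hom w := by
    apply (Rep.mono_iff_injective S1.iCycles).1 inferInstance
    refine hw.trans ?_
    refine Eq.trans ?_ (map_add S1.iCycles.hom _ _).symm
    refine congrArg₂ (· + ·) ?_ (congrArg (fun f => f.hom w) S1.toCycles_i).symm
    refine (congrArg f.τ₂.hom hz'.symm).trans ?_
    exact (congrArg (fun f => f.hom z') (ShortComplex.cyclesMap_i f)).symm
  refine Eq.trans ?_ (congrArg S1.homologyπ.hom h2).symm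
  refine Eq.trans ?_ (map_add S1.homologyπ.hom _ _).symm
  refine (congrArg (fun f => f.hom z') (ShortComplex.homologyπ_naturality f)).trans ?_
  refine Eq.trans (add_zero _).symm (congrArg₂ (· + ·) rfl ?_)
  exact (congrArg (fun f => f.hom w) S1.toCycles_comp_homologyπ).symm

lemma em_sc' {C D : ChainComplex (Rep.{0} ℤ G) ℕ} (φ : C ⟶ D) (i j k : ℕ)
    (hi : (ComplexShape.down ℕ).prev j = i) (hk : (ComplexShape.down ℕ).next j = k)
    (h : (cls G π).epiModSerre (ShortComplex.homologyMap
      ((HomologicalComplex.shortComplexFunctor' (Rep.{0} ℤ G) (ComplexShape.down ℕ) i j k).map φ))) :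
    (cls G π).epiModSerre (HomologicalComplex.homologyMap φ j) := by
  subst hi hk
  exact h

lemma cls_sc' (C : ChainComplex (Rep.{0} ℤ G) ℕ) (i j k : ℕ)
    (hi : (ComplexShape.down ℕ).prev j = i) (hk : (ComplexShape.down ℕ).next j = k)
    (h : cls G π (C.homology j)) : cls G π (C.sc' i j k).homology := by
  subst hi hk
  exact h

section
open MonoidalCategory TensorProduct

lemma pres_tensor (A : Rep.{0} ℤ G) [Module.Flat ℤ A] : (tensorRight A).PreservesHomology :=
  Functor.preservesHomology_of_map_exact _ (fun _ hS => exact_tensor hS)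

lemma cls_tensor {A : Rep.{0} ℤ G} (hA : NiceRep π A) (C : ChainComplex (Rep.{0} ℤ G) ℕ) (i j k : ℕ)
    (hi : (ComplexShape.down ℕ).prev j = i) (hk : (ComplexShape.down ℕ).next j = k)
    (h : cls G π (C.homology j)) :
    cls G π ((C.sc' i j k).map (tensorRight A)).homology := by
  have := flat_of_nice hA
  have := pres_tensor A
  refine memC_of_iso (ShortComplex.mapHomologyIso (C.sc' i j k) (tensorRight A)).symm ?_
  exact memC_tensor hA (cls_sc' C i j k hi hk h)

end

section
variable {A E : Type} [AddCommGroup A] [AddCommGroup E]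

lemma Psi_bd (a : E →+ A) (n : ℕ) (x : X E (n + 2) →₀ ℤ) :
    Psi a n (bd E (n + 1) x) = bdM A E n (Psi a (n + 1) x) := by
  induction x using Finsupp.induction_linear with
  | zero => simp
  | add f g hf hg => simp only [map_add, hf, hg]
  | single σ k =>
    rw [bd_apply, Psi_single, bdM_apply, Fin.sum_univ_castSucc, Fin.sum_univ_castSucc, Fin.sum_univ_castSucc (n := n + 1)]
    simp only [map_add, map_sum, map_zsmul, Finsupp.mapDomain_single, Psi_single]
    rw [add_assoc]
    congr 1
    · refine Finset.sum_congr rfl fun i _ => ?_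
      have e1 : X.pre (Fin.last (n + 1)).succAbove (X.pre i.castSucc.castSucc.succAbove σ) =
          X.pre i.castSucc.succAbove (X.pre (Fin.last (n + 2)).succAbove σ) := by
        apply X.ext
        intro p q
        exact congrArg₂ σ.1 (by apply Fin.ext; simp [val_succAbove])
          (by apply Fin.ext; simp [val_succAbove])
      have e2 : (X.pre i.castSucc.castSucc.succAbove σ).1 (Fin.last n).castSucc (Fin.last (n + 1)) =
          σ.1 (Fin.last (n + 1)).castSucc (Fin.last (n + 2)) := by
        exact congrArg₂ σ.1 (by apply Fin.ext; simp [val_succAbove])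
          (by apply Fin.ext; simp [val_succAbove])
      rw [e1, e2]
      rfl
    · have e1 : X.pre (Fin.last (n + 1)).succAbove (X.pre (Fin.last (n + 1)).castSucc.succAbove σ) =
          X.pre (Fin.last (n + 1)).succAbove (X.pre (Fin.last (n + 2)).succAbove σ) := by
        apply X.ext
        intro p q
        exact congrArg₂ σ.1 (by apply Fin.ext; simp [val_succAbove])
          (by apply Fin.ext; simp [val_succAbove])
      have e2 : (X.pre (Fin.last (n + 1)).castSucc.succAbove σ).1 (Fin.last n).castSucc (Fin.last (n + 1)) =
          σ.1 (Fin.last n).castSucc.castSucc (Fin.last (n + 2)) := by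
        exact congrArg₂ σ.1 (by apply Fin.ext; simp [val_succAbove])
          (by apply Fin.ext; simp [val_succAbove])
      have e3 : (X.pre (Fin.last (n + 2)).succAbove σ).1 (Fin.last n).castSucc (Fin.last (n + 1)) =
          σ.1 (Fin.last n).castSucc.castSucc (Fin.last (n + 1)).castSucc := by
        exact congrArg₂ σ.1 (by apply Fin.ext; simp [val_succAbove])
          (by apply Fin.ext; simp [val_succAbove])
      rw [e1, e2, e3, ← σ.2 _ (Fin.last (n + 1)).castSucc (Fin.last (n + 2))]
      simp only [Fin.val_last, Fin.val_castSucc, pow_succ, mul_neg, mul_one, neg_smul, map_add,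
        smul_add, Finsupp.single_add, neg_neg]
      abel
end

end
end
end HB

namespace HB
section
section
open Limits
open MonoidalCategory TensorProduct
attribute [local instance 10000] Rep.hV2
variable {π : Set ℕ}

section
variable {A : Type} [AddCommGroup A] [Module ℤ A]

def toAE {M N : Type} [AddCommGroup M] [AddCommGroup N] {m1 : Module ℤ M} {m2 : Module ℤ N}
    (e : M ≃ₗ[ℤ] N) : M ≃+ N := e.toAddEquiv

/-- the identification of `ℤ[S] ⊗ A` with `A[S]` -/
def thE (S A : Type) [AddCommGroup A] [Module ℤ A] : (S →₀ ℤ) ⊗[ℤ] A ≃+ (S →₀ A) :=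
  haveI := Classical.decEq S
  toAE (TensorProduct.finsuppScalarLeft ℤ A S)

/-- additive version -/
def th (S A : Type) [AddCommGroup A] [Module ℤ A] : (S →₀ ℤ) ⊗[ℤ] A →+ (S →₀ A) :=
  (thE S A).toAddMonoidHom

lemma th_inj (S A : Type) [AddCommGroup A] [Module ℤ A] : Function.Injective (th S A) :=
  (thE S A).injective

lemma th_tmul (S A : Type) [AddCommGroup A] [hm : Module ℤ A] (s : S) (k : ℤ) (t : A) :
    th S A (Finsupp.single s k ⊗ₜ t) = Finsupp.single s (k • t) := by
  obtain rfl : hm = AddCommGroup.toIntModule A := Subsingleton.elim _ _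
  classical
  ext s'
  refine (TensorProduct.finsuppScalarLeft_apply_tmul_apply (Finsupp.single s k) t s').trans ?_
  by_cases h : s = s'
  · subst h; simp
  · simp [Finsupp.single_eq_of_ne' h]

lemma th_rTensor {S T A : Type} [AddCommGroup A] [hm : Module ℤ A] (f : (S →₀ ℤ) →ₗ[ℤ] (T →₀ ℤ))
    (F : (S →₀ A) →+ (T →₀ A))
    (h : ∀ s t, th T A (f (Finsupp.single s 1) ⊗ₜ t) = F (Finsupp.single s t)) (y : (S →₀ ℤ) ⊗[ℤ] A) :
    th T A (f.rTensor A y) = F (th S A y) := by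
  obtain rfl : hm = AddCommGroup.toIntModule A := Subsingleton.elim _ _
  induction y using TensorProduct.induction_on with
  | zero => simp
  | add x y hx hy => simp only [map_add, hx, hy]
  | tmul x t =>
    rw [LinearMap.rTensor_tmul]
    induction x using Finsupp.induction_linear with
    | zero => simp
    | add x y hx hy => simp only [map_add, add_tmul, hx, hy]
    | single s k =>
      rw [th_tmul, ← h]
      rw [show (Finsupp.single s k : S →₀ ℤ) = k • Finsupp.single s 1 by simp]
      rw [map_smul, ← TensorProduct.smul_tmul', ← TensorProduct.tmul_smul]

lemma th_act {S A : Type} [AddCommGroup A] [hm : Module ℤ A] (f : (S →₀ ℤ) →ₗ[ℤ] (S →₀ ℤ))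
    (h : A →ₗ[ℤ] A) (F : (S →₀ A) →+ (S →₀ A))
    (hh : ∀ s t, th S A (f (Finsupp.single s 1) ⊗ₜ (h t)) = F (Finsupp.single s t))
    (y : (S →₀ ℤ) ⊗[ℤ] A) :
    th S A (TensorProduct.map f h y) = F (th S A y) := by
  obtain rfl : hm = AddCommGroup.toIntModule A := Subsingleton.elim _ _
  induction y using TensorProduct.induction_on with
  | zero => simp
  | add x y hx hy => simp only [map_add, hx, hy]
  | tmul x t =>
    rw [TensorProduct.map_tmul]
    induction x using Finsupp.induction_linear with
    | zero => simp
    | add x y hx hy => simp only [map_add, add_tmul, hx, hy]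
    | single s k =>
      rw [th_tmul, ← hh]
      rw [show (Finsupp.single s k : S →₀ ℤ) = k • Finsupp.single s 1 by simp]
      rw [map_smul, map_smul, ← TensorProduct.smul_tmul', ← TensorProduct.tmul_smul]

/-- the cap product map into the tensor product -/
def Phi {E : Type} [AddCommGroup E] (a : E →+ A) (n : ℕ) :
    (X E (n + 1) →₀ ℤ) →+ (X E n →₀ ℤ) ⊗[ℤ] A :=
  ((thE (X E n) A).symm.toAddMonoidHom).comp (Psi a n)

lemma th_Phi {E : Type} [AddCommGroup E] (a : E →+ A) (n : ℕ) (x) :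
    th (X E n) A (Phi a n x) = Psi a n x :=
  (thE (X E n) A).apply_symm_apply _

lemma th_bd {E : Type} [AddCommGroup E] (n : ℕ) (f : (X E (n + 1) →₀ ℤ) →ₗ[ℤ] (X E n →₀ ℤ))
    (hf : ∀ x, f x = bd E n x) (y : (X E (n + 1) →₀ ℤ) ⊗[ℤ] A) :
    th (X E n) A (f.rTensor A y) = bdM A E n (th (X E (n + 1)) A y) := by
  apply th_rTensor
  intro s t
  rw [hf, bd_apply, bdM_apply, TensorProduct.sum_tmul, map_sum]
  refine Finset.sum_congr rfl fun i _ => ?_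
  rw [Finsupp.mapDomain_single, Finsupp.mapDomain_single, ← TensorProduct.smul_tmul', map_zsmul, th_tmul, one_smul]

end

def PhiR {E A : Rep.{0} ℤ G} (a : E ⟶ A) (n : ℕ) : fr (G := G) (X E (n + 1)) ⟶ fr (G := G) (X E n) ⊗ A :=
  mkHom (A := fr (G := G) (X E (n + 1))) (B := fr (G := G) (X E n) ⊗ A) (Phi (addHom a) n) (by
    intro g x
    apply th_inj (X E n) A
    refine (th_Phi (addHom a) n _).trans ?_
    refine Eq.trans ?_ (th_act (S := X E n) (A := A) ((fr (G := G) (X E n)).ρ g) (A.ρ g)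
      ((Finsupp.mapDomain.addMonoidHom (fun s => g • s)).comp
        (Finsupp.mapRange.addMonoidHom (A.ρ g).toAddMonoidHom)) ?_ (Phi (addHom a) n x)).symm
    · rw [th_Phi]
      show Psi (addHom a) n (Finsupp.mapDomain (fun s => g • s) x) = _
      induction (show X E (n + 1) →₀ ℤ from x) using Finsupp.induction_linear with
      | zero => simp
      | add f g hf hg => simp only [map_add, hf, hg, Finsupp.mapDomain_add]
      | single σ k =>
        rw [Finsupp.mapDomain_single, Psi_single, Psi_single]
        simp only [AddMonoidHom.comp_apply, Finsupp.mapRange.addMonoidHom_apply, Finsupp.mapRange_single, Finsupp.mapDomain.addMonoidHom_apply, Finsupp.mapDomain_single]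
        congr 1
        refine Eq.trans ?_ (map_zsmul (A.ρ g).toAddMonoidHom k _).symm
        exact congrArg (k • ·) (Rep.hom_comm_apply a g _)
    · intro s t
      simp only [AddMonoidHom.comp_apply, Finsupp.mapRange.addMonoidHom_apply, Finsupp.mapRange_single, Finsupp.mapDomain.addMonoidHom_apply, Finsupp.mapDomain_single]
      have h1 : (fr (G := G) (X E n)).ρ g (Finsupp.single s 1) = Finsupp.single (g • s) 1 :=
        Finsupp.mapDomain_single
      refine (congrArg (fun z => th (X E n) A (z ⊗ₜ A.ρ g t)) h1).trans ?_
      rw [th_tmul, one_smul]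
      rfl)

lemma PhiR_apply {E A : Rep.{0} ℤ G} (a : E ⟶ A) (n : ℕ) (x : X E (n + 1) →₀ ℤ) :
    (PhiR a n).hom x = Phi (addHom a) n x := rfl

lemma th_Kd (E A : Rep.{0} ℤ G) (n : ℕ) (y : (X E (n + 1) →₀ ℤ) ⊗[ℤ] A) :
    th (X E n) A (((K.obj E).d (n + 1) n ▷ A).hom y) = bdM A E n (th (X E (n + 1)) A y) :=
  th_bd n ((K.obj E).d (n + 1) n).hom.toLinearMap (K_d E n) y

lemma PhiR_comm {E A : Rep.{0} ℤ G} (a : E ⟶ A) (n : ℕ) :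
    PhiR a (n + 1) ≫ ((K.obj E).d (n + 1) n ▷ A) = (K.obj E).d (n + 2) (n + 1) ≫ PhiR a n := by
  apply hom_ext'
  intro x
  apply th_inj (X E n) A
  refine (th_Kd E A n _).trans ?_
  refine (congrArg _ (th_Phi (addHom a) (n + 1) x)).trans ?_
  refine (Psi_bd (addHom a) n x).symm.trans ?_
  refine (congrArg _ (K_d E (n + 1) x)).symm.trans ?_
  exact (th_Phi (addHom a) n _).symm

lemma sMap_PhiR {E B A : Rep.{0} ℤ G} (a : E ⟶ A) (s : B ⟶ E) (h : ∀ b, a.hom (s.hom b) = 0) (n : ℕ) :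
    (K.map s).f (n + 1) ≫ PhiR a n = 0 := by
  apply hom_ext'
  intro x
  apply th_inj (X E n) A
  refine Eq.trans ?_ (map_zero _).symm
  refine (th_Phi (addHom a) n _).trans ?_
  refine (Psi_map (addHom s) (addHom a) x).trans ?_
  have h0 : (addHom a).comp (addHom s) = 0 := AddMonoidHom.ext h
  rw [h0]
  have h1 : Psi (0 : B →+ A) n (show X B (n + 1) →₀ ℤ from x) = 0 := by
    induction (show X B (n + 1) →₀ ℤ from x) using Finsupp.induction_linear with
    | zero => simp
    | add f g hf hg => simp only [map_add, hf, hg, add_zero]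
    | single σ k => 
      rw [Psi_single]
      refine (congrArg _ (zsmul_zero k)).trans (Finsupp.single_zero _)
  rw [h1, Finsupp.mapDomain_zero]

/-- the cap product on the third term -/
def Phi3 {E A : Rep.{0} ℤ G} (a : E ⟶ A) : (n : ℕ) →
    ((K.obj E).X n ⟶ (K.obj E).X ((ComplexShape.down ℕ).next n) ⊗ A)
  | 0 => 0
  | n + 1 => PhiR a n ≫ eqToHom (by rw [ChainComplex.next_nat_succ]; rfl)

lemma Phi3_comm {E A : Rep.{0} ℤ G} (a : E ⟶ A) (n : ℕ) :
    PhiR a n ≫ ((K.obj E).d n ((ComplexShape.down ℕ).next n) ▷ A) = (K.obj E).d (n + 1) n ≫ Phi3 a n := by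
  cases n with
  | zero =>
    rw [(K.obj E).shape _ _ (by simp)]
    refine Eq.trans ?_ comp_zero.symm
    exact (congrArg (PhiR a 0 ≫ ·) ((tensorRight A).map_zero _ _)).trans comp_zero
  | succ n =>
    have : ∀ k (hk : k = n) (h : (tensorRight A).obj ((K.obj E).X n) = (tensorRight A).obj ((K.obj E).X k)),
      PhiR a (n + 1) ≫ ((K.obj E).d (n + 1) k ▷ A) = (K.obj E).d (n + 2) (n + 1) ≫ PhiR a n ≫ eqToHom h := by
      rintro k rfl h
      refine (PhiR_comm a k).trans (congrArg _ ?_)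
      exact (Category.comp_id _).symm
    exact this _ (ChainComplex.next_nat_succ n) _

end
end
end HB

namespace HB
section
section
open Limits
open MonoidalCategory
attribute [local instance 10000] Rep.hV2
variable {π : Set ℕ}

lemma sc'_lift {C D : ChainComplex (Rep.{0} ℤ G) ℕ} (φ : C ⟶ D) (i j k : ℕ) (x : (C.sc' i j k).X₂)
    (hx : (C.sc' i j k).g.hom x = 0) : (D.sc' i j k).g.hom ((φ.f j).hom x) = 0 := by
  have h := congrArg (fun f => f.hom x) (φ.comm j k)
  refine h.trans ?_
  exact (congrArg (φ.f k).hom hx).trans (map_zero _)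

/-- the cap product as a map of short complexes -/
def capS {E A : Rep.{0} ℤ G} (a : E ⟶ A) (n : ℕ) : (K.obj E).sc' (n + 2) (n + 1) n ⟶
    ((K.obj E).sc' (n + 1) n ((ComplexShape.down ℕ).next n)).map (tensorRight A) where
  τ₁ := PhiR a (n + 1)
  τ₂ := PhiR a n
  τ₃ := Phi3 a n
  comm₁₂ := PhiR_comm a n
  comm₂₃ := Phi3_comm a n

lemma nice_SS {A : Rep.{0} ℤ G} (hA : NiceRep π A) : SS π A := by
  intro E B r s ι hsr hι hk n
  obtain ⟨a, ha1, ha2, ha3⟩ := exists_retr r s ι hsr hι hk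
  induction n using Nat.strong_induction_on with
  | _ n ih =>
  intro hB
  have hE : ∀ m, m < n → cls G π ((Hn m).obj E) := fun m hm =>
    prop_of_em _ _ (ih m hm (fun k hk => hB k (hk.trans hm))) (hB m hm)
  cases n with
  | zero =>
    obtain ⟨Z0, hZ0⟩ := HasZeroObject.zero (C := Rep.{0} ℤ G)
    refine em_sc' (K.map s) _ 0 _ rfl rfl ?_
    refine em_of_exact (cls G π) (exact_homology
      ((HomologicalComplex.shortComplexFunctor' (Rep.{0} ℤ G) (ComplexShape.down ℕ) _ 0 _).map (K.map s))
      (0 : _ ⟶ ShortComplex.mk (0 : Z0 ⟶ Z0) (0 : Z0 ⟶ Z0) (by simp))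
      comp_zero ?_) ?_
    · intro x hx _
      refine ⟨((K.map r).f 0).hom x, sc'_lift (K.map r) _ _ _ x hx, 0, ?_⟩
      refine Eq.trans ?_ ((congrArg₂ (· + ·) rfl (map_zero _)).trans (add_zero _)).symm
      have : Subsingleton (X E 0) := ⟨fun c d => X.ext fun i j => by
        rw [show i = j from Fin.ext (by omega), c.self, d.self]⟩
      have h1 : ∀ y : X E 0 →₀ ℤ, Finsupp.mapDomain (X.map (addHom s)) (Finsupp.mapDomain (X.map (addHom r)) y) = y := by
        intro y
        rw [← Finsupp.mapDomain_comp, show (X.map (addHom s) ∘ X.map (addHom r) : X E 0 → X E 0) = id from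
          funext fun _ => Subsingleton.elim _ _, Finsupp.mapDomain_id]
      exact (h1 x).symm
    · refine memC_of_isZero ?_
      rw [← ShortComplex.exact_iff_isZero_homology]
      exact ShortComplex.exact_of_isZero_X₂ _ hZ0
  | succ n =>
    refine em_sc' (K.map s) (n + 2) (n + 1) n (ChainComplex.prev ℕ (n + 1)) (ChainComplex.next_nat_succ n) ?_
    refine em_of_exact (cls G π) (exact_homology
      ((HomologicalComplex.shortComplexFunctor' (Rep.{0} ℤ G) (ComplexShape.down ℕ) _ _ _).map (K.map s))
      (capS a n) ?_ ?_) ?_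
    · apply ShortComplex.hom_ext
      · exact sMap_PhiR a s ha3 (n + 1)
      · exact sMap_PhiR a s ha3 n
      · cases n with
        | zero => exact comp_zero (X := (K.obj B).X 0) (Y := (K.obj E).X 0) (f := (K.map s).f 0)
        | succ n =>
          show (K.map s).f (n + 1) ≫ PhiR a n ≫ _ = 0
          refine (Category.assoc ((K.map s).f (n + 1)) (PhiR a n) _).symm.trans ?_
          exact (congrArg (· ≫ _) (sMap_PhiR a s ha3 n)).trans zero_comp
    · rintro x hx ⟨y, hy⟩
      refine ⟨((K.map r).f (n + 1)).hom x, sc'_lift (K.map r) _ _ _ x hx, ?_⟩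
      have hx' : bd E n x = 0 := (K_d E n x).symm.trans hx
      have hy' : Psi (addHom a) n x = bdM A E n (th (X E (n + 1)) A y) := by
        refine (th_Phi (addHom a) n x).symm.trans ?_
        refine (congrArg (th (X E n) A) hy).symm.trans ?_
        exact th_Kd E A n y
      obtain ⟨w, hw⟩ := wang_tf ((niceRep_iff _ _).1 hA).1 (addHom a) (addHom ι) ha2 x hx' _ hy'
      refine ⟨w, hw.trans ?_⟩
      refine congrArg₂ (· + ·) ?_ (K_d E (n + 1) w).symm
      have h2 : (X.map (AddMonoidHom.id E - (addHom ι).comp (addHom a)) : X E (n + 1) → X E (n + 1)) =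
          X.map (addHom s) ∘ X.map (addHom r) := by
        funext c
        apply X.ext
        intro i j
        show c.1 i j - ι.hom (a.hom (c.1 i j)) = s.hom (r.hom (c.1 i j))
        rw [ha1]; abel
      have h3 : ∀ x : X E (n + 1) →₀ ℤ, Finsupp.mapDomain (X.map (AddMonoidHom.id E - (addHom ι).comp (addHom a))) x =
          Finsupp.mapDomain (X.map (addHom s)) (Finsupp.mapDomain (X.map (addHom r)) x) := by
        intro x
        rw [h2, Finsupp.mapDomain_comp]
      exact h3 x
    · exact cls_tensor hA (K.obj E) (n + 1) n _ (ChainComplex.prev ℕ n) rfl (hE n (Nat.lt_succ_self n))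

lemma cls_Hn {A : Rep.{0} ℤ G} (hA : MemC G π A) (n : ℕ) : MemC G π ((Hn n).obj A) :=
  final_SS (SS_of_memC (fun _ h => nice_SS h) hA) n

end
end
end HB

namespace HB
section
section
open Limits
attribute [local instance 10000] Rep.hV2
variable {π : Set ℕ}

/-- simplices of the nerve -/
abbrev NV (A : Type) [AddCommGroup A] (n : ℕ) : Type := ComposableArrows (SingleObj (Multiplicative A)) n

section
variable {A : Type} [AddCommGroup A] {n : ℕ}

def toN (c : X A n) : NV A n where
  obj _ := SingleObj.star _
  map {i j} _ := (Multiplicative.ofAdd (c.1 i j) : Multiplicative A)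
  map_id i := by
    show Multiplicative.ofAdd (c.1 i i) = 1
    rw [c.self]; rfl
  map_comp {i j k} _ _ := by
    show Multiplicative.ofAdd (c.1 i k) = Multiplicative.ofAdd (c.1 j k) * Multiplicative.ofAdd (c.1 i j)
    rw [← ofAdd_add, add_comm (c.1 j k), c.2]

def vN (F : NV A n) {i j : Fin (n + 1)} (h : i ≤ j) : A :=
  Multiplicative.toAdd (show Multiplicative A from F.map (homOfLE h))

lemma vN_comp (F : NV A n) {i j k : Fin (n + 1)} (h : i ≤ j) (h' : j ≤ k) :
    vN F h + vN F h' = vN F (h.trans h') := by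
  have h1 : F.map (homOfLE (h.trans h')) = F.map (homOfLE h) ≫ F.map (homOfLE h') := by
    rw [← F.map_comp]; rfl
  have h2 : (show Multiplicative A from F.map (homOfLE (h.trans h'))) =
    (show Multiplicative A from F.map (homOfLE h')) * (show Multiplicative A from F.map (homOfLE h)) := h1
  rw [add_comm]
  exact (congrArg Multiplicative.toAdd h2).symm

def fromN (F : NV A n) : X A n := X.ofPot (fun i => vN F (Fin.zero_le i))

lemma from_to (c : X A n) : fromN (toN c) = c := by
  apply X.ext
  intro i j
  exact c.sub _ _ _

lemma to_from (F : NV A n) : toN (fromN F) = F := by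
  refine Functor.hext (fun i => Subsingleton.elim (α := Unit) _ _) ?_
  intro i j f
  refine heq_of_eq ?_
  have h := vN_comp F (Fin.zero_le i) (leOfHom f)
  show Multiplicative.ofAdd (vN F (Fin.zero_le j) - vN F (Fin.zero_le i)) = _
  rw [← h, add_sub_cancel_left]
  rfl

lemma toN_bij : Function.Bijective (toN : X A n → NV A n) :=
  ⟨Function.LeftInverse.injective from_to, Function.RightInverse.surjective to_from⟩

/-- the simplicial module of the nerve -/
abbrev NS (A : Type) [AddCommGroup A] : SimplicialObject (ModuleCat.{0} ℤ) :=
  ((SimplicialObject.whiskering _ _).obj (ModuleCat.free ℤ)).obj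
    (nerveFunctor.obj (MonCat.toCat.obj (MonCat.of (Multiplicative A))))

abbrev NC (A : Type) [AddCommGroup A] : ChainComplex (ModuleCat.{0} ℤ) ℕ :=
  (alternatingFaceMapComplex (ModuleCat.{0} ℤ)).obj (NS A)

def NCmap {A B : Type} [AddCommGroup A] [AddCommGroup B] (f : Multiplicative A →* Multiplicative B) : NC A ⟶ NC B :=
  (alternatingFaceMapComplex (ModuleCat.{0} ℤ)).map
   (((SimplicialObject.whiskering _ _).obj (ModuleCat.free ℤ)).map
    (nerveFunctor.map (MonCat.toCat.map (MonCat.ofHom f))))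

def nu (A : Type) [AddCommGroup A] (n : ℕ) : ModuleCat.of ℤ (X A n →₀ ℤ) ⟶ (NC A).X n :=
  ModuleCat.ofHom (Finsupp.lmapDomain ℤ ℤ (toN : X A n → NV A n))

lemma nu_apply (x : X A n →₀ ℤ) : (nu A n).hom x = Finsupp.mapDomain (toN : X A n → NV A n) x := rfl

lemma nu_bij : Function.Bijective (nu A n).hom := by
  constructor
  · exact Finsupp.mapDomain_injective toN_bij.1
  · exact Finsupp.mapDomain_surjective toN_bij.2

lemma NS_δ (i : Fin (n + 2)) (x : X A (n + 1) →₀ ℤ) :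
    ((NS A).δ i).hom (Finsupp.mapDomain (toN : X A (n + 1) → NV A (n + 1)) x) =
      Finsupp.mapDomain (toN : X A n → NV A n) (Finsupp.mapDomain (X.pre i.succAbove) x) := by
  refine Eq.trans ?_ Finsupp.mapDomain_comp
  refine Eq.trans ?_ (Finsupp.mapDomain_comp (f := (toN : X A (n + 1) → NV A (n + 1)))
    (g := fun F => (nerve (SingleObj (Multiplicative A))).δ i F)).symm
  rfl

lemma nu_d (x : X A (n + 1) →₀ ℤ) :
    ((NC A).d (n + 1) n).hom ((nu A (n + 1)).hom x) = (nu A n).hom (bd A n x) := by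
  have h : (NC A).d (n + 1) n = ∑ i : Fin (n + 2), (-1 : ℤ) ^ (i : ℕ) • (NS A).δ i :=
    AlternatingFaceMapComplex.obj_d_eq (NS A) n
  refine (congrArg (fun f => f.hom ((nu A (n + 1)).hom x)) h).trans ?_
  rw [bd_apply, map_sum]
  refine (mc_sum _ _ _).trans ?_
  refine Finset.sum_congr rfl fun i _ => ?_
  refine Eq.trans ?_ (map_zsmul (nu A n).hom _ _).symm
  exact congrArg (fun z => (-1 : ℤ) ^ (i : ℕ) • z) (NS_δ i x)

lemma nu_map {B : Type} [AddCommGroup B] (f : A →+ B) (x : X A n →₀ ℤ) :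
    ((NCmap f.toMultiplicative).f n).hom ((nu A n).hom x) = (nu B n).hom (Finsupp.mapDomain (X.map f) x) := by
  refine Eq.trans ?_ Finsupp.mapDomain_comp
  refine Eq.trans ?_ (Finsupp.mapDomain_comp (f := (toN : X A n → NV A n))
    (g := fun F => (nerveFunctor.map (MonCat.toCat.map (MonCat.ofHom f.toMultiplicative))).app (Opposite.op (SimplexCategory.mk n)) F)).symm
  rfl

end

end
end
end HB

namespace HB
section
section
open Limits
attribute [local instance 10000] Rep.hV2
variable {π : Set ℕ}

abbrev FG (G : Type) [Group G] : Rep.{0} ℤ G ⥤ ModuleCat.{0} ℤ := forget₂ (Rep.{0} ℤ G) (ModuleCat.{0} ℤ)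

/-- the action of a group element as a natural transformation -/
def eta (g : G) : FG G ⟶ FG G where
  app V := ModuleCat.ofHom (V.ρ g)
  naturality V W f := by
    apply ModuleCat.hom_ext
    apply LinearMap.ext
    intro x
    exact (Rep.hom_comm_apply f g x).symm

lemma eta_app (g : G) (V : Rep.{0} ℤ G) (x : V) : ((eta g).app V).hom x = V.ρ g x := rfl

def nuC (A : Rep.{0} ℤ G) : ((FG G).mapHomologicalComplex (ComplexShape.down ℕ)).obj (K.obj A) ⟶ NC A where
  f n := nu A n
  comm' i j hij := by
    obtain rfl : j + 1 = i := hij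
    apply ModuleCat.hom_ext
    apply LinearMap.ext
    intro x
    refine (nu_d x).trans ?_
    exact congrArg _ (K_d A j x).symm

instance (A : Rep.{0} ℤ G) : IsIso (nuC A) := by
  have : ∀ n, IsIso ((nuC A).f n) := fun n =>
    (ConcreteCategory.isIso_iff_bijective (nu A n)).2 nu_bij
  exact HomologicalComplex.Hom.isIso_of_components _

lemma nuC_act (A : Rep.{0} ℤ G) (g : G) :
    ((NatTrans.mapHomologicalComplex (eta g) (ComplexShape.down ℕ)).app (K.obj A)) ≫ nuC A =
      nuC A ≫ NCmap (multHom A g) := by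
  apply HomologicalComplex.hom_ext
  intro n
  apply ModuleCat.hom_ext
  apply LinearMap.ext
  intro x
  exact (nu_map (A.ρ g).toAddMonoidHom x).symm

/-- comparison map on homology -/
def cmp (A : Rep.{0} ℤ G) (n : ℕ) : (FG G).obj ((Hn n).obj A) ⟶ (NC A).homology n :=
  (((K.obj A).sc n).mapHomologyIso (FG G)).inv ≫ HomologicalComplex.homologyMap (nuC A) n

instance (A : Rep.{0} ℤ G) (n : ℕ) : IsIso (cmp A n) := by
  have h1 : IsIso (((K.obj A).sc n).mapHomologyIso (FG G)).inv := inferInstance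
  have h2 : IsIso (HomologicalComplex.homologyMap (nuC A) n) := inferInstance
  exact IsIso.comp_isIso' h1 h2

lemma aux_comp {C : Type*} [Category C] {X Y Z : C} (i : X ≅ Y) (b : X ⟶ X) (d : X ⟶ Z) (e : Z ⟶ Z)
    (a : Y ⟶ Y) (ha : a = i.inv ≫ b ≫ i.hom) (h : b ≫ d = d ≫ e) :
    a ≫ i.inv ≫ d = (i.inv ≫ d) ≫ e := by
  rw [ha]
  simp [h]

lemma cmp_act (A : Rep.{0} ℤ G) (n : ℕ) (g : G) :
    (eta g).app ((Hn n).obj A) ≫ cmp A n = cmp A n ≫ HomologicalComplex.homologyMap (NCmap (multHom A g)) n := by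
  have h1 := NatTrans.app_homology (eta g) ((K.obj A).sc n)
  have h2 : ShortComplex.homologyMap (((K.obj A).sc n).mapNatTrans (eta g)) ≫
      HomologicalComplex.homologyMap (nuC A) n =
      HomologicalComplex.homologyMap (nuC A) n ≫ HomologicalComplex.homologyMap (NCmap (multHom A g)) n := by
    have h3 := congrArg (fun f => HomologicalComplex.homologyMap f n) (nuC_act A g)
    simp only [HomologicalComplex.homologyMap_comp] at h3
    exact h3
  exact aux_comp (((K.obj A).sc n).mapHomologyIso (FG G)) _ _ _ _ h1 h2

lemma memC_transfer {A : Rep.{0} ℤ G} (n : ℕ) (h : MemC G π ((Hn n).obj A)) :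
    MemC G π (Rep.of (homologyDiagRep A n)) := by
  refine .quot _ _ (mkHom (A := (Hn n).obj A) (B := Rep.of (homologyDiagRep A n))
    (cmp A n).hom.toAddMonoidHom ?_) ?_ h
  · intro g x
    exact congrArg (fun f => f.hom x) (cmp_act A n g)
  · exact ((ConcreteCategory.isIso_iff_bijective (cmp A n)).1 inferInstance).2

lemma main {A : Rep.{0} ℤ G} (n : ℕ) (h : MemC G π A) :
    MemC G π (Rep.of (homologyDiagRep A n)) := memC_transfer n (cls_Hn h n)

end
end
end HB

/-- Let `G` be a group and `π` a set of primes.  If `A` is a `ℤG`-module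
belonging to `𝔠(G, π)`, then for every `n ≥ 0` the integral homology `H_n(A)` of
the underlying abelian group of `A`, with the `ℤG`-module structure induced by
functoriality, belongs to `𝔠(G, π)`. -/
theorem memC_integral_homology (G : Type) [Group G] (π : Set ℕ) (A : Rep ℤ G)
    (hA : MemC G π A) (n : ℕ) :
    MemC G π (Rep.of (homologyDiagRep A n)) := by
  exact HB.main n hA

end
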